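/- arXiv:2307.06453 — 2 statements merged into one kernel-verified Lean document; each statement's English description precedes it below -/
import Mathlib

section
/- For every natural number d and every ε > 0 there exists N such that every (finite simple) graph with at least N vertices and maximum degree at most d has an ε-almost-internal bisection, and also an ε-almost-external bisection. Equivalently: there are only finitely many graphs with maximum degree at most d which do not have an ε-almost-internal bisection, and only finitely many which do not have an ε-almost-external bisection. -/
/-- A red-blue colouring of `Fin n` is a *bisection* if its two colour classes
differ in size by at most 1. -/
def IsBisection {n : ℕ} (c : Fin n → Bool) : Prop :=
  |(({v | c v = true} : Set (Fin n)).ncard : ℤ) -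
    (({v | c v = false} : Set (Fin n)).ncard : ℤ)| ≤ 1

/-- A vertex `v` is *internal* for the colouring `c` if at least half of its
neighbours have the same colour as `v`. -/
def InternalAt {n : ℕ} (G : SimpleGraph (Fin n)) (c : Fin n → Bool) (v : Fin n) : Prop :=
  (G.neighborSet v).ncard ≤ 2 * ({w | G.Adj v w ∧ c w = c v} : Set (Fin n)).ncard

/-- A vertex `v` is *external* for the colouring `c` if at least half of its
neighbours have the opposite colour to `v`. -/
def ExternalAt {n : ℕ} (G : SimpleGraph (Fin n)) (c : Fin n → Bool) (v : Fin n) : Prop :=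
  (G.neighborSet v).ncard ≤ 2 * ({w | G.Adj v w ∧ c w ≠ c v} : Set (Fin n)).ncard

/-- All but at most `ε * n` vertices are internal. -/
def AlmostInternal {n : ℕ} (G : SimpleGraph (Fin n)) (c : Fin n → Bool) (ε : ℝ) : Prop :=
  ((({v | ¬ InternalAt G c v} : Set (Fin n)).ncard : ℝ)) ≤ ε * n

/-- All but at most `ε * n` vertices are external. -/
def AlmostExternal {n : ℕ} (G : SimpleGraph (Fin n)) (c : Fin n → Bool) (ε : ℝ) : Prop :=
  ((({v | ¬ ExternalAt G c v} : Set (Fin n)).ncard : ℝ)) ≤ ε * n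

/-!
Choose the initial colouring uniformly at random and run majority dynamics: the classes of a proper
`(d + 1)`-colouring take turns, the vertices of each class that are unhappy with their neighbourhood
changing colour at once. Each change raises by at least `4` a total margin which is at most `d n` in
absolute value, and a round over all classes which starts with many unhappy vertices makes many
changes. Hence one of the first `K` rounds, with `K` depending on `d` and `ε` only, starts with few
unhappy vertices. Up to then the colour of a vertex depends only on the initial colours in a ball of
bounded radius, and it is an odd function of them, so that the colours of distant vertices are
uncorrelated. By the second moment method the two colour classes differ in size by `O(√n)`, and
recolouring `O(√n)` vertices restores the balance at the cost of `O(√n)` new unhappy vertices.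
-/

namespace MajorityDynamics

open Finset

section Spins

variable {V : Type*} [DecidableEq V]

/-- The spin configuration obtained from `σ` by reversing the spins in `F`. Red-blue colourings
are encoded as configurations with values in `ℤˣ = {1, -1}`, so that swapping the two colours is
negation. -/
def flipOn (F : Finset V) (σ : V → ℤˣ) : V → ℤˣ := F.piecewise (-σ) σ

lemma flipOn_apply_of_mem {F : Finset V} {v : V} (hv : v ∈ F) (σ : V → ℤˣ) :
    flipOn F σ v = -σ v := F.piecewise_eq_of_mem _ _ hv

lemma flipOn_apply_of_notMem {F : Finset V} {v : V} (hv : v ∉ F) (σ : V → ℤˣ) :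
    flipOn F σ v = σ v := F.piecewise_eq_of_notMem _ _ hv

lemma flipOn_involutive (F : Finset V) : Function.Involutive (flipOn F) := by
  intro σ
  ext v
  by_cases hv : v ∈ F <;> simp [flipOn, hv]

lemma flipOn_neg (F : Finset V) (σ : V → ℤˣ) : flipOn F (-σ) = -flipOn F σ := by
  ext v
  by_cases hv : v ∈ F <;> simp [flipOn, hv]

lemma coe_flipOn_apply (F : Finset V) (σ : V → ℤˣ) (v : V) :
    (flipOn F σ v : ℤ) = σ v - 2 * if v ∈ F then (σ v : ℤ) else 0 := by
  by_cases hv : v ∈ F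
  · rw [flipOn_apply_of_mem hv, if_pos hv, Units.val_neg]
    ring
  · simp [flipOn_apply_of_notMem hv, hv]

variable [Fintype V]

/-- The sum of all spins, that is, the difference between the sizes of the two colour classes. -/
def magnetization (σ : V → ℤˣ) : ℤ := ∑ v, (σ v : ℤ)

omit [DecidableEq V] in
lemma magnetization_neg (σ : V → ℤˣ) : magnetization (-σ) = -magnetization σ := by
  simp [magnetization]

lemma magnetization_flipOn (F : Finset V) (σ : V → ℤˣ) :
    magnetization (flipOn F σ) = magnetization σ - 2 * ∑ v ∈ F, (σ v : ℤ) := by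
  simp [magnetization, coe_flipOn_apply, ← mul_sum, sum_ite_mem]

lemma exists_flipOn_balanced_of_nonneg {σ : V → ℤˣ} (hσ : 0 ≤ magnetization σ) :
    ∃ F : Finset V, 2 * (#F : ℤ) ≤ magnetization σ ∧ |magnetization (flipOn F σ)| ≤ 1 := by
  have hle : magnetization σ ≤ #{v | σ v = 1} := by
    rw [magnetization, ← sum_boole]
    refine sum_le_sum fun v _ => ?_
    rcases Int.units_eq_one_or (σ v) with h | h <;> simp [h]
  obtain ⟨F, hF, hcard⟩ := exists_subset_card_eq (s := {v | σ v = 1})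
    (n := (magnetization σ / 2).toNat) (by omega)
  have hsum : ∑ v ∈ F, (σ v : ℤ) = #F := by
    rw [sum_congr rfl fun v hv => by rw [(mem_filter.1 (hF hv)).2], sum_const]
    simp
  refine ⟨F, by omega, ?_⟩
  rw [magnetization_flipOn, hsum, abs_le]
  omega

lemma exists_flipOn_balanced (σ : V → ℤˣ) :
    ∃ F : Finset V, 2 * (#F : ℤ) ≤ |magnetization σ| ∧ |magnetization (flipOn F σ)| ≤ 1 := by
  rcases le_total 0 (magnetization σ) with h | h
  · rw [abs_of_nonneg h]
    exact exists_flipOn_balanced_of_nonneg h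
  · rw [abs_of_nonpos h, ← magnetization_neg]
    obtain ⟨F, hF, hbal⟩ := exists_flipOn_balanced_of_nonneg (σ := -σ) (by
      rw [magnetization_neg]; omega)
    refine ⟨F, hF, ?_⟩
    rwa [flipOn_neg, magnetization_neg, abs_neg] at hbal

-- Reversing the spins in `s` is a bijection which changes the sign of `f` but leaves `g` alone.
lemma sum_mul_eq_zero_of_disjoint {f g : (V → ℤˣ) → ℤ} {s t : Finset V}
    (hf : DependsOn f s) (hodd : f.Odd) (hg : DependsOn g t) (hst : Disjoint s t) :
    ∑ σ, f σ * g σ = 0 := by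
  have hf_flip (σ) : f (flipOn s σ) = -f σ := by
    rw [← hodd]
    exact hf fun v hv => flipOn_apply_of_mem hv σ
  have hg_flip (σ) : g (flipOn s σ) = g σ :=
    hg fun v hv => flipOn_apply_of_notMem (disjoint_right.1 hst hv) σ
  have hneg := Equiv.sum_comp (flipOn_involutive s).toPerm fun σ => f σ * g σ
  simp only [Function.Involutive.coe_toPerm, hf_flip, hg_flip, neg_mul, sum_neg_distrib] at hneg
  omega

lemma sum_sq_sum_le_of_dependsOn {ι : Type*} [Fintype ι] {X : ι → (V → ℤˣ) → ℤ}
    {D : ι → Finset V} {m : ℕ} (hdep : ∀ i, DependsOn (X i) (D i)) (hodd : ∀ i, (X i).Odd)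
    (hX : ∀ i σ, |X i σ| ≤ 1) (hm : ∀ i, #{j | ¬Disjoint (D i) (D j)} ≤ m) :
    ∑ σ, (∑ i, X i σ) ^ 2 ≤ Fintype.card (V → ℤˣ) * (Fintype.card ι * m) := by
  have hmul (i j σ) : X i σ * X j σ ≤ 1 := by
    refine (le_abs_self _).trans ?_
    rw [abs_mul]
    exact mul_le_one₀ (hX i σ) (abs_nonneg _) (hX j σ)
  have hrow (i) : ∑ j, ∑ σ, X i σ * X j σ ≤ m * Fintype.card (V → ℤˣ) := by
    rw [← sum_filter_of_ne (p := fun j => ¬Disjoint (D i) (D j)) fun j _ hne hdisj =>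
      hne (sum_mul_eq_zero_of_disjoint (hdep i) (hodd i) (hdep j) hdisj)]
    calc _ ≤ ∑ j with ¬Disjoint (D i) (D j), ∑ _σ : V → ℤˣ, (1 : ℤ) := by
          gcongr; exact hmul _ _ _
      _ = #{j | ¬Disjoint (D i) (D j)} * Fintype.card (V → ℤˣ) := by simp
      _ ≤ _ := by gcongr; exact hm i
  calc ∑ σ, (∑ i, X i σ) ^ 2 = ∑ i, ∑ j, ∑ σ, X i σ * X j σ := by
        simp only [sq, sum_mul_sum]
        rw [sum_comm]
        exact sum_congr rfl fun i _ => sum_comm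
    _ ≤ ∑ _i : ι, (m * Fintype.card (V → ℤˣ) : ℤ) := sum_le_sum fun i _ => hrow i
    _ = _ := by
        rw [sum_const, card_univ, nsmul_eq_mul]
        ring

end Spins

section Graph

variable {V : Type*} (G : SimpleGraph V)

lemma colorable_of_degree_le [G.LocallyFinite] {d : ℕ} (hd : ∀ v, G.degree v ≤ d) :
    G.Colorable (d + 1) := by
  classical
  have hfree (v : V) (c : ∀ w, WellOrderingRel w v → Fin (d + 1)) :
      ∃ k, ∀ w (hw : WellOrderingRel w v), G.Adj v w → c w hw ≠ k := by
    let used := (G.neighborFinset v).image fun w =>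
      if hw : WellOrderingRel w v then c w hw else 0
    have hlt : #used < #(univ : Finset (Fin (d + 1))) := by
      rw [card_fin]
      exact Nat.lt_succ_of_le (card_image_le.trans (hd v))
    obtain ⟨k, -, hk⟩ := exists_mem_notMem_of_card_lt_card hlt
    refine ⟨k, fun w hw hvw hwk => hk (mem_image.2 ⟨w, by simpa using hvw, ?_⟩)⟩
    rw [dif_pos hw, hwk]
  choose next hnext using hfree
  let col : V → Fin (d + 1) := WellOrderingRel.isWellOrder.wf.fix next
  have hcol {v w : V} (hw : WellOrderingRel w v) (hvw : G.Adj v w) : col w ≠ col v := by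
    rw [show col v = next v fun u _ => col u from WellFounded.fix_eq _ _ _]
    exact hnext v (fun u _ => col u) w hw hvw
  refine ⟨SimpleGraph.Coloring.mk col fun {v w} hvw => ?_⟩
  rcases trichotomous_of WellOrderingRel v w with h | rfl | h
  · exact hcol h hvw.symm
  · exact absurd hvw (G.loopless.irrefl v)
  · exact (hcol h hvw).symm

variable {G} in
lemma exists_periodic_indepSet_cover [Finite V] {q : ℕ} (hG : G.Colorable q) :
    ∃ S : ℕ → Finset V, (∀ t, G.IsIndepSet (S t : Set V)) ∧
      ∀ k v, ∃ i < q, v ∈ S (k * q + i) := by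
  classical
  have := Fintype.ofFinite V
  obtain ⟨C⟩ := hG
  refine ⟨fun t => {v | (C v : ℕ) = t % q}, fun t v hv w hw _ hvw => ?_, fun k v => ?_⟩
  · simp only [coe_filter, mem_univ, true_and, Set.mem_ofPred_eq] at hv hw
    exact C.valid hvw (Fin.ext (hv.trans hw.symm))
  · refine ⟨C v, (C v).isLt, ?_⟩
    simp [Nat.mod_eq_of_lt]

variable [DecidableEq V] [G.LocallyFinite]

/-- The vertex `v` together with its neighbours. -/
def closedNeighborFinset (v : V) : Finset V := insert v (G.neighborFinset v)

lemma self_mem_closedNeighborFinset (v : V) : v ∈ closedNeighborFinset G v :=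
  mem_insert_self _ _

variable {G}

lemma mem_closedNeighborFinset_of_adj {v w : V} (h : G.Adj v w) : w ∈ closedNeighborFinset G v :=
  mem_insert_of_mem (by simpa using h)

lemma mem_closedNeighborFinset_comm {v w : V} :
    w ∈ closedNeighborFinset G v ↔ v ∈ closedNeighborFinset G w := by
  simp [closedNeighborFinset, G.adj_comm, eq_comm]

lemma card_closedNeighborFinset_le {d : ℕ} (hd : ∀ v, G.degree v ≤ d) (v : V) :
    #(closedNeighborFinset G v) ≤ d + 1 :=
  (card_insert_le _ _).trans (Nat.succ_le_succ (hd v))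

variable (G) in
/-- The set of vertices at distance at most `t` from `v`. -/
def closedBall : ℕ → V → Finset V
  | 0, v => {v}
  | t + 1, v => (closedNeighborFinset G v).biUnion (closedBall t)

lemma mem_closedBall_succ {t : ℕ} {v w : V} :
    w ∈ closedBall G (t + 1) v ↔ ∃ u ∈ closedNeighborFinset G v, w ∈ closedBall G t u :=
  mem_biUnion

lemma mem_closedBall_succ' {t : ℕ} {v w : V} :
    w ∈ closedBall G (t + 1) v ↔ ∃ u ∈ closedBall G t v, w ∈ closedNeighborFinset G u := by
  induction t generalizing v with
  | zero => simp [closedBall]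
  | succ t ih =>
    rw [mem_closedBall_succ]
    simp only [ih, mem_closedBall_succ (v := v)]
    tauto

lemma mem_closedBall_comm {t : ℕ} {v w : V} : w ∈ closedBall G t v ↔ v ∈ closedBall G t w := by
  induction t generalizing v with
  | zero => simp [closedBall, eq_comm]
  | succ t ih =>
    rw [mem_closedBall_succ, mem_closedBall_succ']
    simp only [ih, mem_closedNeighborFinset_comm (v := v), and_comm]

lemma card_closedBall_le {d : ℕ} (hd : ∀ v, G.degree v ≤ d) (t : ℕ) (v : V) :
    #(closedBall G t v) ≤ (d + 1) ^ t := by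
  induction t generalizing v with
  | zero => simp [closedBall]
  | succ t ih =>
    rw [closedBall, pow_succ']
    exact (card_biUnion_le_card_mul _ _ _ fun w _ => ih w).trans
      (Nat.mul_le_mul_right _ (card_closedNeighborFinset_le hd v))

lemma card_filter_not_disjoint_closedBall_le [Fintype V] {d : ℕ} (hd : ∀ v, G.degree v ≤ d)
    (t : ℕ) (v : V) :
    #{w | ¬Disjoint (closedBall G t v) (closedBall G t w)} ≤ (d + 1) ^ (2 * t) := by
  have hsub : ({w | ¬Disjoint (closedBall G t v) (closedBall G t w)} : Finset V) ⊆
      (closedBall G t v).biUnion (closedBall G t) := by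
    intro w hw
    obtain ⟨u, huv, huw⟩ := not_disjoint_iff.1 (mem_filter.1 hw).2
    exact mem_biUnion.2 ⟨u, huv, mem_closedBall_comm.1 huw⟩
  rw [two_mul, pow_add]
  refine (card_le_card hsub).trans ((card_biUnion_le_card_mul _ _ _ fun w _ =>
    card_closedBall_le hd t w).trans ?_)
  gcongr
  exact card_closedBall_le hd t v

end Graph

section Margin

variable {V : Type*} (G : SimpleGraph V) [G.LocallyFinite] (s : ℤˣ)

/-- The excess of neighbours of `v` which suit `v` over those which do not: for `s = 1` a vertex is
suited by the neighbours of its own colour, for `s = -1` by those of the opposite colour. -/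
def margin (σ : V → ℤˣ) (v : V) : ℤ := s * (σ v * ∑ w ∈ G.neighborFinset v, (σ w : ℤ))

lemma margin_neg (σ : V → ℤˣ) (v : V) : margin G s (-σ) v = margin G s σ v := by
  simp [margin]

lemma abs_margin_le_degree (σ : V → ℤˣ) (v : V) : |margin G s σ v| ≤ G.degree v := by
  have habs (u : ℤˣ) : |(u : ℤ)| = 1 := Int.isUnit_iff_abs_eq.1 u.isUnit
  rw [margin, abs_mul, abs_mul, habs, habs, one_mul, one_mul]
  refine (abs_sum_le_sum_abs _ _).trans ?_
  simp [habs]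

lemma margin_eq_card_sub_degree (σ : V → ℤˣ) (v : V) :
    margin G s σ v = 2 * #{w ∈ G.neighborFinset v | σ w = s * σ v} - G.degree v := by
  have hspin (a b : ℤˣ) : (a * b : ℤ) = 2 * (if b = a then 1 else 0) - 1 := by
    rcases Int.units_eq_one_or a with rfl | rfl <;>
      rcases Int.units_eq_one_or b with rfl | rfl <;> decide
  have hterm (w : V) : (s * (σ v * σ w) : ℤ) = 2 * (if σ w = s * σ v then 1 else 0) - 1 := by
    rw [← mul_assoc, ← Units.val_mul, hspin]
  simp only [margin, mul_sum, hterm, sum_sub_distrib]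
  rw [← mul_sum, sum_boole]
  simp

variable {G s} in
lemma margin_congr [DecidableEq V] {σ τ : V → ℤˣ} {v : V}
    (h : ∀ w ∈ closedNeighborFinset G v, σ w = τ w) : margin G s σ v = margin G s τ v := by
  rw [margin, margin, h v (self_mem_closedNeighborFinset G v)]
  congr 2
  exact sum_congr rfl fun w hw => by
    rw [h w (mem_closedNeighborFinset_of_adj (by simpa using hw))]

variable [Fintype V]

/-- The total margin: up to sign, the energy of an Ising model on `G` without external field. -/
def totalMargin (σ : V → ℤˣ) : ℤ := ∑ v, margin G s σ v

variable {G} in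
lemma abs_totalMargin_le {d : ℕ} (hd : ∀ v, G.degree v ≤ d) (σ : V → ℤˣ) :
    |totalMargin G s σ| ≤ Fintype.card V * d :=
  calc |totalMargin G s σ| ≤ ∑ v, |margin G s σ v| := abs_sum_le_sum_abs _ _
    _ ≤ ∑ _v : V, (d : ℤ) := sum_le_sum fun v _ =>
        (abs_margin_le_degree G s σ v).trans (by exact_mod_cast hd v)
    _ = Fintype.card V * d := by simp

/-- The vertices most of whose neighbours do not suit them. -/
def frustrated (σ : V → ℤˣ) : Finset V := {v | margin G s σ v < 0}

variable {G s} in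
lemma mem_frustrated {σ : V → ℤˣ} {v : V} : v ∈ frustrated G s σ ↔ margin G s σ v < 0 := by
  simp [frustrated]

lemma frustrated_neg (σ : V → ℤˣ) : frustrated G s (-σ) = frustrated G s σ := by
  ext v
  rw [mem_frustrated, mem_frustrated, margin_neg]

variable [DecidableEq V]

variable {G} in
lemma totalMargin_flipOn {F : Finset V} (hF : G.IsIndepSet (F : Set V)) (σ : V → ℤˣ) :
    totalMargin G s (flipOn F σ) = totalMargin G s σ - 4 * ∑ v ∈ F, margin G s σ v := by
  classical
  let A := G.adjMatrix ℤ
  let x : V → ℤ := fun v => σ v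
  let y : V → ℤ := fun v => if v ∈ F then x v else 0
  have hmulVec (z : V → ℤ) (v : V) : (A.mulVec z) v = ∑ w ∈ G.neighborFinset v, z w := by
    rw [G.adjMatrix_mulVec_apply]
    congr!
  have htotal (τ : V → ℤˣ) :
      totalMargin G s τ = s * ((fun v => (τ v : ℤ)) ⬝ᵥ A.mulVec fun v => (τ v : ℤ)) := by
    simp only [totalMargin, margin, dotProduct, hmulVec, mul_sum]
  have hflip : (fun v => (flipOn F σ v : ℤ)) = x - (2 : ℤ) • y := by
    ext v
    simp [coe_flipOn_apply, x, y]
  have hyx : ∑ v ∈ F, margin G s σ v = s * (y ⬝ᵥ A.mulVec x) := by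
    simp [margin, dotProduct, hmulVec, ← mul_sum, y, x, ite_mul, sum_ite_mem]
  have hyy : y ⬝ᵥ A.mulVec y = 0 := by
    simp only [dotProduct, hmulVec, y, ite_mul, zero_mul]
    refine sum_eq_zero fun v _ => ite_eq_right_iff.2 fun hv => ?_
    rw [sum_eq_zero, mul_zero]
    refine fun w hw => if_neg fun hwF => ?_
    have hvw : G.Adj v w := by simpa using hw
    exact hF hv hwF hvw.ne hvw
  have hxy : x ⬝ᵥ A.mulVec y = y ⬝ᵥ A.mulVec x := by
    rw [Matrix.dotProduct_mulVec, ← Matrix.mulVec_transpose, G.transpose_adjMatrix,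
      dotProduct_comm]
  rw [htotal, htotal, hflip, hyx, Matrix.mulVec_sub, Matrix.mulVec_smul, sub_dotProduct,
    dotProduct_sub, dotProduct_sub, smul_dotProduct, smul_dotProduct, dotProduct_smul,
    dotProduct_smul, hyy, hxy]
  simp only [smul_eq_mul]
  ring

variable {G s}

lemma totalMargin_add_le_totalMargin_flipOn {F : Finset V} {σ : V → ℤˣ}
    (hF : G.IsIndepSet (F : Set V)) (hfr : F ⊆ frustrated G s σ) :
    totalMargin G s σ + 4 * #F ≤ totalMargin G s (flipOn F σ) := by
  have hsum : ∑ v ∈ F, margin G s σ v ≤ #F • (-1) :=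
    sum_le_card_nsmul _ _ _ fun v hv => Int.le_sub_one_of_lt (mem_frustrated.1 (hfr hv))
  rw [totalMargin_flipOn s hF]
  simp only [nsmul_eq_mul] at hsum
  linarith

lemma mem_frustrated_of_forall_eq {σ τ : V → ℤˣ} {v : V}
    (h : ∀ w ∈ closedNeighborFinset G v, σ w = τ w) :
    v ∈ frustrated G s σ ↔ v ∈ frustrated G s τ := by
  rw [mem_frustrated, mem_frustrated, margin_congr h]

lemma card_frustrated_flipOn_le {d : ℕ} (hd : ∀ v, G.degree v ≤ d) (F : Finset V)
    (σ : V → ℤˣ) : #(frustrated G s (flipOn F σ)) ≤ #(frustrated G s σ) + #F * (d + 1) := by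
  have hsub : frustrated G s (flipOn F σ) ⊆
      frustrated G s σ ∪ F.biUnion (closedNeighborFinset G) := by
    intro v hv
    by_contra hcon
    simp only [mem_union, mem_biUnion, not_or, not_exists, not_and] at hcon
    refine hcon.1 ((mem_frustrated_of_forall_eq fun w hw => ?_).1 hv)
    exact flipOn_apply_of_notMem (fun hwF => hcon.2 w hwF (mem_closedNeighborFinset_comm.1 hw)) σ
  refine (card_le_card hsub).trans ((card_union_le _ _).trans ?_)
  gcongr
  exact card_biUnion_le_card_mul _ _ _ fun w _ => card_closedNeighborFinset_le hd w

end Margin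

section Dynamics

variable {V : Type*} [Fintype V] [DecidableEq V] (G : SimpleGraph V) [G.LocallyFinite] (s : ℤˣ)
  (S : ℕ → Finset V) (σ : V → ℤˣ)

/-- The configuration at time `t` of the dynamics started from `σ` in which, at time `t`, all
frustrated vertices of `S t` reverse their spins simultaneously. -/
def evolve : ℕ → V → ℤˣ
  | 0 => σ
  | t + 1 => flipOn (S t ∩ frustrated G s (evolve t)) (evolve t)

/-- The vertices which reverse their spins between times `t` and `t + 1`. -/
def flipped (t : ℕ) : Finset V := S t ∩ frustrated G s (evolve G s S σ t)

lemma evolve_succ (t : ℕ) :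
    evolve G s S σ (t + 1) = flipOn (flipped G s S σ t) (evolve G s S σ t) := rfl

lemma evolve_neg (t : ℕ) : evolve G s S (-σ) t = -evolve G s S σ t := by
  induction t with
  | zero => rfl
  | succ t ih => rw [evolve, evolve, ih, frustrated_neg, flipOn_neg]

lemma dependsOn_evolve (t : ℕ) (v : V) :
    DependsOn (fun σ => evolve G s S σ t v) (closedBall G t v : Set V) := by
  induction t generalizing v with
  | zero => exact fun σ τ h => h v (by simp [closedBall])
  | succ t ih =>
    intro σ τ h
    have hclosed : ∀ w ∈ closedNeighborFinset G v, evolve G s S σ t w = evolve G s S τ t w :=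
      fun w hw => ih w fun u hu => h u (mem_closedBall_succ.2 ⟨w, hw, hu⟩)
    simp only [evolve, flipOn, piecewise, mem_inter, Pi.neg_apply,
      mem_frustrated_of_forall_eq hclosed, hclosed v (self_mem_closedNeighborFinset G v)]

variable {G S}

lemma totalMargin_add_sum_card_flipped_le (hS : ∀ t, G.IsIndepSet (S t : Set V)) (T : ℕ) :
    totalMargin G s σ + 4 * ∑ t ∈ range T, (#(flipped G s S σ t) : ℤ) ≤
      totalMargin G s (evolve G s S σ T) := by
  induction T with
  | zero => simp [evolve]
  | succ T ih =>
    have hindep : G.IsIndepSet (flipped G s S σ T : Set V) :=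
      (hS T).mono (coe_subset.2 inter_subset_left)
    have hstep := totalMargin_add_le_totalMargin_flipOn hindep (s := s) inter_subset_right
    rw [sum_range_succ, evolve_succ]
    linarith

lemma sum_card_flipped_le {d : ℕ} (hd : ∀ v, G.degree v ≤ d)
    (hS : ∀ t, G.IsIndepSet (S t : Set V)) (T : ℕ) :
    2 * ∑ t ∈ range T, #(flipped G s S σ t) ≤ Fintype.card V * d := by
  have hmono := totalMargin_add_sum_card_flipped_le s σ hS T
  have hstart := (abs_le.1 (abs_totalMargin_le s hd σ)).1
  have hend := (abs_le.1 (abs_totalMargin_le s hd (evolve G s S σ T))).2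
  zify
  linarith

lemma evolve_add_apply_eq_of_forall_notMem_flipped {a i : ℕ} {v : V}
    (h : ∀ j < i, v ∉ flipped G s S σ (a + j)) :
    evolve G s S σ (a + i) v = evolve G s S σ a v := by
  induction i with
  | zero => rfl
  | succ i ih =>
    rw [← add_assoc, evolve_succ, flipOn_apply_of_notMem (h i i.lt_succ_self)]
    exact ih fun j hj => h j (hj.trans i.lt_succ_self)

-- If nothing in the closed neighbourhood of `v` flips during the round, then `v` is as frustrated
-- at its turn as it was at the start of the round, so it must flip after all.
lemma card_frustrated_evolve_le {d : ℕ} (hd : ∀ v, G.degree v ≤ d) {a q : ℕ}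
    (hcover : ∀ v, ∃ i < q, v ∈ S (a + i)) :
    #(frustrated G s (evolve G s S σ a)) ≤
      (d + 1) * ∑ i ∈ range q, #(flipped G s S σ (a + i)) := by
  have hsub : frustrated G s (evolve G s S σ a) ⊆ (range q).biUnion fun i =>
      (flipped G s S σ (a + i)).biUnion (closedNeighborFinset G) := by
    intro v hv
    by_contra hcon
    simp only [mem_biUnion, mem_range, not_exists, not_and] at hcon
    obtain ⟨i, hi, hvi⟩ := hcover v
    have hconst : ∀ w ∈ closedNeighborFinset G v,
        evolve G s S σ (a + i) w = evolve G s S σ a w := fun w hw =>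
      evolve_add_apply_eq_of_forall_notMem_flipped s σ fun j hj hwj =>
        hcon j (hj.trans hi) w hwj (mem_closedNeighborFinset_comm.1 hw)
    exact hcon i hi v (mem_inter.2 ⟨hvi, (mem_frustrated_of_forall_eq hconst).2 hv⟩)
      (self_mem_closedNeighborFinset G v)
  rw [mul_comm, sum_mul]
  refine (card_le_card hsub).trans (card_biUnion_le.trans (sum_le_sum fun i _ => ?_))
  exact card_biUnion_le_card_mul _ _ _ fun w _ => card_closedNeighborFinset_le hd w

lemma sum_card_frustrated_evolve_le {d : ℕ} (hd : ∀ v, G.degree v ≤ d)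
    (hS : ∀ t, G.IsIndepSet (S t : Set V)) {q : ℕ} (hcover : ∀ k v, ∃ i < q, v ∈ S (k * q + i))
    (K : ℕ) :
    2 * ∑ k ∈ range K, #(frustrated G s (evolve G s S σ (k * q))) ≤
      (d + 1) * (Fintype.card V * d) := by
  have hrounds : ∑ k ∈ range K, #(frustrated G s (evolve G s S σ (k * q))) ≤
      (d + 1) * ∑ t ∈ range (K * q), #(flipped G s S σ t) := by
    induction K with
    | zero => simp
    | succ K ih =>
      rw [sum_range_succ, add_one_mul K q, sum_range_add, mul_add]
      exact add_le_add ih (card_frustrated_evolve_le s σ hd (hcover K))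
  calc _ ≤ 2 * ((d + 1) * ∑ t ∈ range (K * q), #(flipped G s S σ t)) :=
        Nat.mul_le_mul_left _ hrounds
    _ = (d + 1) * (2 * ∑ t ∈ range (K * q), #(flipped G s S σ t)) := by ring
    _ ≤ _ := Nat.mul_le_mul_left _ (sum_card_flipped_le s σ hd hS _)

omit σ

variable (S) in
lemma sum_sq_magnetization_evolve_le {d : ℕ} (hd : ∀ v, G.degree v ≤ d) (t : ℕ) :
    ∑ σ, magnetization (evolve G s S σ t) ^ 2 ≤
      Fintype.card (V → ℤˣ) * (Fintype.card V * ((d + 1) ^ (2 * t) : ℕ)) :=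
  sum_sq_sum_le_of_dependsOn (X := fun v σ => (evolve G s S σ t v : ℤ))
    (fun v _ _ h => congrArg Units.val (dependsOn_evolve G s S t v h))
    (fun v σ => by simp [evolve_neg])
    (fun v σ => (Int.isUnit_iff_abs_eq.1 (Units.isUnit _)).le)
    (card_filter_not_disjoint_closedBall_le hd t)

variable (S) in
lemma exists_forall_sq_magnetization_evolve_le {d : ℕ} (hd : ∀ v, G.degree v ≤ d)
    (q K : ℕ) :
    ∃ σ, ∀ k < K, magnetization (evolve G s S σ (k * q)) ^ 2 ≤
      K * (Fintype.card V * ((d + 1) ^ (2 * (K * q)) : ℕ)) := by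
  set B : ℤ := Fintype.card V * ((d + 1) ^ (2 * (K * q)) : ℕ) with hB
  have hsum : ∑ σ, ∑ k ∈ range K, magnetization (evolve G s S σ (k * q)) ^ 2 ≤
      ∑ _σ : V → ℤˣ, K * B := by
    rw [sum_comm]
    calc _ ≤ ∑ _k ∈ range K, Fintype.card (V → ℤˣ) * B := by
          refine sum_le_sum fun k hk => (sum_sq_magnetization_evolve_le s S hd (k * q)).trans ?_
          have hkK : k ≤ K := (mem_range.1 hk).le
          rw [hB]
          gcongr
          exact d.succ_pos
      _ = ∑ _σ : V → ℤˣ, K * B := by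
          simp only [sum_const, card_range, card_univ, nsmul_eq_mul]
          ring
  obtain ⟨σ, -, hσ⟩ := exists_le_of_sum_le univ_nonempty hsum
  exact ⟨σ, fun k hk => (single_le_sum (f := fun k => magnetization (evolve G s S σ (k * q)) ^ 2)
    (fun _ _ => sq_nonneg _) (mem_range.2 hk)).trans hσ⟩

omit [DecidableEq V] in
lemma exists_card_frustrated_le_and_sq_magnetization_le {d : ℕ} (hd : ∀ v, G.degree v ≤ d) {K : ℕ}
    (hK : K ≠ 0) :
    ∃ σ : V → ℤˣ, 2 * (K * #(frustrated G s σ)) ≤ (d + 1) * (Fintype.card V * d) ∧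
      magnetization σ ^ 2 ≤ K * (Fintype.card V * ((d + 1) ^ (2 * (K * (d + 1))) : ℕ)) := by
  classical
  obtain ⟨S, hS, hcover⟩ := exists_periodic_indepSet_cover (colorable_of_degree_le G hd)
  obtain ⟨σ, hσ⟩ := exists_forall_sq_magnetization_evolve_le s S hd (d + 1) K
  obtain ⟨k, hk, hmin⟩ := exists_min_image (range K)
    (fun k => #(frustrated G s (evolve G s S σ (k * (d + 1))))) (nonempty_range_iff.2 hK)
  refine ⟨evolve G s S σ (k * (d + 1)), ?_, hσ k (mem_range.1 hk)⟩
  refine le_trans ?_ (sum_card_frustrated_evolve_le s σ hd hS hcover K)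
  gcongr
  simpa using card_nsmul_le_sum _ _ _ hmin

-- Restoring the balance reverses only `O(√n)` spins, which creates `O(√n)` frustrated vertices.
omit [DecidableEq V] in
lemma exists_balanced_card_frustrated_le_add_sqrt {d : ℕ} (hd : ∀ v, G.degree v ≤ d) {K : ℕ}
    (hK : K ≠ 0) :
    ∃ σ : V → ℤˣ, |magnetization σ| ≤ 1 ∧
      (2 * #(frustrated G s σ) : ℝ) ≤ (d + 1) * d / K * Fintype.card V +
        (d + 1) * √(K * (d + 1) ^ (2 * (K * (d + 1))) * Fintype.card V) := by
  classical
  obtain ⟨σ, hfew, hmag⟩ := exists_card_frustrated_le_and_sq_magnetization_le s hd hK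
  obtain ⟨F, hF, hbal⟩ := exists_flipOn_balanced σ
  refine ⟨flipOn F σ, hbal, ?_⟩
  have hfew' : (2 * #(frustrated G s σ) : ℝ) ≤ (d + 1) * d / K * Fintype.card V := by
    rw [div_mul_eq_mul_div, le_div_iff₀ (by positivity)]
    have : (2 * (K * #(frustrated G s σ)) : ℝ) ≤ (d + 1) * (Fintype.card V * d) := by
      exact_mod_cast hfew
    linarith
  have hF' : (2 * #F : ℝ) ≤ √(K * (d + 1) ^ (2 * (K * (d + 1))) * Fintype.card V) := by
    have hF_mag : (2 * #F : ℝ) ≤ |(magnetization σ : ℝ)| := by exact_mod_cast hF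
    refine hF_mag.trans (Real.abs_le_sqrt ?_)
    rw [mul_assoc, mul_comm _ (Fintype.card V : ℝ)]
    exact_mod_cast hmag
  calc (2 * #(frustrated G s (flipOn F σ)) : ℝ)
      ≤ 2 * (#(frustrated G s σ) + #F * (d + 1)) := by
        gcongr
        exact_mod_cast card_frustrated_flipOn_le hd F σ
    _ = 2 * #(frustrated G s σ) + (d + 1) * (2 * #F) := by ring
    _ ≤ _ := by gcongr

end Dynamics

theorem exists_balanced_card_frustrated_le (d : ℕ) {ε : ℝ} (hε : 0 < ε) :
    ∃ N : ℕ, ∀ {V : Type*} [Fintype V] (G : SimpleGraph V) [G.LocallyFinite] (s : ℤˣ),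
      N ≤ Fintype.card V → (∀ v, G.degree v ≤ d) →
      ∃ σ : V → ℤˣ, |magnetization σ| ≤ 1 ∧ #(frustrated G s σ) ≤ ε * Fintype.card V := by
  obtain ⟨K, hK⟩ := exists_nat_gt ((d + 1) * d / ε)
  have hKpos : (0 : ℝ) < K := lt_of_le_of_lt (by positivity) hK
  set C : ℝ := K * (d + 1) ^ (2 * (K * (d + 1)))
  obtain ⟨N, hN⟩ := exists_nat_gt ((d + 1) ^ 2 * C / ε ^ 2)
  refine ⟨N, fun {V} _ G _ s hn hd => ?_⟩
  obtain ⟨σ, hbal, hσ⟩ :=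
    exists_balanced_card_frustrated_le_add_sqrt s hd (Nat.cast_pos.1 hKpos).ne'
  refine ⟨σ, hbal, ?_⟩
  set n : ℝ := (Fintype.card V : ℝ)
  have hlinear : (d + 1) * d / K * n ≤ ε * n := by
    rw [div_lt_comm₀ hε hKpos] at hK
    gcongr
  have hsqrt : (d + 1) * √(C * n) ≤ ε * n := by
    rw [div_lt_iff₀ (by positivity)] at hN
    have hNn : (N : ℝ) ≤ n := Nat.cast_le.2 hn
    rw [← sq_le_sq₀ (by positivity) (by positivity)]
    calc ((d + 1) * √(C * n)) ^ 2 = (d + 1) ^ 2 * C * n := by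
          rw [mul_pow, Real.sq_sqrt (by positivity)]
          ring
      _ ≤ n * ε ^ 2 * n := by grw [hN, hNn]
      _ = (ε * n) ^ 2 := by ring
  linarith

section Colouring

/-- The red-blue colouring in which the red (`true`) vertices are those of spin `1`. -/
def colouring {V : Type*} (σ : V → ℤˣ) (v : V) : Bool := σ v = 1

lemma colouring_eq_iff {V : Type*} {σ : V → ℤˣ} {v w : V} :
    colouring σ w = colouring σ v ↔ σ w = σ v := by
  rcases Int.units_eq_one_or (σ v) with hv | hv <;>
    rcases Int.units_eq_one_or (σ w) with hw | hw <;> simp [colouring, hv, hw]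

variable {n : ℕ} {G : SimpleGraph (Fin n)} {σ : Fin n → ℤˣ}

lemma isBisection_colouring (h : |magnetization σ| ≤ 1) : IsBisection (colouring σ) := by
  have hspin (v) : (σ v : ℤ) =
      (if colouring σ v = true then 1 else 0) - if colouring σ v = false then 1 else 0 := by
    rcases Int.units_eq_one_or (σ v) with hv | hv <;> simp [colouring, hv]
  simp only [magnetization, hspin, sum_sub_distrib, sum_boole] at h
  simpa only [IsBisection, Set.ncard_eq_toFinset_card', Set.toFinset_ofPred] using h

variable [G.LocallyFinite]

lemma notMem_frustrated_iff_ncard_le {s : ℤˣ} {v : Fin n} :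
    v ∉ frustrated G s σ ↔
      (G.neighborSet v).ncard ≤ 2 * ({w | G.Adj v w ∧ σ w = s * σ v} : Set (Fin n)).ncard := by
  have hdeg : (G.neighborSet v).ncard = G.degree v := by
    rw [← G.coe_neighborFinset, Set.ncard_coe_finset, G.card_neighborFinset_eq_degree]
  have hcount : ({w | G.Adj v w ∧ σ w = s * σ v} : Set (Fin n)).ncard =
      #{w ∈ G.neighborFinset v | σ w = s * σ v} := by
    rw [← Set.ncard_coe_finset]
    simp
  rw [mem_frustrated, margin_eq_card_sub_degree, hdeg, hcount]
  omega

lemma internalAt_colouring_iff {v : Fin n} :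
    InternalAt G (colouring σ) v ↔ v ∉ frustrated G 1 σ := by
  simp only [InternalAt, colouring_eq_iff, notMem_frustrated_iff_ncard_le, one_mul]

lemma externalAt_colouring_iff {v : Fin n} :
    ExternalAt G (colouring σ) v ↔ v ∉ frustrated G (-1) σ := by
  simp only [ExternalAt, ne_eq, colouring_eq_iff, notMem_frustrated_iff_ncard_le, neg_one_mul,
    ← Int.units_ne_iff_eq_neg]

lemma almostInternal_colouring_iff {ε : ℝ} :
    AlmostInternal G (colouring σ) ε ↔ #(frustrated G 1 σ) ≤ ε * n := by
  simp only [AlmostInternal, internalAt_colouring_iff, not_not, SetLike.setOfPred_mem_eq,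
    Set.ncard_coe_finset]

lemma almostExternal_colouring_iff {ε : ℝ} :
    AlmostExternal G (colouring σ) ε ↔ #(frustrated G (-1) σ) ≤ ε * n := by
  simp only [AlmostExternal, externalAt_colouring_iff, not_not, SetLike.setOfPred_mem_eq,
    Set.ncard_coe_finset]

end Colouring

end MajorityDynamics

/-- For every `d` and `ε > 0`, every sufficiently large graph with maximum degree at
most `d` has an `ε`-almost-internal bisection and an `ε`-almost-external bisection. -/
theorem almost_internal_external_bisections (d : ℕ) (ε : ℝ) (hε : 0 < ε) :
    ∃ N : ℕ, ∀ n : ℕ, N ≤ n → ∀ G : SimpleGraph (Fin n),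
      (∀ v, (G.neighborSet v).ncard ≤ d) →
      (∃ c : Fin n → Bool, IsBisection c ∧ AlmostInternal G c ε) ∧
      (∃ c : Fin n → Bool, IsBisection c ∧ AlmostExternal G c ε) := by
  classical
  obtain ⟨N, hN⟩ := MajorityDynamics.exists_balanced_card_frustrated_le d hε
  refine ⟨N, fun n hn G hG => ?_⟩
  have hd : ∀ v, G.degree v ≤ d := fun v => by
    rw [← G.card_neighborSet_eq_degree, ← Nat.card_eq_fintype_card]
    exact hG v
  have hbalanced := fun s : ℤˣ => hN G s (by rwa [Fintype.card_fin]) hd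
  simp only [Fintype.card_fin] at hbalanced
  obtain ⟨σ, hσ, hint⟩ := hbalanced 1
  obtain ⟨τ, hτ, hext⟩ := hbalanced (-1)
  exact ⟨⟨_, MajorityDynamics.isBisection_colouring hσ,
      MajorityDynamics.almostInternal_colouring_iff.2 hint⟩,
    ⟨_, MajorityDynamics.isBisection_colouring hτ,
      MajorityDynamics.almostExternal_colouring_iff.2 hext⟩⟩
end

section
/- For any sequence (p_n) in [0,1] (allowed to depend on n), with high probability the binomial random digraph D ~ 𝔻(n, p_n) has a majority 3-colouring. -/
open MeasureTheory Filter

/-- Bernoulli measure on `Bool` with parameter `p`. -/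
noncomputable def bernoulliM (p : ℝ) : Measure Bool :=
  (Real.toNNReal p) • Measure.dirac true + (Real.toNNReal (1 - p)) • Measure.dirac false

instance (p : ℝ) : IsFiniteMeasure (bernoulliM p) := by
  unfold bernoulliM; infer_instance

/-- The binomial random digraph measure `𝔻(n,p)`: each of the `n(n-1)` possible arcs
(ordered pairs of distinct vertices) is present independently with probability `p`
(the diagonal entries of the matrix are ignored, via `DiAdj`). -/
noncomputable def diMeasure (n : ℕ) (p : ℝ) : Measure (Fin n → Fin n → Bool) :=
  Measure.pi fun _ => Measure.pi fun _ => bernoulliM p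

/-- The arc relation of the digraph encoded by the matrix `A`. -/
def DiAdj {n : ℕ} (A : Fin n → Fin n → Bool) (v w : Fin n) : Prop :=
  v ≠ w ∧ A v w = true

/-- A vertex `v` is *majority-coloured* with respect to the colouring `c` if at most
half of its out-neighbours have the same colour as `v`. -/
def MajorityAt {n : ℕ} {α : Type*} (A : Fin n → Fin n → Bool) (c : Fin n → α) (v : Fin n) :
    Prop :=
  2 * ({w | DiAdj A v w ∧ c w = c v} : Set (Fin n)).ncard ≤
    ({w | DiAdj A v w} : Set (Fin n)).ncard

/-!
A nonempty vertex set in which every vertex has at least two in-neighbours from the set is called a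
core. If a set of vertices contains no core, then its colours can be chosen greedily so that all of
its vertices are majority-coloured, whatever the colours of the other vertices: remove a vertex `x`
with at most one in-neighbour in the set, colour the rest, and note that each of the two
requirements on `x`, its own and that of its in-neighbour, rules out at most one colour.

If `n * p ≤ 1.855`, a first moment computation shows that with high probability the whole digraph
contains no core. If `n * p ≥ 40 * log n`, Chernoff bounds show that a fixed balanced colouring
works.

In between, consider colourings `c` in which the colour of every vertex is a rarest one among its
out-neighbours, with three classes of equal size. They are majority colourings, and many of them
survive the adversarial recolouring of a few vertices: a vertex is *active* with respect to `S` if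
recolouring `S` could destroy its majority property, and a colouring is *stable* if activation
spreading from `2 * n ^ (7 / 12)` vertices stops before it reaches `n ^ (3 / 4)` vertices. The
second moment method, applied to stable colourings weighted by the probability that every vertex
picks its colour when choosing a rarest one uniformly at random, yields a stable colouring with
probability at least inverse polynomial in `n`. Since rows are independent, concentration of the
Hamming distance turns this into: with high probability, altering fewer than `n ^ (7 / 12)` rows
produces a digraph with a stable colouring. Start the activation from the altered rows. It ends in a
set of fewer than `n ^ (3 / 4)` vertices, which contains no core with high probability and is
therefore recoloured greedily.
-/

open scoped Finset

section Peeling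

variable {V : Type*}

lemma exists_forall_eq_of_card_le_one {α : Type*} [Nonempty α] {s : Finset V} (hs : #s ≤ 1)
    (f : V → α) : ∃ a, ∀ v ∈ s, f v = a := by
  obtain rfl | ⟨u, hu⟩ := s.eq_empty_or_nonempty
  · simp
  · exact ⟨f u, fun v hv => congrArg f (Finset.card_le_one.1 hs v hv u hu)⟩

lemma exists_ne_two_mul_card_filter_le (s : Finset V) (c : V → Fin 3) (q : Fin 3) :
    ∃ i ≠ q, 2 * #{w ∈ s | c w = i} ≤ #s := by
  have hsum : ∑ i, #{w ∈ s | c w = i} = #s :=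
    (Finset.card_eq_sum_card_fiberwise fun _ _ => Finset.mem_univ _).symm
  by_contra! hlarge
  have h1 := hlarge (q + 1) (by simp)
  have h2 := hlarge (q + 2) (by simp)
  have hshift := Equiv.sum_comp (Equiv.addLeft q) fun i => #{w ∈ s | c w = i}
  rw [hsum, Fin.sum_univ_three] at hshift
  change _ + #{w ∈ s | c w = q + 1} + #{w ∈ s | c w = q + 2} = _ at hshift
  omega

variable [DecidableEq V]

/-- A *core* of the digraph with out-neighbourhoods `out`: a nonempty set of vertices in which
every vertex has at least two in-neighbours. Core-free sets can be coloured greedily. -/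
def IsCore (out : V → Finset V) (S : Finset V) : Prop :=
  S.Nonempty ∧ ∀ x ∈ S, 2 ≤ #{u ∈ S | x ∈ out u}

lemma IsCore.mono {out out' : V → Finset V} {S : Finset V} (h : IsCore out S)
    (hout : ∀ u, out u ⊆ out' u) : IsCore out' S :=
  ⟨h.1, fun x hx => (h.2 x hx).trans <| Finset.card_le_card <|
    Finset.monotone_filter_right S fun u _ => @hout u x⟩

/-- Recolouring `x` hurts only its in-neighbours, and of those there is at most one in `B`. The
quotas `D` stand for the out-degrees, which must not shrink when `x` is removed. -/
lemma exists_quota_colouring_extension {out : V → Finset V} {D : V → ℕ} {B : Finset V}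
    (hD : ∀ v, #(out v) ≤ D v) (hloop : ∀ v, v ∉ out v) (hB : ∀ S ⊆ B, ¬ IsCore out S)
    (c₀ : V → Fin 3) :
    ∃ c : V → Fin 3, (∀ v ∉ B, c v = c₀ v) ∧ ∀ v ∈ B, 2 * #{w ∈ out v | c w = c v} ≤ D v := by
  induction hk : #B generalizing B out with
  | zero => exact ⟨c₀, fun _ _ => rfl, by simp [Finset.card_eq_zero.1 hk]⟩
  | succ k ih =>
    have hne : B.Nonempty := Finset.card_pos.1 (by omega)
    obtain ⟨x, hxB, hx⟩ : ∃ x ∈ B, #{u ∈ B | x ∈ out u} ≤ 1 := by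
      simpa [IsCore, hne, Nat.lt_succ_iff] using hB B subset_rfl
    obtain ⟨c, hc₀, hc⟩ := ih (B := B.erase x) (out := fun v => (out v).erase x)
      (fun v => Finset.card_erase_le.trans (hD v))
      (fun v hv => hloop v (Finset.mem_of_mem_erase hv))
      (fun S hS hcore => hB S (hS.trans (B.erase_subset x))
        (hcore.mono fun u => (out u).erase_subset x))
      (by simp [Finset.card_erase_of_mem hxB, hk])
    obtain ⟨q, hq⟩ := exists_forall_eq_of_card_le_one hx c
    obtain ⟨i, hiq, hi⟩ := exists_ne_two_mul_card_filter_le (out x) c q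
    refine ⟨Function.update c x i, fun v hv => ?_, fun v hv => ?_⟩
    · rw [Function.update_of_ne (ne_of_mem_of_not_mem hxB hv).symm]
      exact hc₀ v fun h => hv (Finset.mem_of_mem_erase h)
    obtain rfl | hvx := eq_or_ne v x
    · rw [Function.update_self]
      refine le_trans (Nat.mul_le_mul_left 2 (Finset.card_le_card fun w hw => ?_))
        (hi.trans (hD v))
      obtain ⟨hw, hwi⟩ := Finset.mem_filter.1 hw
      rw [Function.update_of_ne (ne_of_mem_of_not_mem hw (hloop v))] at hwi
      exact Finset.mem_filter.2 ⟨hw, hwi⟩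
    · rw [Function.update_of_ne hvx]
      refine le_trans (Nat.mul_le_mul_left 2 (Finset.card_le_card fun w hw => ?_))
        (hc v (Finset.mem_erase.2 ⟨hvx, hv⟩))
      obtain ⟨hw, hwc⟩ := Finset.mem_filter.1 hw
      obtain hwx | hwx := eq_or_ne w x
      · rw [hwx, Function.update_self] at hwc
        exact absurd (hwc.trans (hq v (Finset.mem_filter.2 ⟨hv, hwx ▸ hw⟩))) hiq
      · rw [Function.update_of_ne hwx] at hwc
        exact Finset.mem_filter.2 ⟨Finset.mem_erase.2 ⟨hwx, hw⟩, hwc⟩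

/-- Outside `B`, the worst case is that every vertex of `B` takes the colour of `u`. -/
lemma exists_majority_colouring_of_forall_not_isCore {out : V → Finset V} {B : Finset V}
    (hloop : ∀ v, v ∉ out v) (hB : ∀ S ⊆ B, ¬ IsCore out S) (c₀ : V → Fin 3)
    (hc₀ : ∀ u ∉ B, 2 * (#{w ∈ out u | c₀ w = c₀ u} + #{w ∈ out u | w ∈ B ∧ c₀ w ≠ c₀ u}) ≤
      #(out u)) :
    ∃ c : V → Fin 3, ∀ v, 2 * #{w ∈ out v | c w = c v} ≤ #(out v) := by
  obtain ⟨c, hcc₀, hc⟩ :=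
    exists_quota_colouring_extension (fun v => le_refl #(out v)) hloop hB c₀
  refine ⟨c, fun v => ?_⟩
  by_cases hv : v ∈ B
  · exact hc v hv
  refine le_trans (Nat.mul_le_mul_left 2 ?_) (hc₀ v hv)
  refine (Finset.card_le_card fun w hw => ?_).trans (Finset.card_union_le _ _)
  simp only [Finset.mem_filter, Finset.mem_union] at hw ⊢
  by_cases hwB : w ∈ B
  · tauto
  · rw [hcc₀ v hv, hcc₀ w hwB] at hw
    exact Or.inl hw

/-- Take a largest set between `B₀` and size `m` all of whose new vertices are active. -/
lemma exists_superset_forall_not_active [Finite V] {active : V → Finset V → Prop}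
    (hmono : ∀ u, Monotone (active u)) {B₀ : Finset V} {m : ℕ} (hB₀ : #B₀ ≤ m)
    (hsmall : ∀ S, B₀ ⊆ S → #S = m → ∃ u ∈ S \ B₀, ¬ active u S) :
    ∃ B, B₀ ⊆ B ∧ #B < m ∧ ∀ u ∉ B, ¬ active u B := by
  obtain ⟨B, ⟨hB₀B, hBm, hact⟩, hmax⟩ := Set.exists_max_image
    {B : Finset V | B₀ ⊆ B ∧ #B ≤ m ∧ ∀ u ∈ B \ B₀, active u B} Finset.card (Set.toFinite _)
    ⟨B₀, subset_rfl, hB₀, by simp⟩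
  have hlt : #B < m := hBm.lt_of_ne fun h =>
    have ⟨u, hu, hu'⟩ := hsmall B hB₀B h
    hu' (hact u hu)
  refine ⟨B, hB₀B, hlt, fun u hu hu_act => ?_⟩
  have hle := hmax (insert u B) ⟨hB₀B.trans (B.subset_insert u),
    by rw [Finset.card_insert_of_notMem hu]; omega, fun v hv => hmono v (B.subset_insert u) ?_⟩
  · rw [Finset.card_insert_of_notMem hu] at hle
    omega
  · obtain ⟨hv, hv₀⟩ := Finset.mem_sdiff.1 hv
    obtain rfl | hv := Finset.mem_insert.1 hv
    exacts [hu_act, hact v (Finset.mem_sdiff.2 ⟨hv, hv₀⟩)]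

end Peeling

section Digraph

variable {n : ℕ}

/-- The out-neighbourhood of a vertex of the digraph encoded by `A`. -/
def outNbrs (A : Fin n → Fin n → Bool) (v : Fin n) : Finset (Fin n) :=
  {w | v ≠ w ∧ A v w = true}

lemma mem_outNbrs {A : Fin n → Fin n → Bool} {v w : Fin n} :
    w ∈ outNbrs A v ↔ v ≠ w ∧ A v w = true := by
  simp [outNbrs]

lemma majorityAt_iff {α : Type*} [DecidableEq α] {A : Fin n → Fin n → Bool} {c : Fin n → α}
    {v : Fin n} :
    MajorityAt A c v ↔ 2 * #{w ∈ outNbrs A v | c w = c v} ≤ #(outNbrs A v) := by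
  simp [MajorityAt, DiAdj, ← Set.ncard_coe_finset, outNbrs]

/-- The property of the theorem, as a predicate on adjacency matrices. -/
def HasMajorityThreeColouring (A : Fin n → Fin n → Bool) : Prop :=
  ∃ c : Fin n → Fin 3, ∀ v, MajorityAt A c v

/-- There is no core on at most `m` vertices. -/
def CoreFree (A : Fin n → Fin n → Bool) (m : ℕ) : Prop :=
  ∀ S, IsCore (outNbrs A) S → m < #S

lemma CoreFree.hasMajorityThreeColouring_of_forall_notMem {A : Fin n → Fin n → Bool}
    {B : Finset (Fin n)} (hA : CoreFree A #B) (c₀ : Fin n → Fin 3)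
    (hc₀ : ∀ u ∉ B, 2 * (#{w ∈ outNbrs A u | c₀ w = c₀ u} +
      #{w ∈ outNbrs A u | w ∈ B ∧ c₀ w ≠ c₀ u}) ≤ #(outNbrs A u)) :
    HasMajorityThreeColouring A := by
  simp only [HasMajorityThreeColouring, majorityAt_iff]
  exact exists_majority_colouring_of_forall_not_isCore (by simp [mem_outNbrs])
    (fun S hS hcore => (hA S hcore).not_ge (Finset.card_le_card hS)) c₀ hc₀

lemma CoreFree.hasMajorityThreeColouring {A : Fin n → Fin n → Bool} (hA : CoreFree A n) :
    HasMajorityThreeColouring A :=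
  CoreFree.hasMajorityThreeColouring_of_forall_notMem (B := Finset.univ) (by simpa using hA) 0
    (by simp)

end Digraph

lemma measureReal_le_integral_of_one_le {Ω : Type*} [MeasurableSpace Ω] {μ : Measure Ω}
    [IsFiniteMeasure μ] {f : Ω → ℝ} (hf : Integrable f μ) (hf₀ : ∀ ω, 0 ≤ f ω) {s : Set Ω}
    (hs : ∀ ω ∈ s, 1 ≤ f ω) : μ.real s ≤ ∫ ω, f ω ∂μ :=
  calc μ.real s ≤ μ.real {ω | 1 ≤ f ω} := measureReal_mono hs (measure_ne_top μ _)
    _ ≤ ∫ ω, f ω ∂μ := by simpa using mul_meas_ge_le_integral_of_nonneg (.of_forall hf₀) hf 1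

section Bernoulli

variable {ι : Type*} [Fintype ι] {p : unitInterval}

lemma measureReal_pi_forall_mem {Ω : ι → Type*} [∀ i, MeasurableSpace (Ω i)]
    (μ : ∀ i, Measure (Ω i)) [∀ i, IsProbabilityMeasure (μ i)] (S : Finset ι)
    (R : ∀ i, Set (Ω i)) :
    (Measure.pi μ).real {A | ∀ i ∈ S, A i ∈ R i} = ∏ i ∈ S, (μ i).real (R i) := by
  classical
  have hpi : {A : ∀ i, Ω i | ∀ i ∈ S, A i ∈ R i} =
      Set.univ.pi fun i => if i ∈ S then R i else Set.univ := by
    ext A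
    simp only [Set.mem_ofPred_eq, Set.mem_univ_pi]
    refine forall_congr' fun i => ?_
    split_ifs with hi <;> simp [hi]
  rw [hpi, measureReal_def, Measure.pi_pi, ENNReal.toReal_prod, ← Finset.prod_subset S.subset_univ]
  · exact Finset.prod_congr rfl fun i hi => by simp [hi, measureReal_def]
  · exact fun i _ hi => by simp [hi]

lemma bernoulliM_real_true : (bernoulliM p).real {true} = p := by
  simp [bernoulliM, measureReal_def, p.2.1]

lemma bernoulliM_real_false : (bernoulliM p).real {false} = 1 - p := by
  simp [bernoulliM, measureReal_def, p.2.2]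

instance : IsProbabilityMeasure (bernoulliM p) where
  measure_univ := by
    simp [bernoulliM, ← ENNReal.coe_add, ← Real.toNNReal_add p.2.1 (sub_nonneg.2 p.2.2)]

lemma integral_bernoulliM (f : Bool → ℝ) :
    ∫ b, f b ∂bernoulliM p = p * f true + (1 - p) * f false := by
  simp [integral_fintype .of_finite, bernoulliM_real_true, bernoulliM_real_false]

/-- The law of a row of the adjacency matrix: independent Bernoulli entries indexed by `ι`. -/
noncomputable def bernoulliRow (ι : Type*) [Fintype ι] (p : ℝ) : Measure (ι → Bool) :=
  Measure.pi fun _ => bernoulliM p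

instance : IsProbabilityMeasure (bernoulliRow ι p) :=
  inferInstanceAs (IsProbabilityMeasure (Measure.pi _))

lemma bernoulliRow_real_eq_true_eq_false {Q R : Finset ι} (hQR : Disjoint Q R) :
    (bernoulliRow ι p).real {r | (∀ x ∈ Q, r x = true) ∧ ∀ x ∈ R, r x = false} =
      p ^ #Q * (1 - p) ^ #R := by
  classical
  have hset : {r : ι → Bool | (∀ x ∈ Q, r x = true) ∧ ∀ x ∈ R, r x = false} =
      {r | ∀ x ∈ Q ∪ R, r x ∈ ({decide (x ∈ Q)} : Set Bool)} := by
    ext r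
    have hR : ∀ x ∈ R, x ∉ Q := fun x hx hx' => Finset.disjoint_left.1 hQR hx' hx
    simp +contextual [or_imp, forall_and, hR]
  rw [hset, bernoulliRow, measureReal_pi_forall_mem, Finset.prod_union hQR,
    Finset.prod_congr rfl (g := fun _ => (p : ℝ)),
    Finset.prod_congr (s₁ := R) rfl (g := fun _ => (1 - p : ℝ)),
    Finset.prod_const, Finset.prod_const]
  · exact fun x hx => by simp [Finset.disjoint_right.1 hQR hx, bernoulliM_real_false]
  · exact fun x hx => by simp [hx, bernoulliM_real_true]

lemma bernoulliRow_real_forall_eq_true (Q : Finset ι) :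
    (bernoulliRow ι p).real {r | ∀ x ∈ Q, r x = true} = p ^ #Q := by
  simpa using bernoulliRow_real_eq_true_eq_false (p := p) (Finset.disjoint_empty_right Q)

lemma bernoulliRow_real_card_eq (T : Finset ι) (k : ℕ) :
    (bernoulliRow ι p).real {r | #{x ∈ T | r x = true} = k} =
      (#T).choose k * (p ^ k * (1 - p) ^ (#T - k)) := by
  classical
  have hset : {r : ι → Bool | #{x ∈ T | r x = true} = k} = ⋃ Q ∈ T.powersetCard k,
      {r | (∀ x ∈ Q, r x = true) ∧ ∀ x ∈ T \ Q, r x = false} := by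
    ext r
    simp only [Set.mem_ofPred_eq, Set.mem_iUnion, Finset.mem_powersetCard, exists_prop]
    refine ⟨fun h => ⟨_, ⟨T.filter_subset _, h⟩, by simp, by simp; grind⟩, ?_⟩
    rintro ⟨Q, ⟨hQT, rfl⟩, hQ, hTQ⟩
    congr 1
    ext x
    have := @hQT x
    have := hQ x
    have := hTQ x
    grind
  rw [hset, measureReal_biUnion_finset, Finset.sum_congr rfl fun Q hQ => ?_, Finset.sum_const,
    Finset.card_powersetCard, nsmul_eq_mul]
  · obtain ⟨hQT, hQ⟩ := Finset.mem_powersetCard.1 hQ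
    rw [bernoulliRow_real_eq_true_eq_false Finset.disjoint_sdiff, Finset.card_sdiff_of_subset hQT,
      hQ]
  · intro Q hQ Q' hQ' hne
    rw [Function.onFun, Set.disjoint_left]
    rintro r ⟨hr, hr'⟩ ⟨hs, hs'⟩
    have hQT := (Finset.mem_powersetCard.1 hQ).1
    have hQT' := (Finset.mem_powersetCard.1 hQ').1
    refine hne (Finset.ext fun x => ?_)
    have := hr x; have := hr' x; have := hs x; have := hs' x; have := @hQT x; have := @hQT' x
    grind
  · exact fun _ _ => .of_discrete

lemma bernoulliRow_real_two_le_card (T : Finset ι) :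
    (bernoulliRow ι p).real {r | 2 ≤ #{x ∈ T | r x = true}} =
      1 - (1 - p) ^ #T - #T * p * (1 - p) ^ (#T - 1) := by
  have hset : {r : ι → Bool | 2 ≤ #{x ∈ T | r x = true}}ᶜ =
      {r | #{x ∈ T | r x = true} = 0} ∪ {r | #{x ∈ T | r x = true} = 1} := by
    ext r
    simp only [Set.mem_compl_iff, Set.mem_ofPred_eq, Set.mem_union]
    omega
  have hcompl := probReal_compl_eq_one_sub (μ := bernoulliRow ι p)
    (.of_discrete (s := {r | 2 ≤ #{x ∈ T | r x = true}}))
  rw [hset, measureReal_union _ .of_discrete, bernoulliRow_real_card_eq,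
    bernoulliRow_real_card_eq] at hcompl
  · simp only [Nat.choose_zero_right, Nat.choose_one_right, Nat.cast_one, pow_zero, pow_one,
      one_mul, Nat.sub_zero] at hcompl
    linarith
  · exact Set.disjoint_left.2 fun r (h : _ = 0) (h' : _ = 1) => by omega

lemma bernoulliRow_real_two_le_card_le (T : Finset ι) :
    (bernoulliRow ι p).real {r | 2 ≤ #{x ∈ T | r x = true}} ≤ (#T * p) ^ 2 / 2 := by
  classical
  have hsub : {r : ι → Bool | 2 ≤ #{x ∈ T | r x = true}} ⊆
      ⋃ Q ∈ T.powersetCard 2, {r | ∀ x ∈ Q, r x = true} := fun r hr => by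
    obtain ⟨Q, hQ, hQ2⟩ := Finset.exists_subset_card_eq hr
    simp only [Set.mem_iUnion, Finset.mem_powersetCard, exists_prop]
    exact ⟨Q, ⟨hQ.trans (T.filter_subset _), hQ2⟩, fun x hx => (Finset.mem_filter.1 (hQ hx)).2⟩
  calc (bernoulliRow ι p).real {r | 2 ≤ #{x ∈ T | r x = true}}
      ≤ ∑ Q ∈ T.powersetCard 2, (bernoulliRow ι p).real {r | ∀ x ∈ Q, r x = true} :=
        (measureReal_mono hsub (measure_ne_top _ _)).trans (measureReal_biUnion_finset_le _ _)
    _ = (#T).choose 2 * (p : ℝ) ^ 2 := by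
        rw [Finset.sum_congr rfl fun Q hQ => by
          rw [bernoulliRow_real_forall_eq_true, (Finset.mem_powersetCard.1 hQ).2]]
        simp
    _ ≤ (#T : ℝ) ^ 2 / 2 * (p : ℝ) ^ 2 := by
        gcongr
        simpa using Nat.choose_le_pow_div (α := ℝ) 2 #T
    _ = (#T * p) ^ 2 / 2 := by ring

end Bernoulli

section Cores

variable {n : ℕ} {p : unitInterval}

instance : IsProbabilityMeasure (diMeasure n p) :=
  inferInstanceAs (IsProbabilityMeasure (Measure.pi fun _ => bernoulliRow (Fin n) p))

lemma diMeasure_real_forall_row (S : Finset (Fin n)) (R : Fin n → Set (Fin n → Bool)) :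
    (diMeasure n p).real {A | ∀ v ∈ S, A v ∈ R v} =
      ∏ v ∈ S, (bernoulliRow (Fin n) p).real (R v) :=
  measureReal_pi_forall_mem (fun _ => bernoulliRow (Fin n) p) S R

lemma diMeasure_real_row (v : Fin n) (R : Set (Fin n → Bool)) :
    (diMeasure n p).real {A | A v ∈ R} = (bernoulliRow (Fin n) p).real R :=
  (measurePreserving_eval (fun _ => bernoulliRow (Fin n) p) v).measureReal_preimage
    MeasurableSet.of_discrete.nullMeasurableSet

lemma measurePreserving_transpose :
    MeasurePreserving (fun A v w => A w v) (diMeasure n p) (diMeasure n p) where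
  measurable := .of_discrete
  map_eq := by
    refine Measure.ext_of_singleton fun A => ?_
    have hpre : (fun (B : Fin n → Fin n → Bool) v w => B w v) ⁻¹' {A} = {fun v w => A w v} := by
      ext B
      simp only [Set.mem_preimage, Set.mem_singleton_iff, funext_iff]
      exact forall_comm
    rw [Measure.map_apply .of_discrete .of_discrete, hpre]
    simp only [diMeasure, Measure.pi_singleton]
    exact Finset.prod_comm

/-- The probability `P(Bin(t, p) ≥ 2)`. -/
noncomputable def binomialTwoLe (t : ℕ) (p : ℝ) : ℝ :=
  1 - (1 - p) ^ t - t * p * (1 - p) ^ (t - 1)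

lemma binomialTwoLe_nonneg (t : ℕ) : 0 ≤ binomialTwoLe t p := by
  simpa only [bernoulliRow_real_two_le_card, Finset.card_univ, Fintype.card_fin,
    binomialTwoLe] using
    measureReal_nonneg (μ := bernoulliRow (Fin t) p) (s := {r | 2 ≤ #{x | r x = true}})

lemma binomialTwoLe_le (t : ℕ) : binomialTwoLe t p ≤ (t * p) ^ 2 / 2 := by
  simpa [binomialTwoLe, bernoulliRow_real_two_le_card] using
    bernoulliRow_real_two_le_card_le (p := p) (.univ : Finset (Fin t))

/-- The in-neighbourhoods of distinct vertices are independent. -/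
lemma diMeasure_real_isCore_le (S : Finset (Fin n)) :
    (diMeasure n p).real {A | IsCore (outNbrs A) S} ≤ binomialTwoLe (#S - 1) p ^ #S := by
  have hsub : {A : Fin n → Fin n → Bool | IsCore (outNbrs A) S} ⊆ (fun A v w => A w v) ⁻¹'
      {A | ∀ x ∈ S, A x ∈ {r : Fin n → Bool | 2 ≤ #{u ∈ S.erase x | r u = true}}} := by
    intro A hA x hx
    refine (hA.2 x hx).trans_eq (congrArg Finset.card ?_)
    ext u
    simp only [Finset.mem_filter, mem_outNbrs, Finset.mem_erase]
    tauto
  calc (diMeasure n p).real {A | IsCore (outNbrs A) S}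
      ≤ (diMeasure n p).real
          {A | ∀ x ∈ S, A x ∈ {r : Fin n → Bool | 2 ≤ #{u ∈ S.erase x | r u = true}}} := by
        have hpres := measurePreserving_transpose (n := n) (p := p)
        exact (measureReal_mono hsub).trans_eq
          (hpres.measureReal_preimage MeasurableSet.of_discrete.nullMeasurableSet)
    _ = binomialTwoLe (#S - 1) p ^ #S := by
        rw [diMeasure_real_forall_row, Finset.prod_congr rfl, Finset.prod_const]
        exact fun x hx => by
          rw [bernoulliRow_real_two_le_card, Finset.card_erase_of_mem hx, binomialTwoLe]

lemma diMeasure_real_not_coreFree_le (m : ℕ) :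
    (diMeasure n p).real {A | ¬ CoreFree A m} ≤
      ∑ s ∈ Finset.range m, n.choose (s + 1) * binomialTwoLe s p ^ (s + 1) := by
  have hsub : {A : Fin n → Fin n → Bool | ¬ CoreFree A m} ⊆
      ⋃ s ∈ Finset.range m, ⋃ S ∈ Finset.univ.powersetCard (s + 1), {A | IsCore (outNbrs A) S} := by
    intro A hA
    simp only [CoreFree, Set.mem_ofPred_eq, not_forall, not_lt] at hA
    obtain ⟨S, hS, hSm⟩ := hA
    have hpos := Finset.card_pos.2 hS.1
    simp only [Set.mem_iUnion, Finset.mem_powersetCard_univ, Finset.mem_range]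
    exact ⟨#S - 1, by omega, S, by omega, hS⟩
  refine (measureReal_mono hsub (measure_ne_top _ _)).trans <|
    (measureReal_biUnion_finset_le _ _).trans <| Finset.sum_le_sum fun s _ => ?_
  calc (diMeasure n p).real (⋃ S ∈ Finset.univ.powersetCard (s + 1), {A | IsCore (outNbrs A) S})
      ≤ ∑ S ∈ Finset.univ.powersetCard (s + 1), binomialTwoLe s p ^ (s + 1) :=
        (measureReal_biUnion_finset_le _ _).trans <| Finset.sum_le_sum fun S hS => by
          simpa [Finset.mem_powersetCard_univ.1 hS] using diMeasure_real_isCore_le (p := p) S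
    _ = n.choose (s + 1) * binomialTwoLe s p ^ (s + 1) := by simp

end Cores

section Dense

variable {n : ℕ} {p : unitInterval}

lemma integral_bernoulliRow_prod_ite_le {ι : Type*} [Fintype ι] {x : ι → ℝ} (hx : ∀ w, 0 ≤ x w) :
    ∫ r, ∏ w, (if r w = true then x w else 1) ∂bernoulliRow ι p ≤
      Real.exp (p * ∑ w, (x w - 1)) := by
  rw [bernoulliRow, integral_fintype_prod_eq_prod (f := fun w b => if b = true then x w else 1),
    Finset.mul_sum, Real.exp_sum]
  refine Finset.prod_le_prod (fun w _ => integral_nonneg fun b => ?_) fun w _ => ?_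
  · split_ifs
    exacts [hx w, zero_le_one]
  · rw [integral_bernoulliM]
    simp only [if_true, Bool.false_eq_true, if_false, mul_one]
    linarith [Real.add_one_le_exp (p * (x w - 1))]

/-- Exponential Markov inequality with weights `x` on `S` and `x⁻¹` on `T`. -/
lemma bernoulliRow_real_card_lt_card_le {ι : Type*} [Fintype ι] {S T : Finset ι}
    (hST : Disjoint S T) {x : ℝ} (hx : 1 ≤ x) :
    (bernoulliRow ι p).real {r | #{w ∈ T | r w = true} < #{w ∈ S | r w = true}} ≤
      Real.exp (p * (#S * (x - 1) + #T * (x⁻¹ - 1))) := by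
  classical
  have hx₀ : 0 < x := zero_lt_one.trans_le hx
  let y (w : ι) : ℝ := (if w ∈ S then x else 1) * if w ∈ T then x⁻¹ else 1
  have hy (w : ι) : 0 ≤ y w := by positivity
  have hprod (r : ι → Bool) : ∏ w, (if r w = true then y w else 1) =
      x ^ #{w ∈ S | r w = true} * x⁻¹ ^ #{w ∈ T | r w = true} := by
    have hfilter (S : Finset ι) : ({w | r w = true ∧ w ∈ S} : Finset ι) = {w ∈ S | r w = true} := by
      ext; simp [and_comm]
    simp only [y, ← Finset.prod_filter, Finset.prod_mul_distrib, Finset.prod_const,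
      Finset.filter_filter, hfilter]
  have hsum : ∑ w, (y w - 1) = #S * (x - 1) + #T * (x⁻¹ - 1) := by
    have hsplit (w : ι) :
        y w - 1 = (if w ∈ S then x - 1 else 0) + if w ∈ T then x⁻¹ - 1 else 0 := by
      have := @Finset.disjoint_left.1 hST w
      by_cases hS : w ∈ S <;> by_cases hT : w ∈ T <;> simp_all [y]
    simp [hsplit, Finset.sum_add_distrib, Finset.sum_ite_mem, mul_sub]
  rw [← hsum]
  refine (measureReal_le_integral_of_one_le .of_finite (fun r => ?_) fun r hr => ?_).trans
    (integral_bernoulliRow_prod_ite_le hy)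
  · exact Finset.prod_nonneg fun w _ => by split_ifs; exacts [hy w, zero_le_one]
  · rw [hprod, inv_pow, ← div_eq_mul_inv, one_le_div (by positivity)]
    exact pow_le_pow_right₀ hx (le_of_lt hr)

lemma exists_balanced_colouring (n : ℕ) :
    ∃ c : Fin n → Fin 3, ∀ v, 3 * #{w | w ≠ v ∧ c w = c v} ≤ n - 1 := by
  refine ⟨fun w => Fin.ofNat 3 w, fun v => ?_⟩
  have hcount : #{w : Fin n | w.val ≡ v [MOD 3]} = n.count (· ≡ v [MOD 3]) := by
    rw [Nat.count_eq_card_filter_range, Finset.card_filter, Finset.card_filter]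
    exact Fin.sum_univ_eq_sum_range (fun i => if i ≡ v [MOD 3] then 1 else 0) n
  have herase : #{w : Fin n | w ≠ v ∧ Fin.ofNat 3 w.val = Fin.ofNat 3 v.val} + 1 =
      #{w : Fin n | w.val ≡ v [MOD 3]} := by
    rw [← Finset.card_erase_add_one (a := v) (s := {w : Fin n | w.val ≡ v [MOD 3]})
      (by simp [Nat.ModEq.refl])]
    congr 2
    ext w
    simp only [Finset.mem_erase, Finset.mem_filter_univ]
    simp [Fin.ext_iff, Nat.ModEq]
  have hcard := Nat.count_modEq_card n (r := 3) (by norm_num) v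
  dsimp only
  split_ifs at hcard <;> omega

lemma bernoulliRow_real_card_ne_lt_card_eq_le {α : Type*} [DecidableEq α] {c : Fin n → α}
    {v : Fin n} (hc : 3 * #{w | w ≠ v ∧ c w = c v} ≤ n - 1) :
    (bernoulliRow (Fin n) p).real
      {r | #{w ∈ {w | w ≠ v ∧ c w ≠ c v} | r w = true} <
        #{w ∈ {w | w ≠ v ∧ c w = c v} | r w = true}} ≤ Real.exp (-(2 / 35) * p * (n - 1)) := by
  refine (bernoulliRow_real_card_lt_card_le (x := 7 / 5) ?_ (by norm_num)).trans ?_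
  · exact Finset.disjoint_left.2 fun w => by simp +contextual
  rw [mul_comm (-(2 / 35) : ℝ), mul_assoc, Real.exp_le_exp]
  refine mul_le_mul_of_nonneg_left ?_ p.2.1
  have hcard : #{w : Fin n | w ≠ v ∧ c w = c v} + #{w : Fin n | w ≠ v ∧ c w ≠ c v} = n - 1 := by
    simp only [← Finset.filter_filter, Finset.card_filter_add_card_filter_not]
    simp [Finset.filter_ne']
  have hn : 1 ≤ n := v.pos
  have hcard' := congrArg (Nat.cast (R := ℝ)) hcard
  have hc' : (3 * #{w : Fin n | w ≠ v ∧ c w = c v} : ℝ) ≤ (n - 1 : ℕ) := mod_cast hc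
  push_cast [hn] at hcard' hc'
  linarith

lemma diMeasure_real_not_hasMajorityThreeColouring_le_mul_exp :
    (diMeasure n p).real {A | ¬ HasMajorityThreeColouring A} ≤
      n * Real.exp (-(2 / 35) * p * (n - 1)) := by
  obtain ⟨c, hc⟩ := exists_balanced_colouring n
  let R (v : Fin n) : Set (Fin n → Bool) :=
    {r | #{w ∈ {w | w ≠ v ∧ c w ≠ c v} | r w = true} < #{w ∈ {w | w ≠ v ∧ c w = c v} | r w = true}}
  have hsub : {A : Fin n → Fin n → Bool | ¬ HasMajorityThreeColouring A} ⊆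
      ⋃ v ∈ Finset.univ, {A | A v ∈ R v} := by
    intro A hA
    obtain ⟨v, hv⟩ := not_forall.1 fun h => hA ⟨c, h⟩
    rw [majorityAt_iff, not_le] at hv
    have hsame : {w ∈ outNbrs A v | c w = c v} =
        ({w ∈ {w | w ≠ v ∧ c w = c v} | A v w = true} : Finset (Fin n)) := by
      ext w; simp only [Finset.mem_filter, mem_outNbrs]; grind
    have hother : {w ∈ outNbrs A v | ¬ c w = c v} =
        ({w ∈ {w | w ≠ v ∧ c w ≠ c v} | A v w = true} : Finset (Fin n)) := by
      ext w; simp only [Finset.mem_filter, mem_outNbrs]; grind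
    have hsplit := Finset.card_filter_add_card_filter_not (s := outNbrs A v) (c · = c v)
    simp only [Set.mem_iUnion]
    refine ⟨v, Finset.mem_univ v, ?_⟩
    rw [hsame, hother] at hsplit
    rw [hsame] at hv
    simp only [R, Set.mem_ofPred_eq]
    omega
  calc (diMeasure n p).real {A | ¬ HasMajorityThreeColouring A}
      ≤ ∑ v, (diMeasure n p).real {A | A v ∈ R v} :=
        (measureReal_mono hsub (measure_ne_top _ _)).trans (measureReal_biUnion_finset_le _ _)
    _ ≤ ∑ v : Fin n, Real.exp (-(2 / 35) * p * (n - 1)) :=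
        Finset.sum_le_sum fun v _ =>
          (diMeasure_real_row v _).trans_le (bernoulliRow_real_card_ne_lt_card_eq_le (hc v))
    _ = n * Real.exp (-(2 / 35) * p * (n - 1)) := by simp

theorem eventually_diMeasure_real_not_hasMajorityThreeColouring_le_of_dense {ε : ℝ}
    (hε : 0 < ε) : ∀ᶠ n : ℕ in atTop, ∀ p : unitInterval,
    40 * Real.log n ≤ n * p →
      (diMeasure n p).real {A | ¬ HasMajorityThreeColouring A} ≤ ε := by
  filter_upwards [tendsto_one_div_atTop_nhds_zero_nat.eventually_le_const hε,
    eventually_ge_atTop 8] with n hn hn_large p hp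
  have hn_pos : (8 : ℝ) ≤ n := mod_cast hn_large
  calc (diMeasure n p).real {A | ¬ HasMajorityThreeColouring A}
      ≤ n * Real.exp (-(2 / 35) * p * (n - 1)) :=
        diMeasure_real_not_hasMajorityThreeColouring_le_mul_exp
    _ ≤ n * Real.exp (-Real.log n - Real.log n) := by
        gcongr
        nlinarith [p.2.1]
    _ = 1 / n := by
        rw [Real.exp_sub, Real.exp_neg, Real.exp_log (by linarith)]
        field_simp
    _ ≤ ε := hn

end Dense

section Sparse

open Real

lemma negMulLog_one_sub_le {x : ℝ} (hx₀ : 0 ≤ x) (hx₁ : x ≤ 1) :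
    negMulLog (1 - x) ≤ x - x ^ 2 / 2 - x ^ 3 / 6 := by
  have hderiv {y : ℝ} (hy : y < 1) :
      HasDerivAt (fun y => y - y ^ 2 / 2 - y ^ 3 / 6 - negMulLog (1 - y))
        (-log (1 - y) - (y + y ^ 2 / 2)) y := by
    have hlog := (hasDerivAt_negMulLog (sub_pos.2 hy).ne').comp y ((hasDerivAt_id y).const_sub 1)
    refine ((((hasDerivAt_id y).sub ((hasDerivAt_pow 2 y).div_const 2)).sub
      ((hasDerivAt_pow 3 y).div_const 6)).sub hlog).congr_deriv ?_
    ring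
  have hmono : MonotoneOn (fun y => y - y ^ 2 / 2 - y ^ 3 / 6 - negMulLog (1 - y))
      (Set.Icc 0 1) := by
    refine monotoneOn_of_deriv_nonneg (convex_Icc 0 1)
      (Continuous.continuousOn (by fun_prop)) (fun y hy => ?_) fun y hy => ?_ <;>
    rw [interior_Icc] at hy
    · exact (hderiv hy.2).differentiableAt.differentiableWithinAt
    · have hsum := sum_le_hasSum (Finset.range 2) (fun i _ => by have := hy.1.le; positivity)
        (hasSum_pow_div_log_of_abs_lt_one (abs_lt.2 ⟨by linarith [hy.1], hy.2⟩))
      rw [(hderiv hy.2).deriv]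
      norm_num [Finset.sum_range_succ] at hsum ⊢
      exact hsum
  simpa using hmono (Set.left_mem_Icc.2 zero_le_one) ⟨hx₀, hx₁⟩ hx₀

lemma choose_mul_div_pow_le {n s : ℕ} (hsn : s ≤ n) :
    n.choose s * (s / n : ℝ) ^ s ≤ exp (1 - s / n / 2 - (s / n) ^ 2 / 6) ^ s := by
  obtain rfl | hn := n.eq_zero_or_pos
  · simp [Nat.le_zero.1 hsn]
  set x : ℝ := s / n with hx
  have hnx : n * x = s := by rw [hx]; field_simp
  have hx₀ : 0 ≤ x := by positivity
  have hx₁ : x ≤ 1 := div_le_one_of_le₀ (mod_cast hsn) n.cast_nonneg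
  have hexp : exp (-(n * negMulLog (1 - x))) ≤ (1 - x) ^ (n - s) := by
    obtain rfl | hlt := hsn.eq_or_lt
    · simp [hx, hn.ne']
    have hx_lt : x < 1 := (div_lt_one (mod_cast hn)).2 (mod_cast hlt)
    rw [← exp_log (sub_pos.2 hx_lt), ← exp_nat_mul, exp_log (sub_pos.2 hx_lt), exp_le_exp,
      Nat.cast_sub hsn, ← hnx, negMulLog]
    exact le_of_eq (by ring)
  have hbinom : n.choose s * x ^ s * (1 - x) ^ (n - s) ≤ 1 := by
    have h := Finset.single_le_sum (f := fun m => x ^ m * (1 - x) ^ (n - m) * (n.choose m : ℝ))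
      (fun m _ => by have := sub_nonneg.2 hx₁; positivity)
      (Finset.mem_range.2 (Nat.lt_succ_of_le hsn))
    rw [← add_pow] at h
    simpa [mul_comm, mul_left_comm, mul_assoc] using h
  calc n.choose s * x ^ s ≤ exp (n * negMulLog (1 - x)) := by
        rw [← mul_one (exp _), ← inv_mul_le_iff₀ (exp_pos _), ← exp_neg, mul_comm]
        exact (mul_le_mul_of_nonneg_left hexp (by positivity)).trans hbinom
    _ ≤ exp (n * (x - x ^ 2 / 2 - x ^ 3 / 6)) := by gcongr; exact negMulLog_one_sub_le hx₀ hx₁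
    _ = exp (1 - x / 2 - x ^ 2 / 6) ^ s := by rw [← exp_nat_mul, ← hnx]; ring_nf

lemma one_sub_exp_neg_mul_one_add_le {y : ℝ} (hy : 0 ≤ y) :
    1 - exp (-y) * (1 + y) ≤ y ^ 2 / 2 * exp (-2 * y / 3 + y ^ 2 / 24) := by
  let f (y : ℝ) : ℝ := y ^ 2 / 2 * exp (-2 * y / 3 + y ^ 2 / 24) + exp (-y) * (1 + y)
  have hderiv (x : ℝ) : HasDerivAt f
      (x * (exp (-2 * x / 3 + x ^ 2 / 24) * (1 - x / 3 + x ^ 2 / 24) - exp (-x))) x := by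
    have hexp : HasDerivAt (fun x => exp (-2 * x / 3 + x ^ 2 / 24))
        (exp (-2 * x / 3 + x ^ 2 / 24) * (-2 / 3 + x / 12)) x :=
      ((((hasDerivAt_id x).const_mul (-2)).div_const 3).add
        ((hasDerivAt_pow 2 x).div_const 24)).exp.congr_deriv (by simp; ring)
    refine ((((hasDerivAt_pow 2 x).div_const 2).mul hexp).add
      ((hasDerivAt_neg x).exp.mul ((hasDerivAt_id x).const_add 1))).congr_deriv ?_
    simp only [id]
    ring
  have hderiv_nonneg {x : ℝ} (hx : 0 ≤ x) :
      exp (-x) ≤ exp (-2 * x / 3 + x ^ 2 / 24) * (1 - x / 3 + x ^ 2 / 24) := by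
    have hpoly : 1 ≤ (1 + (x / 3 + x ^ 2 / 24) + (x / 3 + x ^ 2 / 24) ^ 2 / 2) *
        (1 - x / 3 + x ^ 2 / 24) := by
      nlinarith [mul_nonneg (sq_nonneg x) (sq_nonneg (x - 8)), pow_nonneg hx 4, pow_nonneg hx 5,
        pow_nonneg hx 6, pow_nonneg hx 3]
    have hq : 0 ≤ 1 - x / 3 + x ^ 2 / 24 := by nlinarith [sq_nonneg (x - 4)]
    rw [show -2 * x / 3 + x ^ 2 / 24 = -x + (x / 3 + x ^ 2 / 24) by ring, exp_add, mul_assoc]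
    refine le_mul_of_one_le_right (exp_pos _).le (hpoly.trans ?_)
    gcongr
    exact quadratic_le_exp_of_nonneg (by positivity)
  have hmono : MonotoneOn f (Set.Ici 0) := by
    refine monotoneOn_of_deriv_nonneg (convex_Ici 0)
      (fun x _ => (hderiv x).continuousAt.continuousWithinAt)
      (fun x _ => (hderiv x).differentiableAt.differentiableWithinAt) fun x hx => ?_
    rw [interior_Ici] at hx
    rw [(hderiv x).deriv]
    exact mul_nonneg hx.le (sub_nonneg.2 (hderiv_nonneg hx.le))
  have h : f 0 ≤ f y := hmono Set.self_mem_Ici hy hy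
  have h₀ : f 0 = 1 := by simp [f]
  rw [h₀] at h
  exact sub_le_iff_le_add.2 h

lemma binomialTwoLe_le_poisson {p : unitInterval} {t : ℕ} {y : ℝ} (hp : (p : ℝ) < 1)
    (hy : t * (p : ℝ) ≤ y * (1 - p)) : binomialTwoLe t p ≤ 1 - exp (-y) * (1 + y) := by
  have hq : 0 < 1 - (p : ℝ) := sub_pos.2 hp
  set z : ℝ := t * p / (1 - p) with hz
  have hz₀ : 0 ≤ z := div_nonneg (mul_nonneg t.cast_nonneg p.2.1) hq.le
  have hzy : z ≤ y := (div_le_iff₀ hq).2 hy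
  have hbinom : (1 - p : ℝ) ^ t + t * p * (1 - p) ^ (t - 1) = (1 - p) ^ t * (1 + z) := by
    rcases t with _ | t
    · simp [hz]
    · rw [hz, Nat.add_sub_cancel, pow_succ]
      field_simp
  have hexp : exp (-z) ≤ (1 - p : ℝ) ^ t := by
    rw [← exp_log hq, ← exp_nat_mul, exp_le_exp]
    calc -z = t * (1 - (1 - p : ℝ)⁻¹) := by rw [hz]; field_simp; ring
      _ ≤ t * log (1 - p) := by gcongr; exact one_sub_inv_le_log_of_pos hq
  have hanti : exp (-y) * (1 + y) ≤ exp (-z) * (1 + z) := by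
    have hy_le : 1 + y ≤ exp (y - z) * (1 + z) := by
      nlinarith [add_one_le_exp (y - z)]
    calc exp (-y) * (1 + y) ≤ exp (-y) * (exp (y - z) * (1 + z)) := by gcongr
      _ = exp (-z) * (1 + z) := by rw [← mul_assoc, ← exp_add]; ring_nf
  have hmul : exp (-z) * (1 + z) ≤ (1 - p) ^ t * (1 + z) := by gcongr
  rw [binomialTwoLe]
  linarith

/-- A bound for the `s`-th root of the expected number of cores on `s = x * n` vertices in a random
digraph of average degree about `d`. -/
noncomputable def coreRate (d x : ℝ) : ℝ :=
  x * d ^ 2 / 2 * exp (1 - x / 2 - x ^ 2 / 6 - 2 * d * x / 3 + d ^ 2 * x ^ 2 / 24)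

lemma choose_mul_binomialTwoLe_pow_le {p : unitInterval} {n s : ℕ} {d : ℝ} (hsn : s < n)
    (hp : (p : ℝ) < 1) (hd : n * (p : ℝ) ≤ d * (1 - p)) {x : ℝ} (hx : x = (s + 1 : ℕ) / n) :
    n.choose (s + 1) * binomialTwoLe s p ^ (s + 1) ≤
      coreRate d x ^ (s + 1) := by
  have hn : (0 : ℝ) < n := by exact_mod_cast s.zero_le.trans_lt hsn
  have hq : 0 < 1 - (p : ℝ) := sub_pos.2 hp
  have hx₀ : 0 ≤ x := hx ▸ by positivity
  have hd₀ : 0 ≤ d := by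
    have := p.2.1
    exact nonneg_of_mul_nonneg_left ((by positivity : 0 ≤ n * (p : ℝ)).trans hd) hq
  have hsp : s * (p : ℝ) ≤ d * x * (1 - p) := by
    have hxn : x * n = s + 1 := by rw [hx]; field_simp; push_cast; ring
    nlinarith [mul_le_mul_of_nonneg_left hd hx₀, p.2.1]
  calc n.choose (s + 1) * binomialTwoLe s p ^ (s + 1)
      ≤ n.choose (s + 1) *
          ((d * x) ^ 2 / 2 * exp (-2 * (d * x) / 3 + (d * x) ^ 2 / 24)) ^ (s + 1) := by
        gcongr
        · exact binomialTwoLe_nonneg s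
        · exact (binomialTwoLe_le_poisson hp hsp).trans
            (one_sub_exp_neg_mul_one_add_le (by positivity))
    _ = n.choose (s + 1) * x ^ (s + 1) *
          (x * d ^ 2 / 2 * exp (-2 * (d * x) / 3 + (d * x) ^ 2 / 24)) ^ (s + 1) := by
        rw [mul_assoc, ← mul_pow]; ring_nf
    _ ≤ exp (1 - x / 2 - x ^ 2 / 6) ^ (s + 1) *
          (x * d ^ 2 / 2 * exp (-2 * (d * x) / 3 + (d * x) ^ 2 / 24)) ^ (s + 1) := by
        gcongr
        exact hx ▸ choose_mul_div_pow_le (Nat.succ_le_of_lt hsn)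
    _ = coreRate d x ^ (s + 1) := by
        rw [← mul_pow, mul_left_comm, ← exp_add, coreRate]
        ring_nf

lemma coreRate_nonneg (d : ℝ) {x : ℝ} (hx : 0 ≤ x) : 0 ≤ coreRate d x := by
  unfold coreRate
  positivity

lemma coreRate_le (x : ℝ) : coreRate (93 / 50) x ≤ 99 / 100 := by
  -- The tangent of `log` at `4 / 7`, close to the maximiser of `coreRate`.
  have htangent : x ≤ 4 / 7 * exp (7 * x / 4 - 1) := by
    linarith [add_one_le_exp (7 * x / 4 - 1)]
  have hexponent : 7 * x / 4 - 1 + (1 - x / 2 - x ^ 2 / 6 - 2 * (93 / 50) * x / 3 +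
      (93 / 50) ^ 2 * x ^ 2 / 24) ≤ 12 / 10000 := by
    nlinarith [sq_nonneg (x - 2 / 9)]
  have hexp : exp (12 / 10000) ≤ 10013 / 10000 :=
    (exp_bound_div_one_sub_of_interval (by norm_num) (by norm_num)).trans (by norm_num)
  calc coreRate (93 / 50) x
      ≤ 4 / 7 * exp (7 * x / 4 - 1) * (93 / 50) ^ 2 / 2 * exp (1 - x / 2 - x ^ 2 / 6 -
          2 * (93 / 50) * x / 3 + (93 / 50) ^ 2 * x ^ 2 / 24) := by unfold coreRate; gcongr
    _ = 4 / 7 * (93 / 50) ^ 2 / 2 * exp (7 * x / 4 - 1 + (1 - x / 2 - x ^ 2 / 6 -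
          2 * (93 / 50) * x / 3 + (93 / 50) ^ 2 * x ^ 2 / 24)) := by
      rw [exp_add (7 * x / 4 - 1)]; ring
    _ ≤ 4 / 7 * (93 / 50) ^ 2 / 2 * (10013 / 10000) := by
      gcongr
      exact (exp_le_exp.2 hexponent).trans hexp
    _ ≤ 99 / 100 := by norm_num

lemma coreRate_le_mul {x : ℝ} (hx : 0 ≤ x) : coreRate (93 / 50) x ≤ 5 * x := by
  have hexponent : 1 - x / 2 - x ^ 2 / 6 - 2 * (93 / 50) * x / 3 + (93 / 50) ^ 2 * x ^ 2 / 24 ≤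
      1 := by
    nlinarith
  calc coreRate (93 / 50) x ≤ x * (93 / 50) ^ 2 / 2 * (28 / 10) := by
        unfold coreRate
        gcongr
        linarith [exp_le_exp.2 hexponent, exp_one_lt_d9]
    _ ≤ 5 * x := by linarith

/-- The contribution of cores on `s + 1` vertices to the failure probability for small `p`. -/
noncomputable def sparseError (n s : ℕ) : ℝ :=
  min (99 / 100 : ℝ) (5 * ((s + 1 : ℕ) / n)) ^ (s + 1)

lemma sparseError_nonneg (n s : ℕ) : 0 ≤ sparseError n s := by
  unfold sparseError
  positivity

lemma sparseError_le_geometric (n s : ℕ) : sparseError n s ≤ (99 / 100) ^ (s + 1) :=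
  pow_le_pow_left₀ (by positivity) (min_le_left _ _) _

lemma summable_geometric_succ : Summable fun s : ℕ => (99 / 100 : ℝ) ^ (s + 1) :=
  (summable_nat_add_iff 1).2 (summable_geometric_of_lt_one (by norm_num) (by norm_num))

lemma summable_sparseError (n : ℕ) : Summable (sparseError n) :=
  summable_geometric_succ.of_nonneg_of_le (sparseError_nonneg n) (sparseError_le_geometric n)

lemma tendsto_tsum_sparseError : Tendsto (fun n => ∑' s, sparseError n s) atTop (nhds 0) := by
  have hlim (s : ℕ) : Tendsto (fun n => sparseError n s) atTop (nhds 0) := by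
    have h := ((tendsto_const_div_atTop_nhds_zero_nat ((s + 1 : ℕ) : ℝ)).const_mul 5).pow (s + 1)
    simp only [mul_zero, ne_eq, s.succ_ne_zero, not_false_eq_true, zero_pow] at h
    exact squeeze_zero (fun n => sparseError_nonneg n s)
      (fun n => pow_le_pow_left₀ (by positivity) (min_le_right _ _) _) h
  have h := tendsto_tsum_of_dominated_convergence summable_geometric_succ hlim
    (.of_forall fun n s => by
      rw [norm_of_nonneg (sparseError_nonneg n s)]
      exact sparseError_le_geometric n s)
  simpa using h

theorem eventually_diMeasure_real_not_hasMajorityThreeColouring_le_of_sparse {ε : ℝ}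
    (hε : 0 < ε) : ∀ᶠ n : ℕ in atTop, ∀ p : unitInterval,
    n * (p : ℝ) ≤ 1855 / 1000 →
      (diMeasure n p).real {A | ¬ HasMajorityThreeColouring A} ≤ ε := by
  filter_upwards [tendsto_tsum_sparseError.eventually_le_const hε, eventually_ge_atTop 1000]
    with n hn hn_large p hp
  have hn_large' : (1000 : ℝ) ≤ n := mod_cast hn_large
  have hp_lt : (p : ℝ) < 1 := by nlinarith
  have hd : n * (p : ℝ) ≤ 93 / 50 * (1 - p) := by nlinarith
  have hterm {s : ℕ} (hs : s < n) : n.choose (s + 1) * binomialTwoLe s p ^ (s + 1) ≤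
      sparseError n s := by
    refine (choose_mul_binomialTwoLe_pow_le hs hp_lt hd rfl).trans ?_
    exact pow_le_pow_left₀ (coreRate_nonneg _ (by positivity))
      (le_min (coreRate_le _) (coreRate_le_mul (by positivity))) _
  calc (diMeasure n p).real {A | ¬ HasMajorityThreeColouring A}
      ≤ (diMeasure n p).real {A | ¬ CoreFree A n} :=
        measureReal_mono fun A hA hcore => hA hcore.hasMajorityThreeColouring
    _ ≤ ∑ s ∈ Finset.range n, n.choose (s + 1) * binomialTwoLe s p ^ (s + 1) :=
        diMeasure_real_not_coreFree_le n
    _ ≤ ∑ s ∈ Finset.range n, sparseError n s :=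
        Finset.sum_le_sum fun s hs => hterm (Finset.mem_range.1 hs)
    _ ≤ ∑' s, sparseError n s :=
        (summable_sparseError n).sum_le_tsum _ fun s _ => sparseError_nonneg n s
    _ ≤ ε := hn

end Sparse

section Concentration

lemma one_add_exp_sq_le (t : ℝ) : (1 + Real.exp t) ^ 2 ≤ 4 * Real.exp t * Real.exp (t ^ 2 / 4) :=
  calc (1 + Real.exp t) ^ 2 = 4 * Real.exp t * Real.cosh (t / 2) ^ 2 := by
        have hmul : Real.exp (t / 2) * Real.exp (-(t / 2)) = 1 := by rw [← Real.exp_add]; simp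
        rw [Real.cosh_eq, show Real.exp t = Real.exp (t / 2) ^ 2 by
          rw [← Real.exp_nat_mul]; ring_nf]
        linear_combination -(2 * Real.exp (t / 2) ^ 2 + 1 +
          Real.exp (t / 2) * Real.exp (-(t / 2))) * hmul
    _ ≤ 4 * Real.exp t * Real.exp ((t / 2) ^ 2 / 2) ^ 2 := by
        gcongr
        exact Real.cosh_le_exp_half_sq _
    _ = 4 * Real.exp t * Real.exp (t ^ 2 / 4) := by rw [← Real.exp_nat_mul]; ring_nf

variable {Ω : Type*} [Finite Ω] [MeasurableSpace Ω] [DiscreteMeasurableSpace Ω]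
  {μ : Measure Ω} [IsProbabilityMeasure μ] {n : ℕ} {t : ℝ}

/-- A reverse Cauchy-Schwarz inequality: integrate `(F - a) * (exp t * a - F) ≥ 0`, where `a` is the
minimum of `F`. -/
lemma integral_mul_integral_inv_le {F : Ω → ℝ} (hF : ∀ ω, 0 < F ω)
    (hFt : ∀ ω ω', F ω ≤ Real.exp t * F ω') :
    (∫ ω, F ω ∂μ) * ∫ ω, (F ω)⁻¹ ∂μ ≤ Real.exp (t ^ 2 / 4) := by
  have := μ.nonempty_of_neZero
  obtain ⟨ω₀, hω₀⟩ := Finite.exists_min F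
  set a := F ω₀
  set I := ∫ ω, F ω ∂μ
  set J := ∫ ω, (F ω)⁻¹ ∂μ
  have ha : 0 < a := hF ω₀
  have hpointwise (ω : Ω) : F ω + Real.exp t * a ^ 2 * (F ω)⁻¹ ≤ a * (1 + Real.exp t) := by
    have h := mul_nonneg (sub_nonneg.2 (hω₀ ω)) (sub_nonneg.2 (hFt ω ω₀))
    have hmul : (F ω + Real.exp t * a ^ 2 * (F ω)⁻¹) * F ω ≤ a * (1 + Real.exp t) * F ω := by
      rw [add_mul, inv_mul_cancel_right₀ (hF ω).ne']
      linarith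
    exact le_of_mul_le_mul_right hmul (hF ω)
  have hIJ : I + Real.exp t * a ^ 2 * J ≤ a * (1 + Real.exp t) := by
    have h := integral_mono (μ := μ) .of_finite .of_finite hpointwise
    rwa [integral_add .of_finite .of_finite, integral_const_mul, integral_const, probReal_univ,
      one_smul] at h
  have hI : 0 ≤ I := integral_nonneg fun ω => (hF ω).le
  have hJ : 0 ≤ J := integral_nonneg fun ω => (inv_pos.2 (hF ω)).le
  have hscaled : 4 * Real.exp t * a ^ 2 * (I * J) ≤
      4 * Real.exp t * a ^ 2 * Real.exp (t ^ 2 / 4) :=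
    calc 4 * Real.exp t * a ^ 2 * (I * J) ≤ (I + Real.exp t * a ^ 2 * J) ^ 2 := by
          linarith [sq_nonneg (I - Real.exp t * a ^ 2 * J)]
      _ ≤ (a * (1 + Real.exp t)) ^ 2 := by gcongr
      _ ≤ 4 * Real.exp t * a ^ 2 * Real.exp (t ^ 2 / 4) := by
          rw [mul_pow, mul_right_comm, mul_comm (a ^ 2)]
          gcongr
          exact one_add_exp_sq_le t
  exact le_of_mul_le_mul_left hscaled (by positivity)

lemma integral_pi_fin_succ (F : (Fin (n + 1) → Ω) → ℝ) :
    ∫ A, F A ∂Measure.pi (fun _ => μ) =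
      ∫ B, ∫ ω, F (Fin.cons ω B) ∂μ ∂Measure.pi (fun _ : Fin n => μ) := by
  rw [← (measurePreserving_piFinSuccAbove (fun _ => μ) 0).symm.integral_comp',
    integral_prod_symm _ .of_finite]
  simp only [MeasurableEquiv.piFinSuccAbove_symm_apply, Fin.insertNthEquiv_zero]
  rfl

lemma integral_pi_mul_integral_pi_inv_le {F : (Fin n → Ω) → ℝ} (hF : ∀ A, 0 < F A)
    (hFt : ∀ A v ω, F (Function.update A v ω) ≤ Real.exp t * F A) :
    (∫ A, F A ∂Measure.pi fun _ => μ) * ∫ A, (F A)⁻¹ ∂Measure.pi (fun _ => μ) ≤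
      Real.exp (n * (t ^ 2 / 4)) := by
  induction n with
  | zero =>
    have hconst (G : (Fin 0 → Ω) → ℝ) (A : Fin 0 → Ω) : G A = G default := by
      rw [Subsingleton.elim A default]
    simp [hconst F, mul_inv_cancel₀ (hF default).ne']
  | succ n ih =>
    let G (B : Fin n → Ω) : ℝ := ∫ ω, F (Fin.cons ω B) ∂μ
    have hG (B : Fin n → Ω) : 0 < G B :=
      (integral_pos_iff_support_of_nonneg (fun ω => (hF _).le) .of_finite).2 <| by
        simp [Function.support_eq_univ fun ω => (hF (Fin.cons ω B)).ne']
    have hGt (B : Fin n → Ω) (v : Fin n) (ω : Ω) :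
        G (Function.update B v ω) ≤ Real.exp t * G B := by
      rw [← integral_const_mul]
      refine integral_mono .of_finite .of_finite fun a => ?_
      simp only [Fin.cons_update]
      exact hFt _ _ _
    have hinner (B : Fin n → Ω) :
        ∫ ω, (F (Fin.cons ω B))⁻¹ ∂μ ≤ Real.exp (t ^ 2 / 4) * (G B)⁻¹ := by
      rw [← div_eq_mul_inv, le_div_iff₀ (hG B), mul_comm]
      refine integral_mul_integral_inv_le (fun ω => hF _) fun ω ω' => ?_
      simpa [Fin.update_cons_zero] using hFt (Fin.cons ω' B) 0 ω
    rw [integral_pi_fin_succ, integral_pi_fin_succ]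
    calc (∫ B, G B ∂Measure.pi fun _ => μ) *
          ∫ B, ∫ ω, (F (Fin.cons ω B))⁻¹ ∂μ ∂Measure.pi (fun _ => μ)
        ≤ (∫ B, G B ∂Measure.pi fun _ => μ) *
          ∫ B, Real.exp (t ^ 2 / 4) * (G B)⁻¹ ∂Measure.pi (fun _ => μ) := by
          refine mul_le_mul_of_nonneg_left ?_ (integral_nonneg fun B => (hG B).le)
          exact integral_mono .of_finite .of_finite hinner
      _ ≤ Real.exp (t ^ 2 / 4) * Real.exp (n * (t ^ 2 / 4)) := by
          rw [integral_const_mul, mul_left_comm]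
          gcongr
          exact ih hG hGt
      _ = Real.exp ((n + 1 : ℕ) * (t ^ 2 / 4)) := by
          rw [← Real.exp_add]
          push_cast
          ring_nf

/-- Apply `integral_pi_mul_integral_pi_inv_le` to `exp (t * f)` with `t = 2 * k / n`. -/
lemma measureReal_pi_eq_zero_mul_measureReal_pi_le_le {f : (Fin n → Ω) → ℕ}
    (hf : ∀ A v ω, f (Function.update A v ω) ≤ f A + 1) (k : ℕ) :
    (Measure.pi fun _ => μ).real {A | f A = 0} * (Measure.pi fun _ => μ).real {A | k ≤ f A} ≤
      Real.exp (-(k ^ 2 / n)) := by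
  obtain rfl | hn := n.eq_zero_or_pos
  · simpa using mul_le_one₀ measureReal_le_one measureReal_nonneg measureReal_le_one
  set t : ℝ := 2 * k / n with ht
  have hzero : (Measure.pi fun _ => μ).real {A | f A = 0} ≤
      ∫ A, (Real.exp (t * f A))⁻¹ ∂Measure.pi fun _ => μ :=
    measureReal_le_integral_of_one_le .of_finite (fun A => by positivity) fun A hA => by
      simp [show f A = 0 from hA]
  have hlarge : (Measure.pi fun _ => μ).real {A | k ≤ f A} ≤
      (∫ A, Real.exp (t * f A) ∂Measure.pi fun _ => μ) * Real.exp (-(t * k)) := by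
    rw [← integral_mul_const]
    refine measureReal_le_integral_of_one_le .of_finite (fun A => by positivity) fun A hA => ?_
    have hk : (k : ℝ) ≤ f A := mod_cast hA
    rw [← Real.exp_add, Real.one_le_exp_iff, ← sub_eq_add_neg, sub_nonneg]
    gcongr
  have hprod := integral_pi_mul_integral_pi_inv_le (μ := μ) (t := t)
    (F := fun A => Real.exp (t * f A)) (fun A => Real.exp_pos _) fun A v ω => by
      rw [← Real.exp_add, Real.exp_le_exp, ← mul_one_add, add_comm]
      gcongr
      exact mod_cast hf A v ω
  calc _ ≤ (∫ A, (Real.exp (t * f A))⁻¹ ∂Measure.pi fun _ => μ) *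
        ((∫ A, Real.exp (t * f A) ∂Measure.pi fun _ => μ) * Real.exp (-(t * k))) := by
        gcongr
    _ ≤ Real.exp (n * (t ^ 2 / 4)) * Real.exp (-(t * k)) := by
        rw [← mul_assoc, mul_comm (∫ A, _ ∂_)]
        gcongr
    _ = Real.exp (-(k ^ 2 / n)) := by
        rw [← Real.exp_add, ht]
        congr 1
        field_simp
        ring

lemma hammingDist_update_self_le_one {ι : Type*} [Fintype ι] [DecidableEq ι] {β : ι → Type*}
    [∀ i, DecidableEq (β i)] (x : ∀ i, β i) (i : ι) (b : β i) :
    hammingDist (Function.update x i b) x ≤ 1 := by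
  refine (Finset.card_le_card (t := {i}) fun j hj => ?_).trans_eq (Finset.card_singleton i)
  rw [Finset.mem_singleton]
  by_contra hji
  simp [Function.update_of_ne hji] at hj

lemma measureReal_pi_mul_measureReal_pi_le_hammingDist_le [DecidableEq Ω] (E : Set (Fin n → Ω))
    (k : ℕ) :
    (Measure.pi fun _ => μ).real E *
      (Measure.pi fun _ => μ).real {A | ∀ B ∈ E, k ≤ hammingDist A B} ≤
      Real.exp (-(k ^ 2 / n)) := by
  obtain rfl | hE := E.eq_empty_or_nonempty
  · simpa using (Real.exp_pos _).le
  let dist (A : Fin n → Ω) : ℕ := sInf (hammingDist A '' E)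
  have hdist (A : Fin n → Ω) : ∃ B ∈ E, hammingDist A B = dist A := Nat.sInf_mem (hE.image _)
  have hdist_le (A : Fin n → Ω) {B} (hB : B ∈ E) : dist A ≤ hammingDist A B :=
    Nat.sInf_le ⟨B, hB, rfl⟩
  have hupdate (A : Fin n → Ω) (v : Fin n) (ω : Ω) : dist (Function.update A v ω) ≤ dist A + 1 := by
    obtain ⟨B, hB, hAB⟩ := hdist A
    have htri := hammingDist_triangle (Function.update A v ω) A B
    have hone := hammingDist_update_self_le_one A v ω
    have hle := hdist_le (Function.update A v ω) hB
    omega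
  refine (mul_le_mul (measureReal_mono fun A hA => ?_) (measureReal_mono fun A hA => ?_)
    measureReal_nonneg measureReal_nonneg).trans
    (measureReal_pi_eq_zero_mul_measureReal_pi_le_le (μ := μ) hupdate k)
  · exact Nat.le_zero.1 ((hdist_le A hA).trans_eq (hammingDist_self A))
  · obtain ⟨B, hB, hAB⟩ := hdist A
    exact (hA B hB).trans_eq hAB

end Concentration

section Weights

variable {V κ : Type*} [Fintype V] [DecidableEq κ]

lemma measurePreserving_pi_comp_of_injective {ι Ω : Type*} [Fintype ι] [MeasurableSpace Ω]
    (μ : Measure Ω) [IsProbabilityMeasure μ] {e : ι → V} (he : e.Injective) :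
    MeasurePreserving (fun A : V → Ω => A ∘ e) (Measure.pi fun _ => μ) (Measure.pi fun _ => μ) where
  measurable := by fun_prop
  map_eq := by
    have hindep := (ProbabilityTheory.iIndepFun_pi (μ := fun _ : V => μ) (X := fun _ => id)
      fun _ => aemeasurable_id).precomp he
    refine (hindep.map_fun_eq_pi_map fun i => (measurable_pi_apply (e i)).aemeasurable).trans ?_
    congr 1 with i : 1
    exact (measurePreserving_eval (fun _ : V => μ) (e i)).map_eq

lemma exists_perm_comp_eq {g h : V → κ} (H : ∀ k, #{x | g x = k} = #{x | h x = k}) :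
    ∃ σ : Equiv.Perm V, g ∘ σ = h := by
  have hequiv (k : κ) : Nonempty ({x // h x = k} ≃ {x // g x = k}) := by
    rw [← Fintype.card_eq, Fintype.card_subtype, Fintype.card_subtype, H k]
  let E k := (hequiv k).some
  refine ⟨(Equiv.sigmaFiberEquiv h).symm.trans
    ((Equiv.sigmaCongrRight E).trans (Equiv.sigmaFiberEquiv g)), funext fun x => ?_⟩
  exact (E (h x) ⟨x, rfl⟩).2

lemma card_filter_comp_perm_eq (c : V → κ) (σ : Equiv.Perm V) (k : κ) :
    #{x | (c ∘ σ) x = k} = #{x | c x = k} :=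
  Finset.card_equiv σ (by simp)

variable [Fintype κ]

open scoped Nat in
lemma card_filter_forall_card_eq_mul_prod_factorial [DecidableEq V] (c₀ : V → κ) :
    #{c : V → κ | ∀ k, #{x | c x = k} = #{x | c₀ x = k}} * ∏ k, (#{x | c₀ x = k})! =
      (Fintype.card V)! := by
  have hfibre : ∀ c ∈ ({c : V → κ | ∀ k, #{x | c x = k} = #{x | c₀ x = k}} : Finset _),
      #{σ : Equiv.Perm V | c₀ ∘ σ = c} = ∏ k, (#{x | c₀ x = k})! := fun c hc => by
    obtain ⟨τ, rfl⟩ := exists_perm_comp_eq fun k => ((Finset.mem_filter.1 hc).2 k).symm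
    have hstab := DomMulAct.stabilizer_card c₀
    simp only [Fintype.card_subtype] at hstab
    rw [← hstab]
    refine Finset.card_equiv (Equiv.mulRight τ⁻¹) fun σ => ?_
    simp [← Function.comp_assoc, Equiv.Perm.inv_def, Equiv.comp_symm_eq]
  rw [← Fintype.card_perm, ← Finset.card_univ, Finset.card_eq_sum_card_fiberwise
    (f := fun σ : Equiv.Perm V => c₀ ∘ σ), Finset.sum_congr rfl hfibre, Finset.sum_const,
    smul_eq_mul]
  exact fun σ _ => Finset.mem_coe.2 ((Finset.mem_filter_univ _).2 (card_filter_comp_perm_eq c₀ σ))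

/-- The colours that occur least often among the out-neighbours listed by the row `r`. -/
def rarestColours (c : V → κ) (r : V → Bool) : Finset κ :=
  {i | ∀ j, #{x | r x = true ∧ c x = i} ≤ #{x | r x = true ∧ c x = j}}

/-- The probability of picking colour `i` when choosing a rarest colour uniformly at random. -/
noncomputable def rarestWeight (c : V → κ) (r : V → Bool) (i : κ) : ℝ :=
  if i ∈ rarestColours c r then (#(rarestColours c r) : ℝ)⁻¹ else 0

lemma rarestWeight_nonneg (c : V → κ) (r : V → Bool) (i : κ) : 0 ≤ rarestWeight c r i := by
  unfold rarestWeight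
  positivity

lemma sum_rarestWeight [Nonempty κ] (c : V → κ) (r : V → Bool) : ∑ i, rarestWeight c r i = 1 := by
  obtain ⟨i, hi⟩ := Finite.exists_min fun i => #{x | r x = true ∧ c x = i}
  have hcard : (#(rarestColours c r) : ℝ) ≠ 0 := by
    exact_mod_cast (Finset.card_pos.2 ⟨i, by simpa [rarestColours] using hi⟩).ne'
  simp [rarestWeight, hcard]

lemma rarestWeight_le_one [Nonempty κ] (c : V → κ) (r : V → Bool) (i : κ) :
    rarestWeight c r i ≤ 1 :=
  (Finset.single_le_sum (fun j _ => rarestWeight_nonneg c r j) (Finset.mem_univ i)).trans_eq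
    (sum_rarestWeight c r)

lemma rarestWeight_comp_perm (c : V → κ) (r : V → Bool) (σ : Equiv.Perm V) (i : κ) :
    rarestWeight (c ∘ σ) (r ∘ σ) i = rarestWeight c r i := by
  have hcard (j : κ) : #{x | (r ∘ σ) x = true ∧ (c ∘ σ) x = j} = #{x | r x = true ∧ c x = j} :=
    Finset.card_equiv σ (by simp)
  have hcolours : rarestColours (c ∘ σ) (r ∘ σ) = rarestColours c r := by
    ext j
    simp only [rarestColours, Finset.mem_filter_univ, hcard]
  simp only [rarestWeight, hcolours]

lemma rarestWeight_perm_comp (c : V → κ) (r : V → Bool) (π : Equiv.Perm κ) (i : κ) :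
    rarestWeight (π ∘ c) r i = rarestWeight c r (π⁻¹ i) := by
  have hcolours : rarestColours (π ∘ c) r = (rarestColours c r).map π.toEmbedding := by
    ext j
    simp only [rarestColours, Finset.mem_map_equiv, Finset.mem_filter_univ, Function.comp_apply,
      ← Equiv.eq_symm_apply]
    exact (π.symm.forall_congr_right (q := fun k => _ ≤ #{x | r x = true ∧ c x = k}))
  simp [rarestWeight, hcolours, Finset.mem_map_equiv, Equiv.Perm.inv_def]

variable {p : unitInterval}

lemma integral_bernoulliRow_comp_perm (σ : Equiv.Perm V) (f : (V → Bool) → ℝ) :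
    ∫ r, f (r ∘ σ) ∂bernoulliRow V p = ∫ r, f r ∂bernoulliRow V p := by
  have hpres := measurePreserving_pi_comp_of_injective (bernoulliM p) σ.injective
  rw [bernoulliRow, ← integral_map hpres.measurable.aemeasurable .of_discrete, hpres.map_eq]

lemma integral_rarestWeight [Nonempty κ] {c : V → κ} {a : ℕ} (hc : ∀ k, #{x | c x = k} = a)
    (i : κ) : ∫ r, rarestWeight c r i ∂bernoulliRow V p = (Fintype.card κ : ℝ)⁻¹ := by
  have hsymm (j : κ) :
      ∫ r, rarestWeight c r j ∂bernoulliRow V p = ∫ r, rarestWeight c r i ∂bernoulliRow V p := by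
    obtain ⟨σ, hσ⟩ := exists_perm_comp_eq (g := c) (h := Equiv.swap i j ∘ c) fun k => by
      simp only [Function.comp_apply, ← Equiv.eq_symm_apply, hc]
    calc ∫ r, rarestWeight c r j ∂bernoulliRow V p
        = ∫ r, rarestWeight (c ∘ σ) r i ∂bernoulliRow V p := by
          simp [hσ, rarestWeight_perm_comp]
      _ = ∫ r, rarestWeight c r i ∂bernoulliRow V p := by
          rw [← integral_bernoulliRow_comp_perm σ]
          simp only [rarestWeight_comp_perm]
  have hsum : ∑ j, ∫ r, rarestWeight c r j ∂bernoulliRow V p = 1 := by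
    simp [← integral_finsetSum _ fun _ _ => Integrable.of_finite, sum_rarestWeight]
  rw [Finset.sum_congr rfl fun j _ => hsymm j] at hsum
  simp only [Finset.sum_const, Finset.card_univ, nsmul_eq_mul] at hsum
  exact eq_inv_of_mul_eq_one_right hsum

/-- Profiles, i.e. vectors of colour class sizes, number at most `(#V + 1) ^ #K`, and the colourings
sharing a profile contribute at most `∏ u, ∑ z, θ g z ≤ 1` in total. -/
lemma sum_prod_le_card_add_one_pow {K : Type*} [Fintype K] [DecidableEq K] [DecidableEq V]
    {θ : (V → K) → K → ℝ} (hθ₀ : ∀ g z, 0 ≤ θ g z) (hθsum : ∀ g, ∑ z, θ g z ≤ 1)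
    (hθ : ∀ g h, (∀ k, #{x | g x = k} = #{x | h x = k}) → θ g = θ h) :
    ∑ g, ∏ u, θ g (g u) ≤ (Fintype.card V + 1 : ℝ) ^ Fintype.card K := by
  let profile (g : V → K) (k : K) : Fin (Fintype.card V + 1) :=
    ⟨#{x | g x = k}, Nat.lt_succ_of_le (Finset.card_le_univ _)⟩
  have hprofile (y : K → Fin (Fintype.card V + 1)) :
      ∑ g with profile g = y, ∏ u, θ g (g u) ≤ 1 := by
    by_cases hy : ∃ g, profile g = y
    · obtain ⟨g₀, hg₀⟩ := hy
      calc ∑ g with profile g = y, ∏ u, θ g (g u)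
          = ∑ g with profile g = y, ∏ u, θ g₀ (g u) := by
            refine Finset.sum_congr rfl fun g hg => ?_
            rw [hθ g g₀ fun k => congrArg Fin.val
              (congrFun ((Finset.mem_filter.1 hg).2.trans hg₀.symm) k)]
        _ ≤ ∑ g : V → K, ∏ u, θ g₀ (g u) :=
            Finset.sum_le_sum_of_subset_of_nonneg (Finset.filter_subset _ _) fun g _ _ =>
              Finset.prod_nonneg fun u _ => hθ₀ _ _
        _ = ∏ _u : V, ∑ z, θ g₀ z := (Fintype.prod_sum fun _ : V => θ g₀).symm
        _ ≤ 1 := Finset.prod_le_one (fun u _ => Finset.sum_nonneg fun z _ => hθ₀ _ _)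
              fun u _ => hθsum g₀
    · rw [Finset.filter_false_of_mem fun g _ h => hy ⟨g, h⟩, Finset.sum_empty]
      exact zero_le_one
  calc ∑ g, ∏ u, θ g (g u) = ∑ y, ∑ g with profile g = y, ∏ u, θ g (g u) :=
        (Finset.sum_fiberwise _ _ _).symm
    _ ≤ ∑ _y : K → Fin (Fintype.card V + 1), (1 : ℝ) := Finset.sum_le_sum fun y _ => hprofile y
    _ = (Fintype.card V + 1 : ℝ) ^ Fintype.card K := by simp

lemma integral_rarestWeight_mul_congr {c c' d d' : V → κ}
    (H : ∀ z : κ × κ, #{x | (c x, d x) = z} = #{x | (c' x, d' x) = z}) (i j : κ) :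
    ∫ r, rarestWeight c r i * rarestWeight d r j ∂bernoulliRow V p =
      ∫ r, rarestWeight c' r i * rarestWeight d' r j ∂bernoulliRow V p := by
  obtain ⟨σ, hσ⟩ := exists_perm_comp_eq H
  have hc : c ∘ σ = c' := funext fun x => congrArg Prod.fst (congrFun hσ x)
  have hd : d ∘ σ = d' := funext fun x => congrArg Prod.snd (congrFun hσ x)
  rw [← hc, ← hd, ← integral_bernoulliRow_comp_perm σ fun r =>
    rarestWeight (c ∘ σ) r i * rarestWeight (d ∘ σ) r j]
  simp only [rarestWeight_comp_perm]

lemma sum_integral_rarestWeight_mul [Nonempty κ] (c d : V → κ) :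
    ∑ z : κ × κ, ∫ r, rarestWeight c r z.1 * rarestWeight d r z.2 ∂bernoulliRow V p = 1 := by
  rw [← integral_finsetSum _ fun _ _ => Integrable.of_finite]
  simp [← Finset.univ_product_univ, Finset.sum_product, ← Finset.mul_sum, sum_rarestWeight]

lemma integral_diMeasure_prod {n : ℕ} (f : Fin n → (Fin n → Bool) → ℝ) :
    ∫ A, ∏ u, f u (A u) ∂diMeasure n p = ∏ u, ∫ r, f u r ∂bernoulliRow (Fin n) p :=
  integral_fintype_prod_eq_prod f

/-- The probability that `c` arises when every vertex picks one of its rarest colours with respect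
to `c` uniformly at random. -/
noncomputable def colouringWeight {n : ℕ} (c : Fin n → κ) (A : Fin n → Fin n → Bool) : ℝ :=
  ∏ u, rarestWeight c (A u) (c u)

lemma colouringWeight_nonneg {n : ℕ} (c : Fin n → κ) (A : Fin n → Fin n → Bool) :
    0 ≤ colouringWeight c A :=
  Finset.prod_nonneg fun _ _ => rarestWeight_nonneg _ _ _

lemma integral_colouringWeight [Nonempty κ] {n a : ℕ} {c : Fin n → κ}
    (hc : ∀ k, #{x | c x = k} = a) :
    ∫ A, colouringWeight c A ∂diMeasure n p = (Fintype.card κ : ℝ)⁻¹ ^ n := by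
  simp [colouringWeight, integral_diMeasure_prod fun u r => rarestWeight c r (c u),
    integral_rarestWeight hc]

lemma integral_sum_colouringWeight_sq_le [Nonempty κ] (n : ℕ) :
    ∫ A, (∑ c : Fin n → κ, colouringWeight c A) ^ 2 ∂diMeasure n p ≤
      (n + 1 : ℝ) ^ (Fintype.card κ * Fintype.card κ) := by
  let θ (g : Fin n → κ × κ) (z : κ × κ) : ℝ := ∫ r, rarestWeight (Prod.fst ∘ g) r z.1 *
    rarestWeight (Prod.snd ∘ g) r z.2 ∂bernoulliRow (Fin n) p
  have hpair (c d : Fin n → κ) : ∫ A, colouringWeight c A * colouringWeight d A ∂diMeasure n p =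
      ∏ u, θ (fun x => (c x, d x)) (c u, d u) := by
    simp_rw [colouringWeight, ← Finset.prod_mul_distrib]
    exact integral_diMeasure_prod fun u r => rarestWeight c r (c u) * rarestWeight d r (d u)
  calc ∫ A, (∑ c : Fin n → κ, colouringWeight c A) ^ 2 ∂diMeasure n p
      = ∑ c : Fin n → κ, ∑ d : Fin n → κ, ∏ u, θ (fun x => (c x, d x)) (c u, d u) := by
        simp_rw [sq, Finset.sum_mul_sum]
        rw [integral_finsetSum _ fun _ _ => .of_finite]
        simp_rw [integral_finsetSum _ fun _ _ => Integrable.of_finite, hpair]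
    _ = ∑ g, ∏ u, θ g (g u) := by
        rw [← Fintype.sum_prod_type']
        exact Fintype.sum_equiv (Equiv.arrowProdEquivProdArrow ..).symm _ _ fun _ => rfl
    _ ≤ (n + 1 : ℝ) ^ (Fintype.card κ * Fintype.card κ) := by
        rw [← Fintype.card_prod]
        simpa using sum_prod_le_card_add_one_pow (θ := θ)
          (fun g z => integral_nonneg fun r =>
            mul_nonneg (rarestWeight_nonneg _ _ _) (rarestWeight_nonneg _ _ _))
          (fun g => (sum_integral_rarestWeight_mul _ _).le)
          fun g h H => funext fun z => integral_rarestWeight_mul_congr H _ _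

end Weights

lemma sq_integral_le_integral_sq_mul_measureReal {Ω : Type*} [Finite Ω] [MeasurableSpace Ω]
    [DiscreteMeasurableSpace Ω] {μ : Measure Ω} [IsFiniteMeasure μ] {X : Ω → ℝ} {E : Set Ω}
    (hX : ∀ ω ∉ E, X ω = 0) : (∫ ω, X ω ∂μ) ^ 2 ≤ (∫ ω, X ω ^ 2 ∂μ) * μ.real E := by
  have hquad (t : ℝ) :
      0 ≤ μ.real E * (t * t) + -2 * (∫ ω, X ω ∂μ) * t + ∫ ω, X ω ^ 2 ∂μ :=
    calc (0 : ℝ) ≤ ∫ ω, (X ω - t * E.indicator 1 ω) ^ 2 ∂μ := integral_nonneg fun _ => sq_nonneg _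
      _ = ∫ ω, (t * t * E.indicator 1 ω + -2 * t * X ω + X ω ^ 2) ∂μ := by
          congr with ω
          by_cases hω : ω ∈ E
          · simp [hω]; ring
          · simp [hω, hX]
      _ = μ.real E * (t * t) + -2 * (∫ ω, X ω ∂μ) * t + ∫ ω, X ω ^ 2 ∂μ := by
          rw [integral_add .of_finite .of_finite, integral_add .of_finite .of_finite,
            integral_const_mul, integral_const_mul, integral_indicator_one .of_discrete]
          ring
  have := discrim_le_zero hquad
  rw [discrim] at this
  linarith

section Balanced

open scoped Nat

lemma pow_mul_factorial_pow_three_le {a : ℕ} (ha : 1 ≤ a) :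
    27 ^ a * a ! ^ 3 ≤ 5 * a ^ 2 * (3 * a)! := by
  induction a, ha using Nat.le_induction with
  | base => norm_num [Nat.factorial]
  | succ a ha ih =>
    calc 27 ^ (a + 1) * (a + 1)! ^ 3 = 27 * (a + 1) ^ 3 * (27 ^ a * a ! ^ 3) := by
          rw [Nat.factorial_succ]
          ring
      _ ≤ 27 * (a + 1) ^ 3 * (5 * a ^ 2 * (3 * a)!) := Nat.mul_le_mul_left _ ih
      _ = 5 * (a + 1) ^ 2 * (3 * a)! * (3 * (a + 1) * (9 * a ^ 2)) := by ring
      _ ≤ 5 * (a + 1) ^ 2 * (3 * a)! * (3 * (a + 1) * ((3 * a + 2) * (3 * a + 1))) := by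
          refine Nat.mul_le_mul_left _ (Nat.mul_le_mul_left _ ?_)
          lia
      _ = 5 * (a + 1) ^ 2 * (3 * (a + 1))! := by
          rw [show 3 * (a + 1) = 3 * a + 2 + 1 by ring, Nat.factorial_succ, Nat.factorial_succ,
            Nat.factorial_succ]
          ring

variable {V : Type*} [Fintype V] {a : ℕ}

lemma exists_forall_card_filter_eq {κ : Type*} [Fintype κ] [DecidableEq κ]
    (hV : Fintype.card V = a * Fintype.card κ) : ∃ c : V → κ, ∀ k, #{x | c x = k} = a := by
  let e : V ≃ Fin a × κ := Fintype.equivOfCardEq (by simp [hV])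
  refine ⟨fun x => (e x).2, fun k => ?_⟩
  have hfibre : ({q : Fin a × κ | q.2 = k} : Finset _) = Finset.univ ×ˢ {k} := by
    ext ⟨_, _⟩
    simp [eq_comm]
  calc #{x | (e x).2 = k} = #{q : Fin a × κ | q.2 = k} := Finset.card_equiv e (by simp)
    _ = a := by simp [hfibre]

lemma pow_le_card_forall_card_filter_eq [DecidableEq V] (ha : 1 ≤ a) (hV : Fintype.card V = 3 * a) :
    27 ^ a ≤ 5 * a ^ 2 * #{c : V → Fin 3 | ∀ k, #{x | c x = k} = a} := by
  obtain ⟨c₀, hc₀⟩ := exists_forall_card_filter_eq (V := V) (κ := Fin 3) (a := a)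
    (by simp [hV, mul_comm])
  have hcard := card_filter_forall_card_eq_mul_prod_factorial c₀
  simp only [hc₀, Finset.prod_const, Finset.card_univ, Fintype.card_fin, hV] at hcard
  refine Nat.le_of_mul_le_mul_right ?_ (Nat.pow_pos (n := 3) a.factorial_pos)
  rw [mul_assoc, hcard]
  exact pow_mul_factorial_pow_three_le ha

end Balanced

section Activity

lemma fin_three_univ_eq_of_ne : ∀ {i j : Fin 3}, j ≠ i →
    Finset.univ = {i, j, -(i + j)} ∧ j ≠ -(i + j) ∧ i ≠ -(i + j) := by
  decide

lemma card_eq_three_of_colour_ne {V : Type*} [DecidableEq V] {c : V → Fin 3} {i : Fin 3} {x y z : V}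
    (hx : c x ≠ i) (hy : c y = -(i + c x)) (hz : c z = i) : #{x, y, z} = 3 := by
  obtain ⟨-, hjk, hik⟩ := fin_three_univ_eq_of_ne hx
  refine Finset.card_eq_three.2 ⟨x, y, z, ?_, ?_, ?_, rfl⟩ <;> rintro rfl
  · exact hjk hy
  · exact hx hz
  · exact hik (hz.symm.trans hy)

variable {V κ : Type*} [Fintype V] [DecidableEq κ]

/-- The set indicated by a row. -/
def rowSupport (r : V → Bool) : Finset V := {x | r x = true}

lemma mem_rowSupport {r : V → Bool} {x : V} : x ∈ rowSupport r ↔ r x = true :=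
  Finset.mem_filter_univ x

/-- A vertex of colour `i` whose out-neighbourhood is given by `r` is active with respect to `S` if
recolouring the vertices of `S` adversarially can destroy its majority property. -/
def IsActive (c : V → κ) (i : κ) (S : Finset V) (r : V → Bool) : Prop :=
  #(rowSupport r) < 2 * (#{x | r x = true ∧ c x = i} + #{x ∈ S | r x = true ∧ c x ≠ i})

lemma rarestWeight_le_inv_card [Fintype κ] {c : V → κ} {i : κ} {r : V → Bool} {J : Finset κ}
    (hJ : J.Nonempty) (hJr : J ⊆ rarestColours c r) : rarestWeight c r i ≤ (#J : ℝ)⁻¹ := by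
  have := hJ.card_pos
  rw [rarestWeight]
  split_ifs
  · gcongr
  · positivity

variable {c : V → Fin 3} {i : Fin 3} {S : Finset V} {r : V → Bool}

lemma card_rowSupport_eq_add_of_ne {j : Fin 3} (hj : j ≠ i) : #(rowSupport r) =
    #{x | r x = true ∧ c x = i} + #{x | r x = true ∧ c x = j} +
      #{x | r x = true ∧ c x = -(i + j)} := by
  obtain ⟨huniv, hjk, hik⟩ := fin_three_univ_eq_of_ne hj
  have hi : i ∉ ({j, -(i + j)} : Finset (Fin 3)) := by
    rw [Finset.mem_insert, Finset.mem_singleton]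
    exact not_or.2 ⟨hj.symm, hik⟩
  rw [rowSupport, Finset.card_eq_sum_card_fiberwise (f := c) (t := Finset.univ) fun _ _ => by simp,
    huniv, Finset.sum_insert hi, Finset.sum_pair hjk, ← add_assoc]
  simp only [Finset.filter_filter]

lemma IsActive.exists_card_eq (hi : i ∈ rarestColours c r) (hr : IsActive c i S r)
    (hS : #{x ∈ S | r x = true} < 2) : ∃ x ∈ S, r x = true ∧ c x ≠ i ∧ ∃ t ≤ 1,
      #{y | r y = true ∧ c y = i} = t ∧ #{y | r y = true ∧ c y = c x} = 1 ∧
      #{y | r y = true ∧ c y = -(i + c x)} = t ∧ #(rowSupport r) = 2 * t + 1 := by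
  have hmin : ∀ j, #{x | r x = true ∧ c x = i} ≤ #{x | r x = true ∧ c x = j} := by
    simpa only [rarestColours, Finset.mem_filter_univ] using hi
  have hT : #{x ∈ S | r x = true ∧ c x ≠ i} ≤ #{x ∈ S | r x = true} :=
    Finset.card_le_card (Finset.monotone_filter_right _ fun _ _ h => h.1)
  unfold IsActive at hr
  have hpos : 0 < #{x ∈ S | r x = true ∧ c x ≠ i} := by
    have := card_rowSupport_eq_add_of_ne (c := c) (r := r) (i := i) (j := i + 1) (by simp)
    have := hmin (i + 1)
    have := hmin (-(i + (i + 1)))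
    lia
  obtain ⟨x, hx⟩ := Finset.card_pos.1 hpos
  obtain ⟨hxS, hrx, hxi⟩ := Finset.mem_filter.1 hx
  have hxpos : 0 < #{y | r y = true ∧ c y = c x} := Finset.card_pos.2 ⟨x, by simp [hrx]⟩
  have := card_rowSupport_eq_add_of_ne (c := c) (r := r) hxi
  have := hmin (c x)
  have := hmin (-(i + c x))
  exact ⟨x, hxS, hrx, hxi, _, by lia, rfl, by lia, by lia, by lia⟩

lemma IsActive.support_eq_or [DecidableEq V] (hi : i ∈ rarestColours c r) (hr : IsActive c i S r)
    (hS : #{x ∈ S | r x = true} < 2) : ∃ x ∈ S, c x ≠ i ∧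
      (rowSupport r = {x} ∧ rarestWeight c r i ≤ 1 / 2 ∨
      ∃ y z, c y = -(i + c x) ∧ c z = i ∧
        rowSupport r = {x, y, z} ∧ rarestWeight c r i ≤ 1 / 3) := by
  obtain ⟨x, hxS, hrx, hxi, t, ht, hti, htj, htk, hcard⟩ := hr.exists_card_eq hi hS
  obtain ⟨huniv, -, hik⟩ := fin_three_univ_eq_of_ne hxi
  have hrarest {j : Fin 3} (hj : #{y | r y = true ∧ c y = j} = t) : j ∈ rarestColours c r := by
    simp only [rarestColours, Finset.mem_filter_univ] at hi ⊢
    rwa [hj, ← hti]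
  refine ⟨x, hxS, hxi, ?_⟩
  obtain rfl | rfl : t = 0 ∨ t = 1 := by lia
  · left
    have hsub : {x} ⊆ rowSupport r := by simpa [mem_rowSupport] using hrx
    have hsupp := Finset.eq_of_subset_of_card_le hsub (by rw [hcard, Finset.card_singleton])
    have hle := rarestWeight_le_inv_card (r := r) (i := i) (J := {i, -(i + c x)}) (by simp)
      (Finset.insert_subset (hrarest hti) (Finset.singleton_subset_iff.2 (hrarest htk)))
    rw [Finset.card_pair hik] at hle
    exact ⟨hsupp.symm, by linarith⟩
  · right
    obtain ⟨y, hy⟩ := Finset.card_pos.1 (htk.symm ▸ one_pos)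
    obtain ⟨z, hz⟩ := Finset.card_pos.1 (hti.symm ▸ one_pos)
    obtain ⟨hry, hcy⟩ := (Finset.mem_filter_univ y).1 hy
    obtain ⟨hrz, hcz⟩ := (Finset.mem_filter_univ z).1 hz
    have hxyz : #{x, y, z} = 3 := card_eq_three_of_colour_ne hxi hcy hcz
    have hsub : {x, y, z} ⊆ rowSupport r := by
      simp [Finset.insert_subset_iff, mem_rowSupport, hrx, hry, hrz]
    have hsupp := Finset.eq_of_subset_of_card_le hsub (by rw [hcard, hxyz])
    have hall : Finset.univ ⊆ rarestColours c r := by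
      rw [huniv]
      exact Finset.insert_subset (hrarest hti) (Finset.insert_subset (hrarest htj)
        (Finset.singleton_subset_iff.2 (hrarest htk)))
    refine ⟨y, z, hcy, hcz, hsupp.symm, ?_⟩
    simpa using rarestWeight_le_inv_card Finset.univ_nonempty hall

lemma bernoulliRow_real_support_eq (p : unitInterval) (Q : Finset V) :
    (bernoulliRow V p).real {r | rowSupport r = Q} =
      p ^ #Q * (1 - p) ^ (Fintype.card V - #Q) := by
  classical
  rw [← Finset.card_compl, ← bernoulliRow_real_eq_true_eq_false disjoint_compl_right]
  congr 1 with r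
  simp only [Set.mem_ofPred_eq, Finset.ext_iff, mem_rowSupport, Finset.mem_compl]
  refine ⟨fun h => ⟨fun x => (h x).2, fun x hx => ?_⟩, fun h x => ⟨fun hx => ?_, h.1 x⟩⟩
  · simpa using mt (h x).1 hx
  · by_contra hxQ
    simp_all

/-- With three colour classes of size `a`, a row picks a given rarest colour and is active with
respect to an evenly coloured set of size `m` with probability at most about
`m * p * activityRate a m p / 3`. The last summand accounts for rows meeting the set twice. -/
noncomputable def activityRate (a m : ℕ) (p : ℝ) : ℝ :=
  (1 - p) ^ (3 * a - 3) * (1 + 2 * a ^ 2 * p ^ 2 / 3) + 5 * m * p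

lemma activityRate_nonneg (a m : ℕ) (p : unitInterval) : 0 ≤ activityRate a m p := by
  have hp := p.2.1
  have hq : (0 : ℝ) ≤ 1 - p := sub_nonneg.2 p.2.2
  unfold activityRate
  positivity

lemma IsActive.rarestWeight_le [DecidableEq V] (hr : IsActive c i S r) : rarestWeight c r i ≤
    ∑ x ∈ S with c x ≠ i, ((if rowSupport r = {x} then 1 / 2 else 0) +
      ∑ y with c y = -(i + c x), ∑ z with c z = i,
        if rowSupport r = {x, y, z} then 1 / 3 else 0) +
    if 2 ≤ #{x ∈ S | r x = true} then 1 else 0 := by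
  have hinner (x y : V) :
      0 ≤ ∑ z with c z = i, if rowSupport r = {x, y, z} then (1 / 3 : ℝ) else 0 := by positivity
  set g : V → ℝ := fun x => (if rowSupport r = {x} then 1 / 2 else 0) +
    ∑ y with c y = -(i + c x), ∑ z with c z = i, if rowSupport r = {x, y, z} then 1 / 3 else 0
  have hg (x : V) : 0 ≤ g x := by positivity
  have hle (x : V) (hx : x ∈ S) (hxi : c x ≠ i) : g x ≤ ∑ x ∈ S with c x ≠ i, g x :=
    Finset.single_le_sum (fun x _ => hg x) (Finset.mem_filter.2 ⟨hx, hxi⟩)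
  have hsum : 0 ≤ ∑ x ∈ S with c x ≠ i, g x := Finset.sum_nonneg fun x _ => hg x
  split_ifs with hS
  · linarith [rarestWeight_le_one c r i]
  by_cases hi : i ∈ rarestColours c r
  swap
  · simpa [rarestWeight, hi] using hsum
  obtain ⟨x, hxS, hxi, ⟨hx, hw⟩ | ⟨y, z, hy, hz, hxyz, hw⟩⟩ := hr.support_eq_or hi (not_le.1 hS)
  · have hgx : 1 / 2 ≤ g x := by
      simp only [g, if_pos hx]
      exact le_add_of_nonneg_right (Finset.sum_nonneg fun y _ => hinner x y)
    linarith [hle x hxS hxi]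
  · have hgx : 1 / 3 ≤ g x := calc
      1 / 3 = if rowSupport r = {x, y, z} then (1 / 3 : ℝ) else 0 := (if_pos hxyz).symm
      _ ≤ ∑ z with c z = i, if rowSupport r = {x, y, z} then (1 / 3 : ℝ) else 0 :=
        Finset.single_le_sum (f := fun z => if rowSupport r = {x, y, z} then (1 / 3 : ℝ) else 0)
          (fun _ _ => by positivity) ((Finset.mem_filter_univ z).2 hz)
      _ ≤ _ := Finset.single_le_sum (f := fun y => ∑ z with c z = i,
          if rowSupport r = {x, y, z} then (1 / 3 : ℝ) else 0) (fun y _ => hinner x y)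
            ((Finset.mem_filter_univ y).2 hy)
      _ ≤ g x := le_add_of_nonneg_left (by positivity)
    linarith [hle x hxS hxi]

lemma integral_ite_const_zero {Ω : Type*} [MeasurableSpace Ω] [DiscreteMeasurableSpace Ω]
    {μ : Measure Ω} (P : Ω → Prop) [DecidablePred P] (w : ℝ) :
    ∫ ω, (if P ω then w else 0) ∂μ = w * μ.real {ω | P ω} := by
  rw [mul_comm, ← smul_eq_mul, ← integral_indicator_const w (.of_discrete)]
  simp only [Set.indicator_apply, Set.mem_ofPred_eq]

lemma card_eq_three_mul {a : ℕ} (hc : ∀ k, #{x | c x = k} = a) : Fintype.card V = 3 * a := by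
  rw [← Finset.card_univ, Finset.card_eq_sum_card_fiberwise (f := c) (t := Finset.univ)
    fun _ _ => Finset.mem_univ _]
  simp only [hc, Finset.sum_const, Finset.card_univ, Fintype.card_fin, smul_eq_mul]

lemma integral_rowSupport_le [DecidableEq V] {a : ℕ} (hc : ∀ k, #{x | c x = k} = a)
    (p : unitInterval) {x : V} (hx : c x ≠ i) :
    ∫ r, ((if rowSupport r = {x} then 1 / 2 else 0) + ∑ y with c y = -(i + c x),
        ∑ z with c z = i, if rowSupport r = {x, y, z} then 1 / 3 else 0) ∂bernoulliRow V p ≤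
      p * (1 - p : ℝ) ^ (3 * a - 3) * (1 / 2 + a ^ 2 * p ^ 2 / 3) := by
  have hp := p.2.1
  have hq : (0 : ℝ) ≤ 1 - p := sub_nonneg.2 p.2.2
  have hthree (y : V) (hy : y ∈ ({y | c y = -(i + c x)} : Finset V)) (z : V)
      (hz : z ∈ ({z | c z = i} : Finset V)) :
      1 / 3 * (bernoulliRow V p).real {r | rowSupport r = {x, y, z}} =
        1 / 3 * (p ^ 3 * (1 - p : ℝ) ^ (3 * a - 3)) := by
    rw [bernoulliRow_real_support_eq, card_eq_three_mul hc, card_eq_three_of_colour_ne hx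
      ((Finset.mem_filter_univ y).1 hy) ((Finset.mem_filter_univ z).1 hz)]
  rw [integral_add .of_finite .of_finite, integral_ite_const_zero, bernoulliRow_real_support_eq,
    card_eq_three_mul hc, Finset.card_singleton, pow_one]
  simp only [integral_finsetSum _ fun _ _ => Integrable.of_finite, integral_ite_const_zero]
  rw [Finset.sum_congr rfl fun y hy => Finset.sum_congr rfl (hthree y hy)]
  simp only [Finset.sum_const, hc, nsmul_eq_mul]
  calc 1 / 2 * (p * (1 - p : ℝ) ^ (3 * a - 1)) +
        a * (a * (1 / 3 * (p ^ 3 * (1 - p : ℝ) ^ (3 * a - 3))))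
      ≤ 1 / 2 * (p * (1 - p : ℝ) ^ (3 * a - 3)) +
        a * (a * (1 / 3 * (p ^ 3 * (1 - p : ℝ) ^ (3 * a - 3)))) := by
        gcongr ?_ * (?_ * ?_) + _
        exact pow_le_pow_of_le_one hq (sub_le_self 1 hp) (by lia)
    _ = _ := by ring

lemma integral_isActive_rarestWeight_le {a : ℕ} (hc : ∀ k, #{x | c x = k} = a) (i : Fin 3)
    (S : Finset V) (p : unitInterval) :
    ∫ r, {r | IsActive c i S r}.indicator (fun r => rarestWeight c r i) r ∂bernoulliRow V p ≤
      #{x ∈ S | c x ≠ i} * (p * (1 - p : ℝ) ^ (3 * a - 3) * (1 / 2 + a ^ 2 * p ^ 2 / 3)) +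
        (#S * p) ^ 2 / 2 := by
  classical
  calc ∫ r, {r | IsActive c i S r}.indicator (fun r => rarestWeight c r i) r ∂bernoulliRow V p
      ≤ ∫ r, (∑ x ∈ S with c x ≠ i, ((if rowSupport r = {x} then 1 / 2 else 0) +
          ∑ y with c y = -(i + c x), ∑ z with c z = i,
            if rowSupport r = {x, y, z} then 1 / 3 else 0) +
          if 2 ≤ #{x ∈ S | r x = true} then 1 else 0) ∂bernoulliRow V p :=
        integral_mono .of_finite .of_finite fun r =>
          Set.indicator_le' (fun r hr => IsActive.rarestWeight_le hr) (fun r _ => by positivity) r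
    _ ≤ ∑ x ∈ S with c x ≠ i,
          (p * (1 - p : ℝ) ^ (3 * a - 3) * (1 / 2 + a ^ 2 * p ^ 2 / 3)) + (#S * p) ^ 2 / 2 := by
        rw [integral_add .of_finite .of_finite, integral_finsetSum _ fun _ _ => .of_finite,
          integral_ite_const_zero, one_mul]
        gcongr with x hx
        · exact integral_rowSupport_le hc p (Finset.mem_filter.1 hx).2
        · exact bernoulliRow_real_two_le_card_le S
    _ = _ := by rw [Finset.sum_const, nsmul_eq_mul]

lemma integral_isActive_rarestWeight_le_exp {a : ℕ} (hc : ∀ k, #{x | c x = k} = a)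
    (i : Fin 3) (hS : S.Nonempty) (p : unitInterval) :
    ∫ r, {r | IsActive c i S r}.indicator (fun r => rarestWeight c r i) r ∂bernoulliRow V p ≤
      (#S * p * activityRate a #S p) / 3 *
        Real.exp (1 / 2 - 3 / 2 * (#{x ∈ S | c x = i} / #S)) := by
  have hp := p.2.1
  have hq : (0 : ℝ) ≤ 1 - p := sub_nonneg.2 p.2.2
  have hm : (0 : ℝ) < #S := by exact_mod_cast hS.card_pos
  have hcard : (#{x ∈ S | c x = i} : ℝ) + #{x ∈ S | c x ≠ i} = #S := by
    exact_mod_cast Finset.card_filter_add_card_filter_not (s := S) (c · = i)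
  set y : ℝ := 1 / 2 - 3 / 2 * (#{x ∈ S | c x = i} / #S) with hy
  have hT : (#{x ∈ S | c x ≠ i} : ℝ) = 2 / 3 * #S * (1 + y) := by
    rw [hy]
    field_simp
    linarith
  have hy₁ : -1 ≤ y := by
    have : 0 ≤ 2 / 3 * #S * (1 + y) := hT ▸ Nat.cast_nonneg _
    nlinarith
  have hexp : 3 / 10 ≤ Real.exp y := by
    have := Real.exp_neg_one_gt_d9
    exact le_trans (by linarith) (Real.exp_le_exp.2 hy₁)
  refine (integral_isActive_rarestWeight_le hc i S p).trans ?_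
  rw [hT, activityRate]
  calc 2 / 3 * #S * (1 + y) * (p * (1 - p : ℝ) ^ (3 * a - 3) * (1 / 2 + a ^ 2 * p ^ 2 / 3)) +
        (#S * p) ^ 2 / 2
      = (#S : ℝ) * p / 3 * ((1 - p : ℝ) ^ (3 * a - 3) * (1 + 2 * a ^ 2 * p ^ 2 / 3) * (y + 1) +
        5 * (#S : ℝ) * p * (3 / 10)) := by ring
    _ ≤ (#S : ℝ) * p / 3 * ((1 - p : ℝ) ^ (3 * a - 3) * (1 + 2 * a ^ 2 * p ^ 2 / 3) * Real.exp y +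
        5 * (#S : ℝ) * p * Real.exp y) := by
        gcongr
        exact Real.add_one_le_exp y
    _ = _ := by ring

end Activity

section Stability

lemma sum_sdiff_le_card {V : Type*} [DecidableEq V] {c : V → Fin 3} {S B₀ : Finset V} (hB₀ : B₀ ⊆ S)
    (hS : S.Nonempty) :
    ∑ u ∈ S \ B₀, (1 / 2 - 3 / 2 * (#{x ∈ S | c x = c u} / #S) : ℝ) ≤ #B₀ := by
  have hm : (0 : ℝ) < #S := by exact_mod_cast hS.card_pos
  have hsquares : (#S : ℝ) ^ 2 ≤ 3 * ∑ u ∈ S, (#{x ∈ S | c x = c u} : ℝ) := calc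
    (#S : ℝ) ^ 2 = (∑ k, (#{x ∈ S | c x = k} : ℝ)) ^ 2 := by
      rw [Finset.card_eq_sum_card_fiberwise (f := c) (t := Finset.univ) fun _ _ => by simp]
      push_cast
      rfl
    _ ≤ 3 * ∑ k, (#{x ∈ S | c x = k} : ℝ) ^ 2 := by
      simpa using
        sq_sum_le_card_mul_sum_sq (s := Finset.univ) (f := fun k => (#{x ∈ S | c x = k} : ℝ))
    _ = 3 * ∑ u ∈ S, (#{x ∈ S | c x = c u} : ℝ) := by
      rw [← Finset.sum_fiberwise S c]
      congr! 2 with k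
      rw [Finset.sum_congr rfl fun u hu => by rw [(Finset.mem_filter.1 hu).2], Finset.sum_const,
        nsmul_eq_mul, sq]
  have hlower : -(#B₀ : ℝ) ≤ ∑ u ∈ B₀, (1 / 2 - 3 / 2 * (#{x ∈ S | c x = c u} / #S) : ℝ) := by
    rw [← mul_neg_one, ← nsmul_eq_mul]
    refine Finset.card_nsmul_le_sum _ _ _ fun u _ => ?_
    have : (#{x ∈ S | c x = c u} : ℝ) / #S ≤ 1 :=
      div_le_one_of_le₀ (by exact_mod_cast Finset.card_filter_le _ _) hm.le
    linarith
  have htotal : ∑ u ∈ S, (1 / 2 - 3 / 2 * (#{x ∈ S | c x = c u} / #S) : ℝ) ≤ 0 := by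
    rw [Finset.sum_sub_distrib, Finset.sum_const, ← Finset.mul_sum, ← Finset.sum_div,
      nsmul_eq_mul, sub_nonpos, ← mul_div_assoc, ← mul_div_assoc, le_div_iff₀ hm]
    linarith
  linarith [Finset.sum_sdiff (f := fun u => (1 / 2 - 3 / 2 * (#{x ∈ S | c x = c u} / #S) : ℝ)) hB₀]

variable {n a : ℕ} {c : Fin n → Fin 3}

lemma indicator_forall_isActive_colouringWeight (S D : Finset (Fin n)) (A : Fin n → Fin n → Bool) :
    {A | ∀ u ∈ D, IsActive c (c u) S (A u)}.indicator (colouringWeight c) A =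
      ∏ u, if u ∈ D then
          {r | IsActive c (c u) S r}.indicator (fun r => rarestWeight c r (c u)) (A u)
        else rarestWeight c (A u) (c u) := by
  classical
  simp only [Set.indicator_apply, Set.mem_ofPred_eq]
  split_ifs with hA
  · exact Finset.prod_congr rfl fun u _ => by
      split_ifs with hu hAu
      · rfl
      · exact absurd (hA u hu) hAu
      · rfl
  · push Not at hA
    obtain ⟨u, hu, hAu⟩ := hA
    exact (Finset.prod_eq_zero (Finset.mem_univ u) (by rw [if_pos hu, if_neg hAu])).symm

lemma integral_forall_isActive_colouringWeight_le (hc : ∀ k, #{x | c x = k} = a)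
    {S B₀ : Finset (Fin n)} (hB₀ : B₀ ⊆ S) (hS : S.Nonempty) (p : unitInterval) :
    ∫ A, {A | ∀ u ∈ S \ B₀, IsActive c (c u) S (A u)}.indicator (colouringWeight c) A
        ∂diMeasure n p ≤
      (1 / 3) ^ n * (#S * p * activityRate a #S p) ^ (#S - #B₀) * Real.exp #B₀ := by
  set x : ℝ := #S * p * activityRate a #S p
  set f : Fin n → ℝ := fun u => 1 / 2 - 3 / 2 * (#{x ∈ S | c x = c u} / #S)
  have hx : 0 ≤ x :=
    mul_nonneg (mul_nonneg (Nat.cast_nonneg _) p.2.1) (activityRate_nonneg a #S p)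
  simp only [indicator_forall_isActive_colouringWeight]
  rw [integral_diMeasure_prod fun u r => if u ∈ S \ B₀ then
    {r | IsActive c (c u) S r}.indicator (fun r => rarestWeight c r (c u)) r
    else rarestWeight c r (c u)]
  calc _ ≤ ∏ u, (1 / 3) * (if u ∈ S \ B₀ then x * Real.exp (f u) else 1) := by
        refine Finset.prod_le_prod (fun u _ => integral_nonneg fun r => ?_) fun u _ => ?_
        · dsimp only
          split_ifs
          · exact Set.indicator_nonneg (fun r _ => rarestWeight_nonneg c r _) r
          · exact rarestWeight_nonneg c r _
        · split_ifs
          · refine (integral_isActive_rarestWeight_le_exp hc (c u) hS p).trans_eq ?_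
            ring
          · simp [integral_rarestWeight hc]
    _ = (1 / 3) ^ n * (x ^ (#S - #B₀) * Real.exp (∑ u ∈ S \ B₀, f u)) := by
        rw [Finset.prod_mul_distrib, Finset.prod_ite_mem, Finset.univ_inter,
          Finset.prod_mul_distrib, Finset.prod_const, Finset.prod_const,
          Finset.card_sdiff_of_subset hB₀, Real.exp_sum, Finset.card_univ, Fintype.card_fin]
    _ ≤ (1 / 3) ^ n * (x ^ (#S - #B₀) * Real.exp #B₀) := by
        gcongr
        exact sum_sdiff_le_card hB₀ hS
    _ = _ := by ring

/-- The colouring `c` is stable if activation started from `k` vertices never reaches `m` vertices: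
any set of size `m` contains, outside any `k` of its elements, a vertex which is not active. -/
def IsStable (c : Fin n → Fin 3) (k m : ℕ) (A : Fin n → Fin n → Bool) : Prop :=
  ∀ S B₀ : Finset (Fin n), B₀ ⊆ S → #S = m → #B₀ = k → ∃ u ∈ S \ B₀, ¬ IsActive c (c u) S (A u)

lemma indicator_not_isStable_le {k m : ℕ} (A : Fin n → Fin n → Bool) :
    {A | ¬ IsStable c k m A}.indicator (colouringWeight c) A ≤
      ∑ P ∈ (Finset.univ.powersetCard m).sigma (Finset.powersetCard k),
        {A | ∀ u ∈ P.1 \ P.2, IsActive c (c u) P.1 (A u)}.indicator (colouringWeight c) A := by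
  have hnonneg (P : (_ : Finset (Fin n)) × Finset (Fin n)) :
      0 ≤ {A | ∀ u ∈ P.1 \ P.2, IsActive c (c u) P.1 (A u)}.indicator (colouringWeight c) A :=
    Set.indicator_nonneg (fun A _ => colouringWeight_nonneg c A) A
  by_cases hA : IsStable c k m A
  · rw [Set.indicator_of_notMem (s := {A | ¬ IsStable c k m A}) (by simpa using hA)]
    exact Finset.sum_nonneg fun P _ => hnonneg P
  · rw [Set.indicator_of_mem (s := {A | ¬ IsStable c k m A}) hA]
    simp only [IsStable, not_forall, not_exists, not_and, not_not] at hA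
    obtain ⟨S, B₀, hB₀, hS, hk, hactive⟩ := hA
    have hP : (⟨S, B₀⟩ : (_ : Finset (Fin n)) × Finset (Fin n)) ∈
        (Finset.univ.powersetCard m).sigma (Finset.powersetCard k) := by
      simp [hB₀, hS, hk]
    refine le_trans ?_ (Finset.single_le_sum (fun P _ => hnonneg P) hP)
    rw [Set.indicator_of_mem
      (s := {A : Fin n → Fin n → Bool | ∀ u ∈ S \ B₀, IsActive c (c u) S (A u)}) hactive]

lemma integral_not_isStable_colouringWeight_le (hc : ∀ k, #{x | c x = k} = a) {k m : ℕ}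
    (hm : 1 ≤ m) (p : unitInterval) :
    ∫ A, {A | ¬ IsStable c k m A}.indicator (colouringWeight c) A ∂diMeasure n p ≤
      (1 / 3) ^ n * (n.choose m * m.choose k * ((m : ℝ) * p * activityRate a m p) ^ (m - k) *
        Real.exp k) := by
  refine (integral_mono .of_finite .of_finite indicator_not_isStable_le).trans ?_
  rw [integral_finsetSum _ fun _ _ => Integrable.of_finite, Finset.sum_sigma]
  calc _ ≤ ∑ S ∈ (Finset.univ : Finset (Fin n)).powersetCard m, ∑ B₀ ∈ S.powersetCard k,
        (1 / 3) ^ n * ((m : ℝ) * p * activityRate a m p) ^ (m - k) * Real.exp k := by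
        refine Finset.sum_le_sum fun S hS => Finset.sum_le_sum fun B₀ hB₀ => ?_
        obtain rfl := Finset.mem_powersetCard_univ.1 hS
        obtain ⟨hsub, rfl⟩ := Finset.mem_powersetCard.1 hB₀
        exact integral_forall_isActive_colouringWeight_le hc hsub (Finset.card_pos.1 hm) p
    _ = _ := by
        rw [Finset.sum_congr rfl fun S hS => by
          rw [Finset.sum_const, Finset.card_powersetCard, Finset.mem_powersetCard_univ.1 hS]]
        simp only [Finset.sum_const, Finset.card_powersetCard, Finset.card_univ, Fintype.card_fin,
          nsmul_eq_mul]
        ring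

lemma le_integral_isStable_colouringWeight (hc : ∀ k, #{x | c x = k} = a) {k m : ℕ}
    (hm : 1 ≤ m) {p : unitInterval} (hsmall : n.choose m * m.choose k *
      ((m : ℝ) * p * activityRate a m p) ^ (m - k) * Real.exp k ≤ 1 / 2) :
    (1 / 3) ^ n / 2 ≤
      ∫ A, {A | IsStable c k m A}.indicator (colouringWeight c) A ∂diMeasure n p := by
  have hsplit : ∫ A, {A | IsStable c k m A}.indicator (colouringWeight c) A ∂diMeasure n p +
      ∫ A, {A | ¬ IsStable c k m A}.indicator (colouringWeight c) A ∂diMeasure n p =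
        (1 / 3) ^ n := by
    rw [← integral_add .of_finite .of_finite]
    trans ∫ A, colouringWeight c A ∂diMeasure n p
    · congr! 2 with A
      exact congrFun (Set.indicator_self_add_compl {A | IsStable c k m A} (colouringWeight c)) A
    · simp [integral_colouringWeight hc]
  have hbad := integral_not_isStable_colouringWeight_le hc hm p (k := k)
  have := mul_le_mul_of_nonneg_left hsmall (a := (1 / 3 : ℝ) ^ n) (by positivity)
  linarith

/-- The total weight of the stable colourings whose three colour classes have size `a`. -/
noncomputable def stableWeight (a k m : ℕ) (A : Fin n → Fin n → Bool) : ℝ :=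
  ∑ c : Fin n → Fin 3 with ∀ i, #{x | c x = i} = a,
    {A | IsStable c k m A}.indicator (colouringWeight c) A

lemma stableWeight_nonneg (a k m : ℕ) (A : Fin n → Fin n → Bool) : 0 ≤ stableWeight a k m A :=
  Finset.sum_nonneg fun c _ => Set.indicator_nonneg (fun A _ => colouringWeight_nonneg c A) A

lemma stableWeight_le (a k m : ℕ) (A : Fin n → Fin n → Bool) :
    stableWeight a k m A ≤ ∑ c : Fin n → Fin 3, colouringWeight c A :=
  (Finset.sum_le_sum fun c _ =>
    Set.indicator_le_self' (fun A _ => colouringWeight_nonneg c A) A).trans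
      (Finset.sum_le_univ_sum_of_nonneg fun c => colouringWeight_nonneg c A)

lemma le_integral_stableWeight (ha : 1 ≤ a) {k m : ℕ} (hm : 1 ≤ m) {p : unitInterval}
    (hsmall : (3 * a).choose m * m.choose k * ((m : ℝ) * p * activityRate a m p) ^ (m - k) *
      Real.exp k ≤ 1 / 2) :
    (10 * a ^ 2 : ℝ)⁻¹ ≤ ∫ A, stableWeight a k m A ∂diMeasure (3 * a) p := by
  have ha' : (0 : ℝ) < a := by exact_mod_cast ha
  let balanced : Finset (Fin (3 * a) → Fin 3) := {c | ∀ i, #{x | c x = i} = a}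
  have hbalanced : (27 : ℝ) ^ a ≤ 5 * a ^ 2 * #balanced := by
    exact_mod_cast pow_le_card_forall_card_filter_eq ha (Fintype.card_fin (3 * a))
  calc (10 * a ^ 2 : ℝ)⁻¹ ≤ #balanced * ((1 / 3) ^ (3 * a) / 2) := by
        rw [inv_le_iff_one_le_mul₀ (by positivity)]
        calc (1 : ℝ) = 27 ^ a * (1 / 3) ^ (3 * a) := by
              rw [pow_mul, ← mul_pow]
              norm_num
          _ ≤ 5 * a ^ 2 * #balanced * (1 / 3) ^ (3 * a) := by gcongr
          _ = _ := by ring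
    _ ≤ ∑ c ∈ balanced, ∫ A, {A | IsStable c k m A}.indicator (colouringWeight c) A
          ∂diMeasure (3 * a) p := by
        rw [← nsmul_eq_mul]
        exact Finset.card_nsmul_le_sum _ _ _ fun c hc =>
          le_integral_isStable_colouringWeight ((Finset.mem_filter_univ c).1 hc) hm hsmall
    _ = ∫ A, stableWeight a k m A ∂diMeasure (3 * a) p :=
        (integral_finsetSum _ fun _ _ => .of_finite).symm

lemma le_diMeasure_real_exists_isStable (ha : 1 ≤ a) {k m : ℕ} (hm : 1 ≤ m) {p : unitInterval}
    (hsmall : (3 * a).choose m * m.choose k * ((m : ℝ) * p * activityRate a m p) ^ (m - k) *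
      Real.exp k ≤ 1 / 2) :
    (100 * a ^ 4 * (3 * a + 1) ^ 9 : ℝ)⁻¹ ≤ (diMeasure (3 * a) p).real
      {A | ∃ c : Fin (3 * a) → Fin 3, IsStable c k m A} := by
  set P := (diMeasure (3 * a) p).real {A | ∃ c : Fin (3 * a) → Fin 3, IsStable c k m A}
  have ha' : (0 : ℝ) < a := by exact_mod_cast ha
  have hsupport : ∀ A ∉ {A | ∃ c : Fin (3 * a) → Fin 3, IsStable c k m A},
      stableWeight a k m A = 0 := fun A hA =>
    Finset.sum_eq_zero fun c _ => Set.indicator_of_notMem (fun hc => hA ⟨c, hc⟩) _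
  have hsecond : ∫ A, stableWeight a k m A ^ 2 ∂diMeasure (3 * a) p ≤ (3 * a + 1) ^ 9 := calc
    _ ≤ ∫ A, (∑ c : Fin (3 * a) → Fin 3, colouringWeight c A) ^ 2 ∂diMeasure (3 * a) p :=
      integral_mono .of_finite .of_finite fun A =>
        pow_le_pow_left₀ (stableWeight_nonneg a k m A) (stableWeight_le a k m A) 2
    _ ≤ _ := by simpa using integral_sum_colouringWeight_sq_le (κ := Fin 3) (p := p) (3 * a)
  have hlower : ((10 * a ^ 2 : ℝ)⁻¹) ^ 2 ≤ (3 * a + 1) ^ 9 * P := calc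
    _ ≤ (∫ A, stableWeight a k m A ∂diMeasure (3 * a) p) ^ 2 :=
      pow_le_pow_left₀ (by positivity) (le_integral_stableWeight ha hm hsmall) 2
    _ ≤ _ := sq_integral_le_integral_sq_mul_measureReal hsupport
    _ ≤ _ := mul_le_mul_of_nonneg_right hsecond measureReal_nonneg
  calc (100 * a ^ 4 * (3 * a + 1) ^ 9 : ℝ)⁻¹ =
      ((3 * a + 1 : ℝ) ^ 9)⁻¹ * ((10 * a ^ 2 : ℝ)⁻¹) ^ 2 := by
        field_simp
        norm_num
    _ ≤ ((3 * a + 1 : ℝ) ^ 9)⁻¹ * ((3 * a + 1) ^ 9 * P) := by gcongr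
    _ = P := inv_mul_cancel_left₀ (by positivity) P

end Stability

section Transfer

variable {n N : ℕ} {c : Fin N → Fin 3} {k m : ℕ} {A' : Fin N → Fin N → Bool}

lemma IsActive.monotone {V κ : Type*} [Fintype V] [DecidableEq κ] (c : V → κ) (i : κ)
    (r : V → Bool) : Monotone (IsActive c i · r) := by
  intro S T hST hS
  refine lt_of_lt_of_le hS ?_
  gcongr

lemma IsStable.exists_superset (hc : IsStable c k m A') (hkm : k ≤ m) {B₀ : Finset (Fin N)}
    (hB₀ : #B₀ ≤ k) : ∃ B, B₀ ⊆ B ∧ #B < m ∧ ∀ u ∉ B, ¬ IsActive c (c u) B (A' u) := by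
  refine exists_superset_forall_not_active (fun u => IsActive.monotone c (c u) (A' u))
    (hB₀.trans hkm) fun S hS hm => ?_
  obtain ⟨B₁, hB₀₁, hB₁, hk⟩ := Finset.exists_subsuperset_card_eq hS hB₀ (hkm.trans hm.ge)
  obtain ⟨u, hu, hactive⟩ := hc S B₁ hB₁ hm hk
  exact ⟨u, Finset.sdiff_subset_sdiff subset_rfl hB₀₁ hu, hactive⟩

/-- The adjacency matrix induced on the image of `e`. -/
def restrict (e : Fin N ↪ Fin n) (A : Fin n → Fin n → Bool) : Fin N → Fin N → Bool :=
  fun u x => A (e u) (e x)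

/-- The vertices carrying a loop or sending an arc outside the image of `e`. -/
def escaping (e : Fin N ↪ Fin n) (A : Fin n → Fin n → Bool) : Finset (Fin n) :=
  {u | ∃ w ∈ insert u (Finset.univ.map e)ᶜ, A u w = true}

variable {e : Fin N ↪ Fin n} {A : Fin n → Fin n → Bool}

lemma outNbrs_eq_map_of_notMem_escaping {x : Fin N} (hx : e x ∉ escaping e A) :
    outNbrs A (e x) = (rowSupport (restrict e A x)).map e := by
  simp only [escaping, Finset.mem_filter_univ, not_exists, not_and, Finset.mem_insert,
    Finset.mem_compl, Finset.mem_map, Finset.mem_univ, true_and] at hx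
  ext w
  simp only [mem_outNbrs, Finset.mem_map, mem_rowSupport, restrict]
  constructor
  · rintro ⟨-, hw⟩
    by_contra! h
    exact hx w (Or.inr fun y hy => h y (by rwa [hy]) hy) hw
  · rintro ⟨y, hy, rfl⟩
    exact ⟨fun h => hx _ (Or.inl h.symm) hy, hy⟩

lemma hasMajorityThreeColouring_of_forall_not_isActive {B : Finset (Fin N)}
    (hA : CoreFree A (#B + (n - N))) (hesc : ∀ x ∉ B, e x ∉ escaping e A)
    (hB : ∀ x ∉ B, ¬ IsActive c (c x) B (restrict e A x)) : HasMajorityThreeColouring A := by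
  have hcard : #(B.map e ∪ (Finset.univ.map e)ᶜ) ≤ #B + (n - N) := by
    simpa [Finset.card_compl] using Finset.card_union_le (B.map e) (Finset.univ.map e)ᶜ
  refine CoreFree.hasMajorityThreeColouring_of_forall_notMem (c₀ := Function.extend e c 0)
    (B := B.map e ∪ (Finset.univ.map e)ᶜ) (fun S hS => hcard.trans_lt (hA S hS)) fun u hu => ?_
  simp only [Finset.mem_union, Finset.mem_compl, not_or, not_not] at hu
  obtain ⟨x, -, rfl⟩ := Finset.mem_map.1 hu.2
  have hx : x ∉ B := fun hx => hu.1 (Finset.mem_map_of_mem e hx)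
  rw [outNbrs_eq_map_of_notMem_escaping (hesc x hx)]
  have hsame : {y ∈ rowSupport (restrict e A x) | c y = c x} =
      Finset.univ.filter fun y => restrict e A x y = true ∧ c y = c x := by
    simp only [rowSupport, Finset.filter_filter]
  have hother : {y ∈ rowSupport (restrict e A x) |
      e y ∈ B.map e ∪ (Finset.univ.map e)ᶜ ∧ c y ≠ c x} =
      {y ∈ B | restrict e A x y = true ∧ c y ≠ c x} := by
    ext y
    simp [mem_rowSupport, and_left_comm]
  simp only [Finset.filter_map, Finset.card_map, Function.comp_def, e.injective.extend_apply]
  rw [hsame, hother]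
  exact not_lt.1 (hB x hx)

lemma IsStable.hasMajorityThreeColouring (hc : IsStable c k m A') (hkm : k ≤ m)
    (hk : hammingDist (restrict e A) A' + #(escaping e A) ≤ k) (hA : CoreFree A (m + (n - N))) :
    HasMajorityThreeColouring A := by
  let B₀ : Finset (Fin N) :=
    Finset.univ.filter (fun x => restrict e A x ≠ A' x) ∪
      Finset.univ.filter (fun x => e x ∈ escaping e A)
  have hB₀ : #B₀ ≤ k := by
    refine (Finset.card_union_le _ _).trans (le_trans (Nat.add_le_add_left ?_ _) hk)
    exact Finset.card_le_card_of_injOn e (by simp [Set.MapsTo]) e.injective.injOn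
  obtain ⟨B, hB₀B, hBm, hB⟩ := hc.exists_superset hkm hB₀
  have hnotMem {x : Fin N} (hx : x ∉ B) : restrict e A x = A' x ∧ e x ∉ escaping e A := by
    have := mt (@hB₀B x) hx
    simpa [B₀] using this
  refine hasMajorityThreeColouring_of_forall_not_isActive (B := B) (e := e) (c := c)
    (fun S hS => lt_of_le_of_lt (by lia) (hA S hS)) (fun x hx => (hnotMem hx).2) fun x hx => ?_
  rw [(hnotMem hx).1]
  exact hB x hx

variable {p : unitInterval}

lemma measurePreserving_restrict (e : Fin N ↪ Fin n) :
    MeasurePreserving (restrict e) (diMeasure n p) (diMeasure N p) :=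
  (measurePreserving_pi_comp_of_injective (bernoulliRow (Fin N) p) e.injective).comp
    (measurePreserving_pi _ _ fun _ : Fin n =>
      measurePreserving_pi_comp_of_injective (bernoulliM p) e.injective)

lemma diMeasure_real_mem_escaping_le (e : Fin N ↪ Fin n) (u : Fin n) :
    (diMeasure n p).real {A | u ∈ escaping e A} ≤ (n - N + 1) * p := by
  have hcard : (#(insert u (Finset.univ.map e)ᶜ) : ℝ) ≤ n - N + 1 := by
    have := Finset.card_insert_le u (Finset.univ.map e)ᶜ
    rw [Finset.card_compl, Finset.card_map, Finset.card_fin, Fintype.card_fin] at this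
    have hN : N ≤ n := by simpa using Fintype.card_le_of_embedding e
    rw [← Nat.cast_sub hN]
    exact_mod_cast this
  have hunion : {A : Fin n → Fin n → Bool | u ∈ escaping e A} =
      ⋃ w ∈ insert u (Finset.univ.map e)ᶜ, {A | A u w = true} := by
    ext A
    simp [escaping]
  have harc (w : Fin n) : (diMeasure n p).real {A | A u w = true} = p := by
    simpa using (diMeasure_real_row u {r : Fin n → Bool | ∀ x ∈ ({w} : Finset (Fin n)),
      r x = true}).trans (bernoulliRow_real_forall_eq_true {w})
  rw [hunion]
  refine (measureReal_biUnion_finset_le _ _).trans ?_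
  rw [Finset.sum_congr rfl fun w _ => harc w, Finset.sum_const, nsmul_eq_mul]
  exact mul_le_mul_of_nonneg_right hcard p.2.1

lemma diMeasure_real_le_card_escaping (e : Fin N ↪ Fin n) {j : ℕ} (hj : 1 ≤ j) :
    (diMeasure n p).real {A | j ≤ #(escaping e A)} ≤ n * ((n - N + 1) * p) / j := by
  have hj₀ : (0 : ℝ) < j := mod_cast hj
  have hmarkov : (diMeasure n p).real {A | j ≤ #(escaping e A)} ≤
      ∫ A, (#(escaping e A) : ℝ) / j ∂diMeasure n p :=
    measureReal_le_integral_of_one_le .of_finite (fun A => by positivity) fun A hA => by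
      rw [one_le_div hj₀]
      exact_mod_cast hA
  have hcard (A : Fin n → Fin n → Bool) :
      (#(escaping e A) : ℝ) = ∑ u, if u ∈ escaping e A then 1 else 0 := by
    simp
  refine hmarkov.trans ?_
  rw [integral_div]
  gcongr
  simp only [hcard]
  rw [integral_finsetSum _ fun _ _ => .of_finite]
  simp only [integral_ite_const_zero, one_mul]
  refine (Finset.sum_le_sum fun u _ => diMeasure_real_mem_escaping_le e u).trans ?_
  simp

lemma diMeasure_real_not_hasMajorityThreeColouring_le_of_stable {a j : ℕ} (ha : 1 ≤ a)
    (hj : 1 ≤ j) (hjm : 2 * j ≤ m) (e : Fin (3 * a) ↪ Fin n)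
    (hsmall : (3 * a).choose m * m.choose (2 * j) *
      ((m : ℝ) * p * activityRate a m p) ^ (m - 2 * j) * Real.exp (2 * j : ℕ) ≤ 1 / 2) :
    (diMeasure n p).real {A | ¬ HasMajorityThreeColouring A} ≤
      (diMeasure n p).real {A | ¬ CoreFree A (m + (n - 3 * a))} +
        n * ((n - (3 * a : ℕ) + 1) * p) / j +
          100 * a ^ 4 * (3 * a + 1) ^ 9 * Real.exp (-(j ^ 2 / (3 * a : ℕ))) := by
  set E : Set (Fin (3 * a) → Fin (3 * a) → Bool) :=
    {A | ∃ c : Fin (3 * a) → Fin 3, IsStable c (2 * j) m A}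
  set F := {A : Fin (3 * a) → Fin (3 * a) → Bool | ∀ B ∈ E, j ≤ hammingDist A B}
  have hsub : {A : Fin n → Fin n → Bool | ¬ HasMajorityThreeColouring A} ⊆
      ({A | ¬ CoreFree A (m + (n - 3 * a))} ∪ {A | j ≤ #(escaping e A)}) ∪ restrict e ⁻¹' F := by
    intro A hA
    by_contra! h
    simp only [F, Set.mem_union, Set.mem_ofPred_eq, Set.mem_preimage, not_or, not_not, not_le,
      not_forall] at h
    obtain ⟨⟨hcore, hesc⟩, B, ⟨c, hc⟩, hB⟩ := h
    exact hA (hc.hasMajorityThreeColouring (e := e) hjm (by lia) hcore)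
  have hfar : (diMeasure n p).real (restrict e ⁻¹' F) ≤
      100 * a ^ 4 * (3 * a + 1) ^ 9 * Real.exp (-(j ^ 2 / (3 * a : ℕ))) := by
    rw [(measurePreserving_restrict e).measureReal_preimage
      MeasurableSet.of_discrete.nullMeasurableSet, ← inv_mul_le_iff₀ (by positivity)]
    exact (mul_le_mul_of_nonneg_right (le_diMeasure_real_exists_isStable ha (by lia) hsmall)
      measureReal_nonneg).trans (measureReal_pi_mul_measureReal_pi_le_hammingDist_le E j)
  refine (measureReal_mono hsub (measure_ne_top _ _)).trans <|
    (measureReal_union_le _ _).trans <| add_le_add ((measureReal_union_le _ _).trans ?_) hfar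
  exact add_le_add_right (diMeasure_real_le_card_escaping e hj) _

end Transfer

section Intermediate

open Real

lemma choose_le_exp_one_mul_div_pow (N m : ℕ) : (N.choose m : ℝ) ≤ (exp 1 * N / m) ^ m := by
  obtain rfl | hm := m.eq_zero_or_pos
  · simp
  calc (N.choose m : ℝ) ≤ N ^ m / m.factorial := Nat.choose_le_pow_div m N
    _ = (m ^ m / m.factorial) * (N / m) ^ m := by rw [div_pow]; field_simp
    _ ≤ exp m * (N / m) ^ m := by
        gcongr
        exact pow_div_factorial_le_exp _ m.cast_nonneg m
    _ = (exp 1 * N / m) ^ m := by rw [← exp_one_pow, ← mul_pow, mul_div_assoc]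

lemma choose_mul_choose_mul_pow_le {N m k : ℕ} (hm : 1 ≤ m) (hkm : k ≤ m) {x ρ : ℝ} (hx : 0 ≤ x)
    (hρ : exp 1 * N * x ≤ ρ) :
    N.choose m * m.choose k * (m * x) ^ (m - k) * exp k ≤ (exp 2 * N) ^ k * ρ ^ (m - k) := by
  have hm₀ : (0 : ℝ) < m := mod_cast hm
  calc N.choose m * m.choose k * (m * x) ^ (m - k) * exp k
      ≤ (exp 1 * N / m) ^ m * m ^ k * (m * x) ^ (m - k) * exp k := by
        gcongr
        · exact choose_le_exp_one_mul_div_pow N m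
        · exact_mod_cast Nat.choose_le_pow m k
    _ = (exp 2 * N) ^ k * (exp 1 * N * x) ^ (m - k) := by
        rw [show exp 2 = exp 1 * exp 1 by rw [← exp_add]; norm_num, ← exp_one_pow k]
        rw [← pow_mul_pow_sub (exp 1 * N / m) hkm]
        simp only [mul_pow, div_pow]
        field_simp
    _ ≤ (exp 2 * N) ^ k * ρ ^ (m - k) := by gcongr

/-- `2 * d ^ 3 / 27` comes from out-degree three, all three out-colours being distinct. -/
lemma exp_one_sub_mul_le {d : ℝ} (hd : 185 / 100 ≤ d) :
    exp (1 - d) * (d + 2 * d ^ 3 / 27) ≤ 992 / 1000 := by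
  obtain ⟨t, rfl⟩ : ∃ t, d = 185 / 100 + t := ⟨d - 185 / 100, by ring⟩
  have ht : 0 ≤ t := by linarith
  have hbase : 2339 / 1000 ≤ exp (85 / 100) := by
    refine le_trans ?_ (sum_le_exp_of_nonneg (x := 85 / 100) (by norm_num) 8)
    norm_num [Finset.sum_range_succ, Nat.factorial]
  have hcubic : 1 + t + t ^ 2 / 2 + t ^ 3 / 6 ≤ exp t := by
    refine le_trans (le_of_eq ?_) (sum_le_exp_of_nonneg ht 4)
    norm_num [Finset.sum_range_succ, Nat.factorial]
  rw [← neg_sub, exp_neg, inv_mul_le_iff₀ (exp_pos _)]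
  calc 185 / 100 + t + 2 * (185 / 100 + t) ^ 3 / 27
      ≤ 2339 / 1000 * (1 + t + t ^ 2 / 2 + t ^ 3 / 6) * (992 / 1000) := by
        nlinarith [pow_nonneg ht 2, pow_nonneg ht 3]
    _ ≤ exp (85 / 100) * exp t * (992 / 1000) := by gcongr
    _ = exp (185 / 100 + t - 1) * (992 / 1000) := by rw [← exp_add]; ring_nf

lemma exp_one_mul_mul_activityRate_le {a m : ℕ} (ha : 1 ≤ a) {p : ℝ}
    (hp : p ≤ 1 / 3000) (hd : 185 / 100 ≤ 3 * a * p) (hm : 3 * a * p * (5 * m * p) ≤ 1 / 3000) :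
    exp 1 * (3 * a * p) * activityRate a m p ≤ 995 / 1000 := by
  have hp₀ : 0 < p :=
    pos_of_mul_pos_right (lt_of_lt_of_le (by norm_num) hd : 0 < 3 * a * p) (by positivity)
  have hpow : (1 - p) ^ (3 * a - 3) ≤ exp (3 * p) * exp (-(3 * a * p)) := by
    refine (pow_le_pow_left₀ (by linarith) (one_sub_le_exp_neg p) _).trans_eq ?_
    rw [← exp_nat_mul, ← exp_add, Nat.cast_sub (by lia)]
    push_cast
    ring_nf
  have hexp : exp (3 * p) ≤ 1002 / 1000 := by
    refine (exp_le_exp.2 (by linarith : 3 * p ≤ 1 / 1000)).trans ?_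
    exact (exp_bound_div_one_sub_of_interval (by norm_num) (by norm_num)).trans (by norm_num)
  have hmain : exp 1 * (3 * a * p) * ((1 - p) ^ (3 * a - 3) * (1 + 2 * a ^ 2 * p ^ 2 / 3)) ≤
      1002 / 1000 * (992 / 1000) := calc
    _ ≤ exp 1 * (3 * a * p) *
          (exp (3 * p) * exp (-(3 * a * p)) * (1 + 2 * a ^ 2 * p ^ 2 / 3)) := by gcongr
    _ = exp (3 * p) * (exp (1 - 3 * a * p) * (3 * a * p + 2 * (3 * a * p) ^ 3 / 27)) := by
        rw [sub_eq_add_neg, exp_add]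
        ring
    _ ≤ _ := by
        gcongr
        exact exp_one_sub_mul_le hd
  rw [activityRate, mul_add]
  nlinarith [exp_one_lt_d9, exp_one_gt_d9]

lemma diMeasure_real_not_coreFree_le_exp_one_mul {n M : ℕ} {p : unitInterval}
    (h : exp 1 * n * M * p ^ 2 ≤ 1) :
    (diMeasure n p).real {A | ¬ CoreFree A M} ≤ exp 1 * n * M * p ^ 2 := by
  set q : ℝ := exp 1 * n * M * p ^ 2 / 2 with hq
  have hq₀ : 0 ≤ q := by positivity
  have hterm {s : ℕ} (hs : s < M) :
      n.choose (s + 1) * binomialTwoLe s p ^ (s + 1) ≤ q ^ (s + 1) := calc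
    _ ≤ (exp 1 * n / (s + 1 : ℕ)) ^ (s + 1) * ((s * p) ^ 2 / 2) ^ (s + 1) := by
        gcongr
        · exact pow_nonneg (binomialTwoLe_nonneg s) _
        · exact choose_le_exp_one_mul_div_pow n (s + 1)
        · exact binomialTwoLe_nonneg s
        · exact binomialTwoLe_le s
    _ = (exp 1 * n * (s ^ 2 / (s + 1 : ℕ)) * p ^ 2 / 2) ^ (s + 1) := by
        rw [← mul_pow]
        congr 1
        ring
    _ ≤ q ^ (s + 1) := by
        rw [hq]
        gcongr
        rw [div_le_iff₀ (by positivity)]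
        have : (s : ℝ) ≤ M := mod_cast hs.le
        push_cast
        nlinarith [(s.cast_nonneg : (0 : ℝ) ≤ s)]
  calc (diMeasure n p).real {A | ¬ CoreFree A M}
      ≤ ∑ s ∈ Finset.range M, q ^ (s + 1) := (diMeasure_real_not_coreFree_le M).trans
        (Finset.sum_le_sum fun s hs => hterm (Finset.mem_range.1 hs))
    _ = q * ∑ s ∈ Finset.range M, q ^ s := by simp only [Finset.mul_sum, pow_succ']
    _ ≤ q * 2 := by
        gcongr
        calc ∑ s ∈ Finset.range M, q ^ s ≤ ∑ s ∈ Finset.range M, (1 / 2 : ℝ) ^ s := by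
              gcongr; linarith
          _ ≤ 2 := sum_geometric_two_le M
    _ = _ := by rw [hq]; ring

lemma exp_two_mul_pow_mul_pow_le_half {u : ℝ} (hu : 10 ^ 8 ≤ u) {N : ℕ} (hN : (N : ℝ) ≤ exp u) :
    (exp 2 * N) ^ (2 * ⌈u ^ 7⌉₊) * (995 / 1000) ^ (⌈u ^ 9⌉₊ - 2 * ⌈u ^ 7⌉₊) ≤ 1 / 2 := by
  set k := 2 * ⌈u ^ 7⌉₊ with hk
  set m := ⌈u ^ 9⌉₊
  have hu₁ : 1 ≤ u := by linarith
  have hk_le : (k : ℝ) ≤ 4 * u ^ 7 := by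
    have : (⌈u ^ 7⌉₊ : ℝ) ≤ 2 * u ^ 7 :=
      Nat.ceil_le_two_mul (by linarith [one_le_pow₀ hu₁ (n := 7)])
    rw [hk]
    push_cast
    linarith
  have hmk : u ^ 9 - 4 * u ^ 7 ≤ (m - k : ℕ) := by
    have : (m : ℝ) ≤ (m - k : ℕ) + k := mod_cast le_tsub_add
    linarith [Nat.le_ceil (u ^ 9)]
  have hρ : (995 / 1000 : ℝ) ≤ exp (-(5 / 1000)) := by linarith [add_one_le_exp (-(5 / 1000) : ℝ)]
  calc (exp 2 * N) ^ k * (995 / 1000) ^ (m - k)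
      ≤ (exp 2 * exp u) ^ k * exp (-(5 / 1000)) ^ (m - k) := by gcongr
    _ = exp (k * (2 + u) - 5 / 1000 * (m - k : ℕ)) := by
        rw [← exp_add, ← exp_nat_mul, ← exp_nat_mul, ← exp_add]
        ring_nf
    _ ≤ exp (4 * u ^ 7 * (2 * u) - 5 / 1000 * (u ^ 9 - 4 * u ^ 7)) := by
        gcongr
        linarith
    _ ≤ exp (-1) := by
        rw [exp_le_exp]
        have hfactor : 1 ≤ 5 / 1000 * u ^ 2 - 8 * u - 20 / 1000 := by nlinarith
        linarith [one_le_mul_of_one_le_of_one_le (one_le_pow₀ hu₁ (n := 7)) hfactor]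
    _ ≤ 1 / 2 := by linarith [exp_neg_one_lt_d9]

section Scale

variable {u : ℝ} {n : ℕ} {p : unitInterval}

lemma pow_eleven_mul_le (hu : 0 < u) (hn : u ^ 12 = n) (hnp : n * (p : ℝ) ≤ 40 * u) :
    u ^ 11 * p ≤ 40 := by
  refine le_of_mul_le_mul_right ?_ hu
  rwa [mul_right_comm, ← pow_succ, hn]

lemma one_le_div_three (hu : 10 ^ 8 ≤ u) (hn : u ^ 12 = n) : 1 ≤ n / 3 := by
  have h : (3 : ℝ) ≤ n := calc
    (3 : ℝ) ≤ u := by linarith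
    _ ≤ u ^ 12 := le_self_pow₀ (by linarith) (by norm_num)
    _ = n := hn
  rw [Nat.one_le_div_iff three_pos]
  exact_mod_cast h

lemma two_mul_ceil_pow_seven_le (hu : 10 ^ 8 ≤ u) : 2 * ⌈u ^ 7⌉₊ ≤ ⌈u ^ 9⌉₊ := by
  have h : (2 * ⌈u ^ 7⌉₊ : ℝ) ≤ ⌈u ^ 9⌉₊ := calc
    (2 * ⌈u ^ 7⌉₊ : ℝ) ≤ 2 * (2 * u ^ 7) := by
      gcongr
      exact Nat.ceil_le_two_mul (by linarith [one_le_pow₀ (by linarith : 1 ≤ u) (n := 7)])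
    _ = 4 * u ^ 7 := by ring
    _ ≤ u ^ 2 * u ^ 7 := by
      gcongr
      nlinarith
    _ = u ^ 9 := by ring
    _ ≤ ⌈u ^ 9⌉₊ := Nat.le_ceil _
  exact_mod_cast h

lemma exp_one_mul_mul_activityRate_third_le (hu : 10 ^ 8 ≤ u) (hn : u ^ 12 = n)
    (hnp₀ : 1855 / 1000 ≤ n * (p : ℝ)) (hnp : n * (p : ℝ) ≤ 40 * u) :
    exp 1 * (3 * (n / 3 : ℕ) * p) * activityRate (n / 3) ⌈u ^ 9⌉₊ p ≤ 995 / 1000 := by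
  have hu₁ : 1 ≤ u := by linarith
  have hp₀ : 0 ≤ (p : ℝ) := p.2.1
  have hup := pow_eleven_mul_le (by linarith) hn hnp
  have hp : (p : ℝ) ≤ 1 / 3000 := by
    nlinarith [le_self_pow₀ hu₁ (show 11 ≠ 0 by norm_num)]
  have hthird : (n : ℝ) ≤ 3 * (n / 3 : ℕ) + 2 := mod_cast (by lia : n ≤ 3 * (n / 3) + 2)
  have hm : (⌈u ^ 9⌉₊ : ℝ) ≤ 2 * u ^ 9 :=
    Nat.ceil_le_two_mul (by linarith [one_le_pow₀ hu₁ (n := 9)])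
  have hthird' : 3 * ((n / 3 : ℕ) : ℝ) ≤ n := mod_cast Nat.mul_div_le n 3
  refine exp_one_mul_mul_activityRate_le (one_le_div_three hu hn) hp (by nlinarith) ?_
  calc 3 * (n / 3 : ℕ) * (p : ℝ) * (5 * ⌈u ^ 9⌉₊ * p) ≤ n * p * (5 * (2 * u ^ 9) * p) := by gcongr
    _ ≤ 40 * u * (5 * (2 * u ^ 9) * p) := by gcongr
    _ = 400 * (u ^ 11 * p) / u := by field_simp; ring
    _ ≤ 400 * 40 / 10 ^ 8 := by gcongr
    _ ≤ 1 / 3000 := by norm_num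

lemma diMeasure_real_not_coreFree_ceil_le (hu : 10 ^ 8 ≤ u) (hn : u ^ 12 = n)
    (hnp : n * (p : ℝ) ≤ 40 * u) :
    (diMeasure n p).real {A | ¬ CoreFree A (⌈u ^ 9⌉₊ + (n - 3 * (n / 3)))} ≤ 10 ^ 4 / u := by
  have hu₀ : 0 < u := by linarith
  have hp₀ : 0 ≤ (p : ℝ) := p.2.1
  have hM : ((⌈u ^ 9⌉₊ + (n - 3 * (n / 3)) : ℕ) : ℝ) ≤ 2 * u ^ 9 := by
    have h : ((n - 3 * (n / 3) : ℕ) : ℝ) ≤ 2 := mod_cast (by lia)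
    push_cast
    linarith [Nat.ceil_lt_add_one (by positivity : 0 ≤ u ^ 9),
      le_self_pow₀ (by linarith : 1 ≤ u) (show 9 ≠ 0 by norm_num)]
  have hq : exp 1 * n * (⌈u ^ 9⌉₊ + (n - 3 * (n / 3)) : ℕ) * (p : ℝ) ^ 2 ≤ 10 ^ 4 / u := calc
    _ ≤ 3 * n * (2 * u ^ 9) * (p : ℝ) ^ 2 := by
        gcongr
        linarith [exp_one_lt_d9]
    _ = 6 * (n * p) * (u ^ 11 * p) / u ^ 2 := by field_simp; ring
    _ ≤ 6 * (40 * u) * 40 / u ^ 2 := by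
        gcongr
        exact pow_eleven_mul_le hu₀ hn hnp
    _ = 9600 / u := by field_simp; norm_num
    _ ≤ 10 ^ 4 / u := by gcongr; norm_num
  refine (diMeasure_real_not_coreFree_le_exp_one_mul (hq.trans ?_)).trans hq
  rw [div_le_one hu₀]
  linarith

lemma polynomial_mul_exp_neg_ceil_le (hu : 10 ^ 8 ≤ u) (hn : u ^ 12 = n) (hexp : (n : ℝ) ≤ exp u) :
    100 * (n / 3 : ℕ) ^ 4 * (3 * (n / 3 : ℕ) + 1) ^ 9 *
      exp (-(⌈u ^ 7⌉₊ ^ 2 / (3 * (n / 3) : ℕ))) ≤ 60000 / u := by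
  have hu₀ : 0 < u := by linarith
  have hthird : 3 * ((n / 3 : ℕ) : ℝ) ≤ n := mod_cast Nat.mul_div_le n 3
  have hthird' : ((n / 3 : ℕ) : ℝ) ≤ n := mod_cast n.div_le_self 3
  have hn₁ := one_le_div_three hu hn
  have hn₁' : (1 : ℝ) ≤ n := (Nat.one_le_cast.2 hn₁).trans hthird'
  have hdist : u ^ 2 ≤ (⌈u ^ 7⌉₊ : ℝ) ^ 2 / (3 * (n / 3) : ℕ) := calc
    u ^ 2 = (u ^ 7) ^ 2 / n := by
        rw [eq_div_iff (by positivity), ← hn]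
        ring
    _ ≤ (⌈u ^ 7⌉₊ : ℝ) ^ 2 / (3 * (n / 3) : ℕ) := by
        gcongr
        · exact Nat.le_ceil _
        · exact Nat.mul_div_le n 3
  calc 100 * ((n / 3 : ℕ) : ℝ) ^ 4 * (3 * (n / 3 : ℕ) + 1) ^ 9 *
        exp (-(⌈u ^ 7⌉₊ ^ 2 / (3 * (n / 3) : ℕ)))
      ≤ 100 * exp u ^ 4 * (2 * exp u) ^ 9 * exp (-u ^ 2) := by
        gcongr <;> linarith
    _ = 51200 * exp (13 * u - u ^ 2) := by
        rw [sub_eq_add_neg, exp_add, show 13 * u = (13 : ℕ) * u by norm_num, exp_nat_mul]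
        ring
    _ ≤ 51200 * exp (-u) := by
        gcongr
        nlinarith
    _ ≤ 60000 * u⁻¹ := by
        rw [exp_neg]
        gcongr
        · norm_num
        · linarith [add_one_le_exp u]
    _ = 60000 / u := rfl

lemma mul_div_ceil_pow_seven_le (hu : 10 ^ 8 ≤ u) (hnp : n * (p : ℝ) ≤ 40 * u) :
    n * ((n - (3 * (n / 3) : ℕ) + 1) * (p : ℝ)) / ⌈u ^ 7⌉₊ ≤ 120 / u := by
  have hu₁ : 1 ≤ u := by linarith
  have hp₀ : 0 ≤ (p : ℝ) := p.2.1
  have hrest : (n : ℝ) - (3 * (n / 3) : ℕ) + 1 ≤ 3 := by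
    have : (n : ℝ) ≤ (3 * (n / 3) : ℕ) + 2 := mod_cast (by lia)
    linarith
  calc n * ((n - (3 * (n / 3) : ℕ) + 1) * (p : ℝ)) / ⌈u ^ 7⌉₊ ≤ n * (3 * p) / u ^ 7 := by
        gcongr
        exact Nat.le_ceil _
    _ = 3 * (n * p) / u ^ 7 := by ring
    _ ≤ 3 * (40 * u) / u ^ 2 := by
        gcongr
        norm_num
    _ = 120 / u := by field_simp; norm_num

lemma diMeasure_real_not_hasMajorityThreeColouring_le_div (hu : 10 ^ 8 ≤ u) (hn : u ^ 12 = n)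
    (hlog : log n ≤ u) (hnp₀ : 1855 / 1000 ≤ n * (p : ℝ)) (hnp : n * (p : ℝ) ≤ 40 * u) :
    (diMeasure n p).real {A | ¬ HasMajorityThreeColouring A} ≤ 10 ^ 5 / u := by
  have hn₁ := one_le_div_three hu hn
  have hexp : (n : ℝ) ≤ exp u :=
    (log_le_iff_le_exp (by rw [← hn]; positivity)).1 hlog
  have hj : 1 ≤ ⌈u ^ 7⌉₊ := Nat.one_le_ceil_iff.2 (by positivity)
  have hjm := two_mul_ceil_pow_seven_le hu
  have hsmall := (choose_mul_choose_mul_pow_le (N := 3 * (n / 3)) (hj.trans (by lia)) hjm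
    (mul_nonneg p.2.1 (activityRate_nonneg (n / 3) ⌈u ^ 9⌉₊ p)) (by
      simpa [mul_assoc] using exp_one_mul_mul_activityRate_third_le hu hn hnp₀ hnp)).trans
    (exp_two_mul_pow_mul_pow_le_half hu (hexp.trans' (mod_cast Nat.mul_div_le n 3)))
  simp only [← mul_assoc] at hsmall
  refine (diMeasure_real_not_hasMajorityThreeColouring_le_of_stable hn₁ hj hjm
    (Fin.castLEEmb (Nat.mul_div_le n 3)) hsmall).trans ?_
  have hescape := mul_div_ceil_pow_seven_le hu hnp
  have hcore := diMeasure_real_not_coreFree_ceil_le hu hn hnp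
  have hfar := polynomial_mul_exp_neg_ceil_le hu hn hexp
  calc _ ≤ 10 ^ 4 / u + 120 / u + 60000 / u := by gcongr
    _ ≤ 10 ^ 5 / u := by
        rw [← add_div, ← add_div]
        gcongr
        norm_num

end Scale

theorem eventually_diMeasure_real_not_hasMajorityThreeColouring_le_of_intermediate {ε : ℝ}
    (hε : 0 < ε) : ∀ᶠ n : ℕ in atTop, ∀ p : unitInterval,
    1855 / 1000 ≤ n * (p : ℝ) → n * (p : ℝ) ≤ 40 * log n →
      (diMeasure n p).real {A | ¬ HasMajorityThreeColouring A} ≤ ε := by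
  have hscale : Tendsto (fun n : ℕ => (n : ℝ) ^ (1 / 12 : ℝ)) atTop atTop :=
    (tendsto_rpow_atTop (by norm_num)).comp tendsto_natCast_atTop_atTop
  have hlog : ∀ᶠ n : ℕ in atTop, log n ≤ (n : ℝ) ^ (1 / 12 : ℝ) := by
    have h := (isLittleO_log_rpow_atTop (by norm_num : (0 : ℝ) < 1 / 12)).bound one_pos
    filter_upwards [tendsto_natCast_atTop_atTop.eventually h] with n hn
    rw [one_mul, norm_of_nonneg (by positivity : 0 ≤ (n : ℝ) ^ (1 / 12 : ℝ))] at hn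
    exact (le_abs_self _).trans hn
  filter_upwards [hlog, hscale.eventually_ge_atTop (10 ^ 8),
    (tendsto_const_nhds.div_atTop hscale).eventually_le_const hε] with n hlog hu hε p hnp₀ hnp
  refine (diMeasure_real_not_hasMajorityThreeColouring_le_div hu ?_ hlog hnp₀
    (hnp.trans (by gcongr))).trans hε
  rw [← rpow_natCast, ← rpow_mul n.cast_nonneg]
  norm_num

end Intermediate

theorem eventually_diMeasure_real_not_hasMajorityThreeColouring_le {ε : ℝ} (hε : 0 < ε) :
    ∀ᶠ n : ℕ in atTop, ∀ p : unitInterval,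
      (diMeasure n p).real {A | ¬ HasMajorityThreeColouring A} ≤ ε := by
  filter_upwards [eventually_diMeasure_real_not_hasMajorityThreeColouring_le_of_sparse hε,
    eventually_diMeasure_real_not_hasMajorityThreeColouring_le_of_intermediate hε,
    eventually_diMeasure_real_not_hasMajorityThreeColouring_le_of_dense hε]
    with n hsparse hintermediate hdense p
  obtain hp | hp := le_total (n * (p : ℝ)) (1855 / 1000)
  · exact hsparse p hp
  obtain hp' | hp' := le_total (n * (p : ℝ)) (40 * Real.log n)
  · exact hintermediate p hp hp'
  · exact hdense p hp'

/-- For any sequence `pₙ ∈ [0,1]`, with high probability the binomial random digraph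
`𝔻(n,pₙ)` has a majority 3-colouring. -/
theorem whp_majority_three_colouring (p : ℕ → ℝ) (hp : ∀ n, p n ∈ Set.Icc (0 : ℝ) 1) :
    Tendsto (fun n => diMeasure n (p n)
        {A | ∃ c : Fin n → Fin 3, ∀ v, MajorityAt A c v})
      atTop (nhds 1) := by
  lift p to ℕ → unitInterval using hp
  have hfailure : Tendsto (fun n => (diMeasure n (p n)).real {A | ¬ HasMajorityThreeColouring A})
      atTop (nhds 0) := by
    refine tendsto_order.2 ⟨fun a ha => .of_forall fun n => ha.trans_le measureReal_nonneg,
      fun ε hε => ?_⟩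
    filter_upwards [eventually_diMeasure_real_not_hasMajorityThreeColouring_le (half_pos hε)]
      with n hn
    exact (hn (p n)).trans_lt (half_lt_self hε)
  have hsuccess (n : ℕ) : diMeasure n (p n) {A | HasMajorityThreeColouring A} =
      ENNReal.ofReal (1 - (diMeasure n (p n)).real {A | ¬ HasMajorityThreeColouring A}) := by
    rw [← Set.compl_ofPred, ← probReal_compl_eq_one_sub .of_discrete, compl_compl,
      ofReal_measureReal]
  refine Tendsto.congr (fun n => (hsuccess n).symm) ?_
  simpa using ENNReal.tendsto_ofReal (hfailure.const_sub 1)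
end
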